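/- arXiv:1506.08317 — 2 statements merged into one kernel-verified Lean document; each statement's English description precedes it below -/
import Mathlib

section
/- Let 1 < r < 2 and A_r > 0, and assume that for every weight w and every f with ∫_ℝ |f| M_r w dx < ∞ one has sup_{λ>0} λ·w({x : |Hf(x)| > λ}) ≤ A_r ∫_ℝ |f| M_r w dx. Let α_r = r/(2−r). Then there is an absolute constant c > 0 such that for every weight w and every f: sup_{λ>0} λ·( w({x : |Hf(x)| > λ}) )^{1/2} ≤ c·A_r·( ∫_ℝ |f(x)|² (M_{α_r}w(x))^{2α_r/r} w(x)^{−α_r} dx )^{1/2}. -/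
open MeasureTheory Set Filter Topology
open scoped ENNReal

noncomputable section

namespace RT

/-- The Hilbert transform `Hf(x)`, defined as the principal-value limit
`lim_{ε→0⁺} ∫_{|x-y|>ε} f(y)/(x-y) dy` (junk value at points where the limit
does not exist). -/
def Hil (f : ℝ → ℝ) (x : ℝ) : ℝ :=
  limUnder (𝓝[>] (0 : ℝ)) fun ε => ∫ y in {y : ℝ | ε < |x - y|}, f y / (x - y)

/-- The (uncentered) Hardy–Littlewood maximal function over bounded intervals:
`Mf(x) = sup_{I ∋ x} (1/|I|) ∫_I |f|`. -/
def HLMax (f : ℝ → ℝ) (x : ℝ) : ℝ≥0∞ :=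
  ⨆ (a : ℝ) (b : ℝ) (_ : a < b) (_ : x ∈ Icc a b),
    (ENNReal.ofReal (b - a))⁻¹ * ∫⁻ y in Ioo a b, ENNReal.ofReal |f y|

/-- `M_r f = (M(|f|^r))^{1/r}`. -/
def Mr (r : ℝ) (f : ℝ → ℝ) (x : ℝ) : ℝ≥0∞ :=
  HLMax (fun y => |f y| ^ r) x ^ (1 / r)

/-- The Orlicz maximal operator
`M_Φ f(x) = sup_{I ∋ x} inf {λ > 0 : (1/|I|) ∫_I Φ(|f|/λ) ≤ 1}`. -/
def MOrlicz (Φ : ℝ → ℝ) (f : ℝ → ℝ) (x : ℝ) : ℝ≥0∞ :=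
  ⨆ (a : ℝ) (b : ℝ) (_ : a < b) (_ : x ∈ Icc a b),
    sInf {lam : ℝ≥0∞ | ∃ l : ℝ, 0 < l ∧ lam = ENNReal.ofReal l ∧
      (∫⁻ y in Ioo a b, ENNReal.ofReal (Φ (|f y| / l))) ≤ ENNReal.ofReal (b - a)}

/-- The centered maximal operator with respect to a weight `v`:
`M^c_v h(x) = sup_{ρ>0} (1/v(B(x,ρ))) ∫_{B(x,ρ)} |h| v`. -/
def Mc (v h : ℝ → ℝ) (x : ℝ) : ℝ≥0∞ :=
  ⨆ (ρ : ℝ) (_ : 0 < ρ),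
    (∫⁻ y in Ioo (x - ρ) (x + ρ), ENNReal.ofReal (v y))⁻¹ *
      ∫⁻ y in Ioo (x - ρ) (x + ρ), ENNReal.ofReal |h y| * ENNReal.ofReal (v y)

/-- A Young function: convex, increasing, `Φ(0) = 0`, `Φ(t)/t → ∞`. -/
structure IsYoung (Φ : ℝ → ℝ) : Prop where
  convexOn : ConvexOn ℝ (Ici 0) Φ
  mono : MonotoneOn Φ (Ici 0)
  map_zero : Φ 0 = 0
  superlinear : Tendsto (fun t => Φ t / t) atTop atTop

/-- A weight: a nonnegative locally integrable function on `ℝ`. -/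
def IsWeight (w : ℝ → ℝ) : Prop :=
  (∀ x, 0 ≤ w x) ∧ LocallyIntegrable w volume

/-! Triadic machinery: intervals are represented by their endpoint pairs,
`(a, b)` corresponding to `[a, b)`. -/

/-- The length of the interval. -/
def len (I : ℝ × ℝ) : ℝ := I.2 - I.1

/-- The set `[a, b)` of the interval `I = (a, b)`. -/
def ivl (I : ℝ × ℝ) : Set ℝ := Ico I.1 I.2

/-- A triadic interval `[3^j n, 3^j (n+1))`, `j, n ∈ ℤ`. -/
def IsTriadic (I : ℝ × ℝ) : Prop :=
  ∃ j n : ℤ, I.1 = (3 : ℝ) ^ j * n ∧ I.2 = (3 : ℝ) ^ j * (n + 1)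

/-- The middle third `I^Δ` of `I`: same center, one third of the length. -/
def mid (I : ℝ × ℝ) : ℝ × ℝ := (I.1 + (I.2 - I.1) / 3, I.2 - (I.2 - I.1) / 3)

/-- `P` assigns to each triadic interval `J ⊆ [0,1)` a triadic interval
adjacent to `J^Δ` (on its left or on its right) with `|P J| = 3^{-k} |J|`. -/
def GoodP (k : ℕ) (P : ℝ × ℝ → ℝ × ℝ) : Prop :=
  ∀ J : ℝ × ℝ, IsTriadic J → ivl J ⊆ Ico (0 : ℝ) 1 →
    IsTriadic (P J) ∧ len (P J) = len J / 3 ^ k ∧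
      ((P J).2 = (mid J).1 ∨ (P J).1 = (mid J).2)

/-- The families `𝒥_l`: `𝒥_1 = {[0,1)}`, and `𝒥_{l+1}` consists of the `3^{k-1}`
triadic subintervals of `J^Δ` of length `|J|/3^k`, for each `J ∈ 𝒥_l`.
(`𝒥_0` is empty.) -/
def Jfam (k : ℕ) : ℕ → Set (ℝ × ℝ)
  | 0 => ∅
  | 1 => {((0 : ℝ), (1 : ℝ))}
  | l + 2 => {J' | IsTriadic J' ∧ ∃ J ∈ Jfam k (l + 1),
      len J' = len J / 3 ^ k ∧ ivl J' ⊆ ivl (mid J)}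

/-- The families `ℐ_l = {P J : J ∈ 𝒥_l}`. -/
def Ifam (k : ℕ) (P : ℝ × ℝ → ℝ × ℝ) (l : ℕ) : Set (ℝ × ℝ) :=
  P '' Jfam k l

/-- `Ω_l = ⋃_{I ∈ ℐ_l} I`. -/
def Omega (k : ℕ) (P : ℝ × ℝ → ℝ × ℝ) (l : ℕ) : Set ℝ :=
  ⋃ I ∈ Ifam k P l, ivl I

/-- The constant `3^k / (3^{k-1} + 1)`. -/
def alpha (k : ℕ) : ℝ := 3 ^ k / (3 ^ (k - 1) + 1)

/-- The Reguera–Thiele weight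
`w_k = ∑_{l=1}^∞ (3^k/(3^{k-1}+1))^l χ_{Ω_l}`. -/
def wk (k : ℕ) (P : ℝ × ℝ → ℝ × ℝ) (x : ℝ) : ℝ :=
  ∑' l : ℕ, alpha k ^ (l + 1) * (Omega k P (l + 1)).indicator (fun _ => (1 : ℝ)) x

/-- maximal function with respect to a measure -/
def MM (μ : Measure ℝ) (h : ℝ → ℝ≥0∞) (x : ℝ) : ℝ≥0∞ :=
  ⨆ (a : ℝ) (b : ℝ) (_ : x ∈ Ioo a b), (μ (Ioo a b))⁻¹ * ∫⁻ y in Ioo a b, h y ∂μ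

lemma le_MM (μ : Measure ℝ) (h : ℝ → ℝ≥0∞) {x a b : ℝ} (hx : x ∈ Ioo a b) :
    (μ (Ioo a b))⁻¹ * ∫⁻ y in Ioo a b, h y ∂μ ≤ MM μ h x :=
  le_iSup_of_le a (le_iSup_of_le b (le_iSup_of_le hx le_rfl))

lemma MM_le {μ : Measure ℝ} {h : ℝ → ℝ≥0∞} {x : ℝ} {C : ℝ≥0∞}
    (H : ∀ a b, x ∈ Ioo a b → (μ (Ioo a b))⁻¹ * ∫⁻ y in Ioo a b, h y ∂μ ≤ C) :
    MM μ h x ≤ C :=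
  iSup_le fun a => iSup_le fun b => iSup_le fun hx => H a b hx

lemma lt_MM_iff {μ : Measure ℝ} {h : ℝ → ℝ≥0∞} {x : ℝ} {t : ℝ≥0∞} :
    t < MM μ h x ↔ ∃ a b, x ∈ Ioo a b ∧ t < (μ (Ioo a b))⁻¹ * ∫⁻ y in Ioo a b, h y ∂μ := by
  simp only [MM, lt_iSup_iff]
  constructor
  · rintro ⟨a, b, h, h'⟩; exact ⟨a, b, h, h'⟩
  · rintro ⟨a, b, h, h'⟩; exact ⟨a, b, h, h'⟩

lemma isOpen_lt_MM (μ : Measure ℝ) (h : ℝ → ℝ≥0∞) (t : ℝ≥0∞) : IsOpen {x | t < MM μ h x} := by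
  rw [isOpen_iff_mem_nhds]
  intro x hx
  obtain ⟨a, b, hab, hh⟩ := lt_MM_iff.1 hx
  filter_upwards [Ioo_mem_nhds hab.1 hab.2] with y hy
  exact lt_MM_iff.2 ⟨a, b, hy, hh⟩

lemma measurable_MM (μ : Measure ℝ) (h : ℝ → ℝ≥0∞) : Measurable (MM μ h) :=
  measurable_of_Ioi fun t => (isOpen_lt_MM μ h t).measurableSet

lemma MM_mono {μ : Measure ℝ} {h g : ℝ → ℝ≥0∞} (hg : ∀ᵐ y ∂μ, h y ≤ g y) (x : ℝ) :
    MM μ h x ≤ MM μ g x := by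
  refine MM_le fun a b hx => le_trans ?_ (le_MM μ g hx)
  gcongr 1
  exact lintegral_mono_ae (ae_restrict_of_ae hg)

lemma MM_congr {μ : Measure ℝ} {h g : ℝ → ℝ≥0∞} (hg : ∀ᵐ y ∂μ, h y = g y) (x : ℝ) :
    MM μ h x = MM μ g x :=
  le_antisymm (MM_mono (hg.mono fun _ h => h.le) x) (MM_mono (hg.mono fun _ h => h.ge) x)

lemma MM_add_le {μ : Measure ℝ} {h g : ℝ → ℝ≥0∞} (hh : AEMeasurable h μ) (x : ℝ) :
    MM μ (fun y => h y + g y) x ≤ MM μ h x + MM μ g x := by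
  refine MM_le fun a b hx => ?_
  rw [lintegral_add_left' hh.restrict, mul_add]
  exact add_le_add (le_MM μ h hx) (le_MM μ g hx)

lemma MM_const_le (μ : Measure ℝ) (c : ℝ≥0∞) (x : ℝ) : MM μ (fun _ => c) x ≤ c := by
  refine MM_le fun a b hx => ?_
  rw [setLIntegral_const, mul_comm c, ← mul_assoc]
  calc _ ≤ 1 * c := by gcongr; exact ENNReal.inv_mul_le_one _
    _ = c := one_mul c

/-- finite covering lemma on the line -/
lemma exists_subcover {ι : Type*} (s : Finset ι) (a b : ι → ℝ) :
    ∃ t ⊆ s, (⋃ i ∈ s, Ioo (a i) (b i)) ⊆ (⋃ i ∈ t, Ioo (a i) (b i)) ∧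
      ∀ x, ∑ i ∈ t, (Ioo (a i) (b i)).indicator (fun _ => (1 : ℝ≥0∞)) x ≤ 2 := by
  classical
  induction s using Finset.strongInduction with
  | H s ih =>
  by_cases hred : ∃ i ∈ s, Ioo (a i) (b i) ⊆ ⋃ j ∈ s.erase i, Ioo (a j) (b j)
  · obtain ⟨i, his, hi⟩ := hred
    obtain ⟨t, hts, hcov, hx⟩ := ih (s.erase i) (Finset.erase_ssubset his)
    refine ⟨t, hts.trans (Finset.erase_subset _ _), ?_, hx⟩
    refine Subset.trans (iUnion₂_subset fun j hj => ?_) hcov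
    by_cases hji : j = i
    · subst hji; exact hi
    · exact subset_biUnion_of_mem (u := fun j => Ioo (a j) (b j)) (Finset.mem_erase.2 ⟨hji, hj⟩)
  · push Not at hred
    refine ⟨s, Finset.Subset.refl s, Subset.rfl, fun x => ?_⟩
    have hsum : ∑ i ∈ s, (Ioo (a i) (b i)).indicator (fun _ => (1 : ℝ≥0∞)) x
        = ((s.filter fun i => x ∈ Ioo (a i) (b i)).card : ℝ≥0∞) := by
      simp only [indicator_apply]
      rw [Finset.sum_ite]; simp
    rw [hsum]
    by_contra hcon
    push Not at hcon
    have h3 : 2 < (s.filter fun i => x ∈ Ioo (a i) (b i)).card := by exact_mod_cast hcon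
    set F := s.filter fun i => x ∈ Ioo (a i) (b i) with hF
    have hFne : F.Nonempty := Finset.card_pos.1 (by omega)
    obtain ⟨p, hpF, hp⟩ := F.exists_min_image a hFne
    obtain ⟨q, hqF, hq⟩ := F.exists_max_image b hFne
    have : ∃ k ∈ F, k ∉ ({p, q} : Finset ι) := by
      by_contra hno
      push Not at hno
      have : F.card ≤ ({p, q} : Finset ι).card := Finset.card_le_card hno
      have := (Finset.card_le_two : ({p, q} : Finset ι).card ≤ 2)
      omega
    obtain ⟨k, hkF, hk⟩ := this
    simp only [Finset.mem_insert, Finset.mem_singleton, not_or] at hk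
    have hks : k ∈ s := (Finset.mem_filter.1 hkF).1
    refine hred k hks fun y hy => ?_
    have hp2 := (Finset.mem_filter.1 hpF)
    have hq2 := (Finset.mem_filter.1 hqF)
    have hpk := hp k hkF
    have hqk := hq k hkF
    simp only [mem_iUnion, exists_prop]
    rcases le_or_gt y x with hyx | hyx
    · exact ⟨p, Finset.mem_erase.2 ⟨fun h => hk.1 h.symm, hp2.1⟩,
        ⟨lt_of_le_of_lt hpk hy.1, lt_of_le_of_lt hyx hp2.2.2⟩⟩
    · exact ⟨q, Finset.mem_erase.2 ⟨fun h => hk.2 h.symm, hq2.1⟩,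
        ⟨lt_trans hq2.2.1 hyx, lt_of_lt_of_le hy.2 hqk⟩⟩

lemma weak_finite (μ : Measure ℝ) {h : ℝ → ℝ≥0∞} (hh : AEMeasurable h μ) (t : ℝ≥0∞)
    {ι : Type*} (s : Finset ι) (a b : ι → ℝ)
    (H : ∀ i, t * μ (Ioo (a i) (b i)) ≤ ∫⁻ y in Ioo (a i) (b i), h y ∂μ) :
    t * μ (⋃ i ∈ s, Ioo (a i) (b i)) ≤ 2 * ∫⁻ y, h y ∂μ := by
  obtain ⟨S, -, hcov, hS⟩ := exists_subcover s a b
  calc t * μ (⋃ i ∈ s, Ioo (a i) (b i)) ≤ t * ∑ i ∈ S, μ (Ioo (a i) (b i)) := by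
        gcongr
        exact (measure_mono hcov).trans (measure_biUnion_finset_le _ _)
    _ = ∑ i ∈ S, t * μ (Ioo (a i) (b i)) := Finset.mul_sum _ _ _
    _ ≤ ∑ i ∈ S, ∫⁻ y in Ioo (a i) (b i), h y ∂μ := Finset.sum_le_sum fun i _ => H i
    _ = ∑ i ∈ S, ∫⁻ y, (Ioo (a i) (b i)).indicator h y ∂μ := by
        refine Finset.sum_congr rfl fun i _ => ?_
        rw [lintegral_indicator measurableSet_Ioo]
    _ = ∫⁻ y, ∑ i ∈ S, (Ioo (a i) (b i)).indicator h y ∂μ := by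
        rw [lintegral_finsetSum']
        intro i _
        exact hh.indicator measurableSet_Ioo
    _ ≤ ∫⁻ y, 2 * h y ∂μ := by
        refine lintegral_mono fun y => ?_
        calc ∑ i ∈ S, (Ioo (a i) (b i)).indicator h y
            = ∑ i ∈ S, (Ioo (a i) (b i)).indicator (fun _ => (1 : ℝ≥0∞)) y * h y := by
              refine Finset.sum_congr rfl fun i _ => ?_
              by_cases hy : y ∈ Ioo (a i) (b i) <;> simp [hy]
          _ ≤ 2 * h y := by rw [← Finset.sum_mul]; gcongr; exact hS y
    _ = 2 * ∫⁻ y, h y ∂μ := lintegral_const_mul'' _ hh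

lemma lt_avg_mul_le {μ : Measure ℝ} {h : ℝ → ℝ≥0∞} {t : ℝ≥0∞} {a b : ℝ}
    (H : t < (μ (Ioo a b))⁻¹ * ∫⁻ y in Ioo a b, h y ∂μ) :
    t * μ (Ioo a b) ≤ ∫⁻ y in Ioo a b, h y ∂μ := by
  calc t * μ (Ioo a b) ≤ ((μ (Ioo a b))⁻¹ * ∫⁻ y in Ioo a b, h y ∂μ) * μ (Ioo a b) := by gcongr
    _ = ((μ (Ioo a b))⁻¹ * μ (Ioo a b)) * ∫⁻ y in Ioo a b, h y ∂μ := by ring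
    _ ≤ 1 * ∫⁻ y in Ioo a b, h y ∂μ := by gcongr; exact ENNReal.inv_mul_le_one _
    _ = _ := one_mul _

/-- weak type (1,1) -/
lemma weak_type (μ : Measure ℝ) {h : ℝ → ℝ≥0∞} (hh : AEMeasurable h μ) (t : ℝ≥0∞) :
    t * μ {x | t < MM μ h x} ≤ 2 * ∫⁻ y, h y ∂μ := by
  classical
  let ι := {p : ℝ × ℝ // t < (μ (Ioo p.1 p.2))⁻¹ * ∫⁻ y in Ioo p.1 p.2, h y ∂μ}
  have hset : {x | t < MM μ h x} = ⋃ i : ι, Ioo i.1.1 i.1.2 := by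
    ext x
    simp only [mem_ofPred_eq, lt_MM_iff, mem_iUnion]
    constructor
    · rintro ⟨a, b, hx, H⟩; exact ⟨⟨(a, b), H⟩, hx⟩
    · rintro ⟨⟨⟨a, b⟩, H⟩, hx⟩; exact ⟨a, b, hx, H⟩
  obtain ⟨T, hT, hTe⟩ := TopologicalSpace.isOpen_iUnion_countable
    (fun i : ι => Ioo i.1.1 i.1.2) (fun i => isOpen_Ioo)
  rw [hset, ← hTe]
  have := hT.to_subtype
  rw [biUnion_eq_iUnion, iUnion_eq_iUnion_finset, Directed.measure_iUnion, ENNReal.mul_iSup]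
  swap
  · refine Monotone.directed_le fun s s' hss => ?_
    exact biUnion_subset_biUnion_left (fun i hi => hss hi)
  refine iSup_le fun s => ?_
  refine weak_finite μ hh t s (fun i : T => i.1.1.1) (fun i : T => i.1.1.2) fun i => ?_
  exact lt_avg_mul_le i.1.2

/-- one dimensional layer cake -/
lemma layer_cake {q : ℝ} (hq : 0 < q) (u : ℝ≥0∞) :
    ∫⁻ t in Ioi (0 : ℝ), (if ENNReal.ofReal t < u then ENNReal.ofReal (q * t ^ (q - 1)) else 0)
      = u ^ q := by
  have fin : ∀ v : ℝ, 0 ≤ v → ∫⁻ t in Ioo (0 : ℝ) v, ENNReal.ofReal (q * t ^ (q - 1))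
      = ENNReal.ofReal v ^ q := by
    intro v hv
    have hInt0 : IntervalIntegrable (fun t : ℝ => q * t ^ (q - 1)) volume 0 v :=
      (intervalIntegral.intervalIntegrable_rpow' (by linarith)).const_mul q
    rw [← setLIntegral_congr (Ioo_ae_eq_Ioc).symm, ← ofReal_integral_eq_lintegral_ofReal]
    · rw [← intervalIntegral.integral_of_le hv, intervalIntegral.integral_const_mul,
        integral_rpow (Or.inl (by linarith)), ENNReal.ofReal_rpow_of_nonneg hv hq.le]
      congr 1
      rw [sub_add_cancel, Real.zero_rpow hq.ne']
      field_simp; ring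
    · exact (intervalIntegrable_iff_integrableOn_Ioc_of_le hv).1 hInt0
    · filter_upwards [ae_restrict_mem measurableSet_Ioc] with t ht
      have := ht.1
      positivity
  have key : ∀ v : ℝ≥0∞, v ≠ ⊤ →
    ∫⁻ t in Ioi (0 : ℝ), (if ENNReal.ofReal t < v then ENNReal.ofReal (q * t ^ (q - 1)) else 0)
      = v ^ q := by
    intro v hv
    have h1 := fin v.toReal ENNReal.toReal_nonneg
    rw [ENNReal.ofReal_toReal hv] at h1
    rw [← h1, ← lintegral_indicator measurableSet_Ioo, ← lintegral_indicator measurableSet_Ioi]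
    congr 1
    ext t
    by_cases ht : 0 < t
    · have : ENNReal.ofReal t < v ↔ t < v.toReal := by
        rw [ENNReal.ofReal_lt_iff_lt_toReal ht.le hv]
      simp [indicator_apply, ht, this]
    · simp [indicator_apply, ht]
  by_cases hu : u = ⊤
  · subst hu
    rw [ENNReal.top_rpow_of_pos hq]
    refine ENNReal.eq_top_of_forall_nnreal_le fun r => ?_
    have h2 := key ((r : ℝ≥0∞) ^ (1 / q)) (ENNReal.rpow_ne_top_of_nonneg (by positivity) (by simp))
    rw [← ENNReal.rpow_mul, one_div_mul_cancel hq.ne', ENNReal.rpow_one] at h2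
    rw [← h2]
    refine lintegral_mono fun t => ?_
    split_ifs with h3 h4
    · exact le_rfl
    · exact absurd ENNReal.ofReal_lt_top h4
    · exact zero_le
    · exact le_rfl
  · exact key u hu

lemma layer_cake_integral {q : ℝ} (hq : 0 < q) (μ : Measure ℝ) [SFinite μ] {u : ℝ → ℝ≥0∞}
    (hu : AEMeasurable u μ) :
    ∫⁻ x, u x ^ q ∂μ = ∫⁻ t in Ioi (0 : ℝ),
      ENNReal.ofReal (q * t ^ (q - 1)) * μ {x | ENNReal.ofReal t < u x} := by
  have h0 : ∫⁻ x, u x ^ q ∂μ = ∫⁻ x, (∫⁻ t in Ioi (0 : ℝ),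
      (if ENNReal.ofReal t < hu.mk u x then ENNReal.ofReal (q * t ^ (q - 1)) else 0)) ∂μ := by
    refine lintegral_congr_ae ?_
    filter_upwards [hu.ae_eq_mk] with x hx
    rw [layer_cake hq, hx]
  rw [h0, lintegral_lintegral_swap]
  · refine lintegral_congr fun t => ?_
    have : μ {x | ENNReal.ofReal t < u x} = μ {x | ENNReal.ofReal t < hu.mk u x} := by
      refine measure_congr ?_
      filter_upwards [hu.ae_eq_mk] with x hx
      apply propext
      show ENNReal.ofReal t < u x ↔ ENNReal.ofReal t < hu.mk u x
      rw [hx]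
    rw [this, ← setLIntegral_const, ← lintegral_indicator
      (measurableSet_lt measurable_const hu.measurable_mk)]
    refine lintegral_congr fun x => ?_
    simp only [indicator_apply, mem_ofPred_eq]
  · refine Measurable.aemeasurable ?_
    refine Measurable.ite ?_ ?_ measurable_const
    · exact measurableSet_lt (by fun_prop) (hu.measurable_mk.comp measurable_fst)
    · fun_prop

lemma weak_type_trunc (μ : Measure ℝ) {h : ℝ → ℝ≥0∞} (hh : AEMeasurable h μ) {t : ℝ}
    (_ht : 0 < t) :
    ENNReal.ofReal t * μ {x | ENNReal.ofReal t < MM μ h x} ≤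
      4 * ∫⁻ y, (if ENNReal.ofReal t < 2 * h y then h y else 0) ∂μ := by
  set T := ENNReal.ofReal t with hT
  have hT2 : ENNReal.ofReal (t / 2) = T / 2 := by
    rw [ENNReal.ofReal_div_of_pos (by norm_num)]; simp [hT]
  set h1 : ℝ → ℝ≥0∞ := fun y => if T < 2 * h y then h y else 0 with hh1
  have hm1 : AEMeasurable h1 μ := by
    have : AEMeasurable (fun y => if T < 2 * hh.mk h y then hh.mk h y else 0) μ := by
      refine (Measurable.ite ?_ hh.measurable_mk measurable_const).aemeasurable
      exact measurableSet_lt measurable_const (hh.measurable_mk.const_mul 2)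
    refine this.congr ?_
    filter_upwards [hh.ae_eq_mk] with y hy
    simp only [hh1, hy]
  have hle : ∀ x, MM μ h x ≤ MM μ h1 x + T / 2 := by
    intro x
    calc MM μ h x ≤ MM μ (fun y => h1 y + T / 2) x := by
          refine MM_mono (Eventually.of_forall fun y => ?_) x
          simp only [hh1]
          split_ifs with hc
          · exact le_self_add
          · rw [zero_add, ENNReal.le_div_iff_mul_le (by simp) (by simp), mul_comm]
            exact not_lt.1 hc
      _ ≤ MM μ h1 x + MM μ (fun _ => T / 2) x := MM_add_le hm1 x
      _ ≤ _ := by gcongr; exact MM_const_le _ _ _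
  have hsub : {x | T < MM μ h x} ⊆ {x | T / 2 < MM μ h1 x} := by
    intro x hx
    have hx' : T < MM μ h x := hx
    show T / 2 < MM μ h1 x
    by_contra hc
    push Not at hc
    have := hx'.trans_le ((hle x).trans (add_le_add_left hc _))
    rw [ENNReal.add_halves] at this
    exact lt_irrefl _ this
  have hw := weak_type μ hm1 (T / 2)
  calc T * μ {x | T < MM μ h x} ≤ T * μ {x | T / 2 < MM μ h1 x} := by gcongr
    _ = 2 * (T / 2 * μ {x | T / 2 < MM μ h1 x}) := by
        rw [← mul_assoc, ENNReal.mul_div_cancel (by simp) (by simp)]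
    _ ≤ 2 * (2 * ∫⁻ y, h1 y ∂μ) := by gcongr
    _ = 4 * ∫⁻ y, h1 y ∂μ := by rw [← mul_assoc]; norm_num

/-- strong type (p,p) -/
lemma strong_type {p : ℝ} (hp : 1 < p) (μ : Measure ℝ) [SFinite μ] {h : ℝ → ℝ≥0∞}
    (hh : AEMeasurable h μ) :
    ∫⁻ x, MM μ h x ^ p ∂μ ≤
      ENNReal.ofReal (p * 2 ^ (p + 1) / (p - 1)) * ∫⁻ x, h x ^ p ∂μ := by
  have hp1 : 0 < p - 1 := by linarith
  rw [layer_cake_integral (by linarith : 0 < p) μ (measurable_MM μ h).aemeasurable]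
  have hstep : ∀ t ∈ Ioi (0 : ℝ), ENNReal.ofReal (p * t ^ (p - 1)) *
      μ {x | ENNReal.ofReal t < MM μ h x} ≤
      ENNReal.ofReal (4 * p / (p - 1)) * ∫⁻ y,
        (if ENNReal.ofReal t < 2 * h y then ENNReal.ofReal ((p - 1) * t ^ (p - 1 - 1)) else 0)
          * h y ∂μ := by
    intro t ht
    have ht' : 0 < t := ht
    have e1 : ENNReal.ofReal (p * t ^ (p - 1)) =
        ENNReal.ofReal (p * t ^ (p - 1 - 1)) * ENNReal.ofReal t := by
      rw [← ENNReal.ofReal_mul (by positivity), mul_assoc, ← Real.rpow_add_one ht'.ne']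
      congr 3; ring
    have e2 : ∀ y, (if ENNReal.ofReal t < 2 * h y then
        ENNReal.ofReal ((p - 1) * t ^ (p - 1 - 1)) else 0) * h y =
        ENNReal.ofReal ((p - 1) * t ^ (p - 1 - 1)) *
          (if ENNReal.ofReal t < 2 * h y then h y else 0) := by
      intro y; split_ifs <;> simp
    simp_rw [e2]
    rw [lintegral_const_mul' _ _ ENNReal.ofReal_ne_top, e1]
    calc _ ≤ ENNReal.ofReal (p * t ^ (p - 1 - 1)) *
          (4 * ∫⁻ y, (if ENNReal.ofReal t < 2 * h y then h y else 0) ∂μ) := by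
          rw [mul_assoc]
          exact mul_le_mul' le_rfl (weak_type_trunc μ hh ht')
      _ = _ := by
          rw [← mul_assoc, ← mul_assoc, ← ENNReal.ofReal_mul (by positivity)]
          congr 1
          rw [show (4 : ℝ≥0∞) = ENNReal.ofReal 4 by simp, ← ENNReal.ofReal_mul (by positivity)]
          congr 1
          field_simp
  calc _ ≤ ∫⁻ t in Ioi (0 : ℝ), ENNReal.ofReal (4 * p / (p - 1)) * ∫⁻ y,
        (if ENNReal.ofReal t < 2 * h y then ENNReal.ofReal ((p - 1) * t ^ (p - 1 - 1)) else 0)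
          * h y ∂μ := setLIntegral_mono' measurableSet_Ioi hstep
    _ = ENNReal.ofReal (4 * p / (p - 1)) * ∫⁻ t in Ioi (0 : ℝ), (∫⁻ y,
        (if ENNReal.ofReal t < 2 * hh.mk h y then
          ENNReal.ofReal ((p - 1) * t ^ (p - 1 - 1)) else 0) * hh.mk h y ∂μ) := by
        rw [lintegral_const_mul' _ _ ENNReal.ofReal_ne_top]
        congr 1
        refine lintegral_congr fun t => lintegral_congr_ae ?_
        filter_upwards [hh.ae_eq_mk] with y hy
        rw [hy]
    _ = ENNReal.ofReal (4 * p / (p - 1)) * ∫⁻ y, (∫⁻ t in Ioi (0 : ℝ),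
        (if ENNReal.ofReal t < 2 * hh.mk h y then
          ENNReal.ofReal ((p - 1) * t ^ (p - 1 - 1)) else 0) * hh.mk h y) ∂μ := by
        rw [lintegral_lintegral_swap]
        refine Measurable.aemeasurable ?_
        refine Measurable.mul (Measurable.ite ?_ ?_ measurable_const)
          (hh.measurable_mk.comp measurable_snd)
        · exact measurableSet_lt (by fun_prop) ((hh.measurable_mk.comp measurable_snd).const_mul 2)
        · fun_prop
    _ = ENNReal.ofReal (4 * p / (p - 1)) * ∫⁻ y, ENNReal.ofReal (2 ^ (p - 1)) * h y ^ p ∂μ := by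
        congr 1
        refine lintegral_congr_ae ?_
        filter_upwards [hh.ae_eq_mk] with y hy
        rw [← hy, lintegral_mul_const, layer_cake hp1, ENNReal.mul_rpow_of_nonneg _ _ hp1.le,
          mul_assoc]
        · congr 1
          · rw [← ENNReal.ofReal_rpow_of_pos (by norm_num)]; simp
          · have := ENNReal.rpow_add_of_nonneg (x := h y) (p - 1) 1 hp1.le zero_le_one
            rw [ENNReal.rpow_one, sub_add_cancel] at this
            exact this.symm
        · refine Measurable.ite ?_ ?_ measurable_const
          · exact measurableSet_lt (by fun_prop) measurable_const
          · fun_prop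
    _ = _ := by
        rw [lintegral_const_mul' _ _ ENNReal.ofReal_ne_top, ← mul_assoc,
          ← ENNReal.ofReal_mul (by positivity)]
        congr 2
        rw [show p + 1 = (p - 1) + 2 by ring, Real.rpow_add (by norm_num)]
        norm_num; ring

lemma kolmogorov {g : ℝ → ℝ≥0∞} (hg : AEMeasurable g volume) {θ s a b : ℝ} (hθ : 0 < θ)
    (hθ2 : θ ≤ 1 / 2) (hs : 0 < s) (hab : a < b)
    (hN : ∫⁻ y, g y ≤ ENNReal.ofReal ((b - a) * s)) :
    ∫⁻ y in Ioo a b, MM volume g y ^ θ ≤ ENNReal.ofReal (3 * ((b - a) * s ^ θ)) := by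
  have hL : 0 < b - a := by linarith
  rw [layer_cake_integral hθ _ (measurable_MM volume g).aemeasurable]
  have hbd : ∀ t ∈ Ioi (0 : ℝ), ENNReal.ofReal (θ * t ^ (θ - 1)) *
      (volume.restrict (Ioo a b)) {x | ENNReal.ofReal t < MM volume g x} ≤
      ENNReal.ofReal (b - a) * (if ENNReal.ofReal t < ENNReal.ofReal s then
        ENNReal.ofReal (θ * t ^ (θ - 1)) else 0) +
      (Ici s).indicator (fun t => ENNReal.ofReal (θ * (2 * ((b - a) * s)) * t ^ (θ - 2))) t := by
    intro t ht
    have ht' : 0 < t := ht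
    by_cases hts : t < s
    · have : ENNReal.ofReal t < ENNReal.ofReal s := (ENNReal.ofReal_lt_ofReal_iff hs).2 hts
      rw [if_pos this, mul_comm]
      refine le_add_right ?_
      gcongr
      calc _ ≤ (volume.restrict (Ioo a b)) univ := measure_mono (subset_univ _)
        _ = _ := by simp
    · push Not at hts
      rw [indicator_of_mem (show t ∈ Ici s from hts)]
      refine le_add_left ?_
      have h1 := weak_type volume hg (ENNReal.ofReal t)
      have h2 : (volume.restrict (Ioo a b)) {x | ENNReal.ofReal t < MM volume g x} ≤
          volume {x | ENNReal.ofReal t < MM volume g x} := Measure.restrict_apply_le _ _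
      have e1 : ENNReal.ofReal (θ * t ^ (θ - 1)) =
          ENNReal.ofReal (θ * t ^ (θ - 2)) * ENNReal.ofReal t := by
        rw [← ENNReal.ofReal_mul (by positivity), mul_assoc, ← Real.rpow_add_one ht'.ne']
        congr 3; ring
      calc _ ≤ ENNReal.ofReal (θ * t ^ (θ - 2)) * (ENNReal.ofReal t *
            volume {x | ENNReal.ofReal t < MM volume g x}) := by
            rw [e1, mul_assoc]; gcongr
        _ ≤ ENNReal.ofReal (θ * t ^ (θ - 2)) * (2 * ENNReal.ofReal ((b - a) * s)) := by
            exact mul_le_mul' le_rfl (h1.trans (mul_le_mul' le_rfl hN))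
        _ = _ := by
            rw [show (2 : ℝ≥0∞) = ENNReal.ofReal 2 by simp, ← ENNReal.ofReal_mul (by positivity),
              ← ENNReal.ofReal_mul (by positivity)]
            congr 1; ring
  refine (setLIntegral_mono' measurableSet_Ioi hbd).trans ?_
  rw [lintegral_add_right]
  swap
  · exact Measurable.indicator (by fun_prop) measurableSet_Ici
  rw [lintegral_const_mul' _ _ ENNReal.ofReal_ne_top, layer_cake hθ]
  have h2 : ∫⁻ t in Ioi (0 : ℝ), (Ici s).indicator
      (fun t => ENNReal.ofReal (θ * (2 * ((b - a) * s)) * t ^ (θ - 2))) t ≤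
      ENNReal.ofReal (2 * ((b - a) * s ^ θ)) := by
    calc _ ≤ ∫⁻ t, (Ici s).indicator
          (fun t => ENNReal.ofReal (θ * (2 * ((b - a) * s)) * t ^ (θ - 2))) t :=
          setLIntegral_le_lintegral _ _
      _ = ∫⁻ t in Ioi s, ENNReal.ofReal (θ * (2 * ((b - a) * s)) * t ^ (θ - 2)) := by
          rw [lintegral_indicator measurableSet_Ici, setLIntegral_congr Ioi_ae_eq_Ici.symm]
      _ = ENNReal.ofReal (∫ t in Ioi s, θ * (2 * ((b - a) * s)) * t ^ (θ - 2)) := by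
          rw [ofReal_integral_eq_lintegral_ofReal]
          · exact (integrableOn_Ioi_rpow_of_lt (by linarith) hs).const_mul _
          · filter_upwards [ae_restrict_mem measurableSet_Ioi] with t ht
            have : 0 < t := hs.trans ht
            positivity
      _ ≤ _ := by
          apply ENNReal.ofReal_le_ofReal
          rw [integral_const_mul, integral_Ioi_rpow_of_lt (by linarith) hs]
          have e : s ^ θ = s * s ^ (θ - 2 + 1) := by
            rw [mul_comm, ← Real.rpow_add_one hs.ne']; congr 1; ring
          rw [e]
          have hX : 0 < s ^ (θ - 2 + 1) := by positivity
          have : -s ^ (θ - 2 + 1) / (θ - 2 + 1) = s ^ (θ - 2 + 1) / (1 - θ) := by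
            rw [show θ - 2 + 1 = -(1 - θ) by ring, neg_div_neg_eq]
          rw [this]
          have h3 : θ / (1 - θ) ≤ 1 := by rw [div_le_one (by linarith)]; linarith
          calc θ * (2 * ((b - a) * s)) * (s ^ (θ - 2 + 1) / (1 - θ))
              = (θ / (1 - θ)) * (2 * ((b - a) * (s * s ^ (θ - 2 + 1)))) := by ring
            _ ≤ 1 * (2 * ((b - a) * (s * s ^ (θ - 2 + 1)))) := by gcongr
            _ = _ := one_mul _
  calc _ ≤ ENNReal.ofReal (b - a) * ENNReal.ofReal s ^ θ
        + ENNReal.ofReal (2 * ((b - a) * s ^ θ)) := by gcongr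
    _ = _ := by
        rw [ENNReal.ofReal_rpow_of_pos hs, ← ENNReal.ofReal_mul hL.le,
          ← ENNReal.ofReal_add (by positivity) (by positivity)]
        congr 1; ring

lemma HLMax_eq_MM (f : ℝ → ℝ) (x : ℝ) :
    HLMax f x = MM volume (fun y => ENNReal.ofReal |f y|) x := by
  apply le_antisymm
  · refine iSup_le fun a => iSup_le fun b => iSup_le fun hab => iSup_le fun hx => ?_
    set N := ∫⁻ y in Ioo a b, ENNReal.ofReal |f y| with hN
    have key : ∀ δ : ℝ, 0 < δ → (ENNReal.ofReal (b - a + δ))⁻¹ * N ≤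
        MM volume (fun y => ENNReal.ofReal |f y|) x := by
      intro δ hδ
      have hx2 : x ∈ Ioo (a - δ / 2) (b + δ / 2) := ⟨by linarith [hx.1], by linarith [hx.2]⟩
      refine le_trans ?_ (le_MM volume _ hx2)
      rw [Real.volume_Ioo, show b + δ / 2 - (a - δ / 2) = b - a + δ by ring]
      refine mul_le_mul' le_rfl (lintegral_mono_set (Ioo_subset_Ioo (by linarith) (by linarith)))
    have ht : Tendsto (fun δ : ℝ => (ENNReal.ofReal (b - a + δ))⁻¹ * N) (𝓝[>] 0)
        (𝓝 ((ENNReal.ofReal (b - a))⁻¹ * N)) := by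
      have h1 : Tendsto (fun δ : ℝ => (ENNReal.ofReal (b - a + δ))⁻¹) (𝓝[>] 0)
          (𝓝 ((ENNReal.ofReal (b - a))⁻¹)) := by
        have : Continuous fun δ : ℝ => (ENNReal.ofReal (b - a + δ))⁻¹ :=
          continuous_inv.comp (ENNReal.continuous_ofReal.comp (by fun_prop))
        have h := (this.tendsto 0).mono_left (nhdsWithin_le_nhds (s := Ioi (0 : ℝ)))
        simpa using h
      refine ENNReal.Tendsto.mul_const h1 (Or.inl ?_)
      simp
    exact le_of_tendsto ht (eventually_mem_nhdsWithin.mono fun δ hδ => key δ hδ)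
  · refine MM_le fun a b hx => ?_
    rw [Real.volume_Ioo]
    exact le_iSup_of_le a (le_iSup_of_le b (le_iSup_of_le (hx.1.trans hx.2)
      (le_iSup_of_le ⟨hx.1.le, hx.2.le⟩ le_rfl)))

lemma MM_ne_zero_interval {μ : Measure ℝ} {g : ℝ → ℝ≥0∞} {x a b : ℝ} (hx : x ∈ Ioo a b)
    (hfin : μ (Ioo a b) ≠ ⊤) :
    ∫⁻ y in Ioo a b, g y ∂μ ≤ MM μ g x * μ (Ioo a b) := by
  by_cases h0 : μ (Ioo a b) = 0
  · rw [setLIntegral_measure_zero _ _ h0]; simp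
  have := le_MM μ g hx
  calc _ = ((μ (Ioo a b))⁻¹ * ∫⁻ y in Ioo a b, g y ∂μ) * μ (Ioo a b) := by
        rw [mul_comm, ← mul_assoc, ENNReal.mul_inv_cancel h0 hfin, one_mul]
    _ ≤ _ := by gcongr

/-- far part of the maximal function is essentially constant -/
lemma MM_far {g : ℝ → ℝ≥0∞} {a b x y : ℝ} (hx : x ∈ Ioo a b) (hy : y ∈ Ioo a b) :
    MM volume ((Ioo (a - (b - a)) (b + (b - a)))ᶜ.indicator g) y ≤ 2 * MM volume g x := by
  refine MM_le fun c d hyc => ?_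
  have hab := hx.1.trans hx.2
  by_cases hsub : Ioo c d ⊆ Ioo (a - (b - a)) (b + (b - a))
  · have : ∫⁻ z in Ioo c d, (Ioo (a - (b - a)) (b + (b - a)))ᶜ.indicator g z = 0 := by
      rw [setLIntegral_congr_fun (g := fun _ => 0) measurableSet_Ioo]
      · simp
      · intro z hz
        exact indicator_of_notMem (notMem_compl_iff.2 (hsub hz)) _
    rw [this]; simp
  · have hL : b - a < d - c := by
      by_contra hc
      push Not at hc
      apply hsub
      intro z hz
      constructor <;> [have := hz.1; have := hz.2] <;>
        linarith [hyc.1, hyc.2, hy.1, hy.2, hz.1, hz.2]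
    have hx' : x ∈ Ioo (min a c) (max b d) :=
      ⟨(min_le_left _ _).trans_lt hx.1, hx.2.trans_le (le_max_left _ _)⟩
    have h1 := le_MM volume g hx'
    rw [Real.volume_Ioo] at h1 ⊢
    have hlen : max b d - min a c ≤ 2 * (d - c) := by
      rcases max_cases b d with ⟨e, _⟩ | ⟨e, _⟩ <;> rcases min_cases a c with ⟨e', _⟩ | ⟨e', _⟩ <;>
        rw [e, e'] <;> linarith [hyc.1, hyc.2, hy.1, hy.2]
    calc _ ≤ (ENNReal.ofReal (d - c))⁻¹ * ∫⁻ z in Ioo (min a c) (max b d), g z := by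
          refine mul_le_mul' le_rfl ?_
          refine (lintegral_mono fun z => indicator_le_self _ _ z).trans ?_
          exact lintegral_mono_set (Ioo_subset_Ioo (min_le_right _ _) (le_max_right _ _))
      _ ≤ (2 * (ENNReal.ofReal (max b d - min a c))⁻¹) *
          ∫⁻ z in Ioo (min a c) (max b d), g z := by
          refine mul_le_mul' ?_ le_rfl
          rw [ENNReal.inv_le_iff_inv_le, ENNReal.mul_inv (by simp) (by simp), inv_inv,
            mul_comm, ← div_eq_mul_inv]
          apply ENNReal.div_le_of_le_mul
          calc _ ≤ ENNReal.ofReal (2 * (d - c)) := ENNReal.ofReal_le_ofReal hlen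
            _ = _ := by rw [ENNReal.ofReal_mul (by norm_num), mul_comm]; simp
      _ ≤ _ := by rw [mul_assoc]; exact mul_le_mul' le_rfl h1

lemma coifman_rochberg {g : ℝ → ℝ≥0∞} (hg : AEMeasurable g volume) {θ : ℝ} (hθ : 0 < θ)
    (hθ2 : θ ≤ 1 / 2) {x : ℝ} (h0 : 0 < MM volume g x) :
    MM volume (fun y => MM volume g y ^ θ) x ≤ 11 * MM volume g x ^ θ := by
  set G := MM volume g x with hG
  by_cases htop : G = ⊤
  · rw [htop, ENNReal.top_rpow_of_pos hθ]; simp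
  have hGr : 0 < G.toReal := ENNReal.toReal_pos h0.ne' htop
  refine MM_le fun a b hx => ?_
  have hab := hx.1.trans hx.2
  have hL : 0 < b - a := by linarith
  set J := Ioo (a - (b - a)) (b + (b - a)) with hJ
  have hxJ : x ∈ J := ⟨by linarith [hx.1], by linarith [hx.2]⟩
  have hpt : ∀ y ∈ Ioo a b, MM volume g y ^ θ ≤
      MM volume (J.indicator g) y ^ θ + (2 * G) ^ θ := by
    intro y hy
    have h1 : MM volume g y ≤ MM volume (J.indicator g) y + 2 * G := by
      calc MM volume g y = MM volume (fun z => J.indicator g z + Jᶜ.indicator g z) y := by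
            refine MM_congr (Eventually.of_forall fun z => ?_) y
            exact (indicator_self_add_compl_apply J g z).symm
        _ ≤ _ := MM_add_le (hg.indicator measurableSet_Ioo) y
        _ ≤ _ := by gcongr; exact MM_far hx hy
    calc _ ≤ (MM volume (J.indicator g) y + 2 * G) ^ θ := by gcongr
      _ ≤ _ := ENNReal.rpow_add_le_add_rpow _ _ hθ.le (by linarith)
  have hN : ∫⁻ y, J.indicator g y ≤ ENNReal.ofReal ((b - a) * (3 * G.toReal)) := by
    rw [lintegral_indicator measurableSet_Ioo]
    refine (MM_ne_zero_interval hxJ (by simp)).trans ?_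
    rw [← hG, Real.volume_Ioo, ← ENNReal.ofReal_toReal htop, ← ENNReal.ofReal_mul hGr.le,
      ENNReal.toReal_ofReal hGr.le]
    apply ENNReal.ofReal_le_ofReal; apply le_of_eq; ring
  have hk := kolmogorov (hg.indicator (s := J) measurableSet_Ioo) hθ hθ2
    (by positivity : 0 < 3 * G.toReal) hab hN
  rw [Real.volume_Ioo]
  have e3 : (3 * G.toReal) ^ θ ≤ 3 * G.toReal ^ θ := by
    rw [Real.mul_rpow (by norm_num) hGr.le]
    gcongr
    calc (3 : ℝ) ^ θ ≤ 3 ^ (1 : ℝ) := Real.rpow_le_rpow_of_exponent_le (by norm_num) (by linarith)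
      _ = 3 := Real.rpow_one _
  have e2 : (2 * G) ^ θ ≤ ENNReal.ofReal (2 * G.toReal ^ θ) := by
    rw [ENNReal.mul_rpow_of_nonneg _ _ hθ.le, ENNReal.ofReal_mul (by norm_num),
      ← ENNReal.ofReal_rpow_of_pos hGr, ENNReal.ofReal_toReal htop]
    gcongr
    calc (2 : ℝ≥0∞) ^ θ ≤ 2 ^ (1 : ℝ) :=
          ENNReal.rpow_le_rpow_of_exponent_le (by norm_num) (by linarith)
      _ = _ := by simp
  calc _ ≤ (ENNReal.ofReal (b - a))⁻¹ * ∫⁻ y in Ioo a b,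
        (MM volume (J.indicator g) y ^ θ + (2 * G) ^ θ) :=
        mul_le_mul' le_rfl (setLIntegral_mono' measurableSet_Ioo hpt)
    _ ≤ (ENNReal.ofReal (b - a))⁻¹ * (ENNReal.ofReal (3 * ((b - a) * (3 * G.toReal) ^ θ)) +
        ENNReal.ofReal (2 * G.toReal ^ θ) * ENNReal.ofReal (b - a)) := by
        refine mul_le_mul' le_rfl ?_
        rw [lintegral_add_right _ measurable_const, setLIntegral_const, Real.volume_Ioo]
        exact add_le_add hk (mul_le_mul' e2 le_rfl)
    _ ≤ (ENNReal.ofReal (b - a))⁻¹ * ENNReal.ofReal ((b - a) * (11 * G.toReal ^ θ)) := by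
        refine mul_le_mul' le_rfl ?_
        rw [← ENNReal.ofReal_mul (by positivity), ← ENNReal.ofReal_add (by positivity)
          (by positivity)]
        apply ENNReal.ofReal_le_ofReal
        nlinarith
    _ = _ := by
        rw [ENNReal.ofReal_mul hL.le, ← mul_assoc, ENNReal.inv_mul_cancel (by simpa using hab)
          (by simp), one_mul, ENNReal.ofReal_mul (by norm_num), ← ENNReal.ofReal_rpow_of_pos hGr,
          ENNReal.ofReal_toReal htop]
        simp

lemma Mr_eq {r : ℝ} (hr : 0 < r) (w : ℝ → ℝ) (x : ℝ) :
    Mr r w x = MM volume (fun y => ENNReal.ofReal |w y| ^ r) x ^ (1 / r) := by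
  unfold Mr
  rw [HLMax_eq_MM]
  congr 2
  funext y
  rw [ENNReal.ofReal_rpow_of_nonneg (abs_nonneg _) hr.le, abs_of_nonneg (by positivity)]

lemma rpow_sub_mul {u : ℝ≥0∞} (hu : u ≠ ⊤) {s t : ℝ} (ht : 0 < t) (hs : 0 < s + t) :
    u ^ s * u ^ t = u ^ (s + t) := by
  by_cases h0 : u = 0
  · rw [h0, ENNReal.zero_rpow_of_pos ht, ENNReal.zero_rpow_of_pos hs, mul_zero]
  · rw [ENNReal.rpow_add _ _ h0 hu]

lemma MM_change {u : ℝ → ℝ≥0∞} (hu : AEMeasurable u volume) (hut : ∀ x, u x ≠ ⊤) {r α : ℝ}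
    (hr : 0 < r) (hα : 0 < α) {F : Set ℝ} (hF : MeasurableSet F) {x : ℝ}
    (hx : MM volume (fun y => u y ^ α) x ≠ ⊤) :
    MM volume (fun y => F.indicator u y ^ r) x ≤
      MM (volume.withDensity (fun y => u y ^ α)) (F.indicator fun y => u y ^ (r - α)) x *
        MM volume (fun y => u y ^ α) x := by
  set μ := volume.withDensity (fun y => u y ^ α) with hμ
  refine MM_le fun a b hab => ?_
  have hvol : volume (Ioo a b) ≠ 0 := by
    rw [Real.volume_Ioo]; simpa using hab.1.trans hab.2
  have hvolt : volume (Ioo a b) ≠ ⊤ := by simp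
  have hμI : μ (Ioo a b) = ∫⁻ y in Ioo a b, u y ^ α := withDensity_apply _ measurableSet_Ioo
  have hInt0 : ∫⁻ y in Ioo a b, F.indicator u y ^ r =
      ∫⁻ y in Ioo a b, F.indicator (fun y => u y ^ (r - α)) y ∂μ := by
    rw [hμ, restrict_withDensity measurableSet_Ioo, lintegral_withDensity_eq_lintegral_mul₀]
    · refine lintegral_congr fun y => ?_
      by_cases hy : y ∈ F
      · simp only [Pi.mul_apply, indicator_of_mem hy]
        rw [mul_comm, rpow_sub_mul (hut y) hα (by linarith)]
        congr 1; ring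
      · simp [Pi.mul_apply, indicator_of_notMem hy, hr]
    · exact (hu.pow_const _).restrict
    · exact ((hu.pow_const _).indicator hF).restrict
  have hle := le_MM volume (fun y => u y ^ α) hab
  rw [← hμI] at hle
  have hμt : μ (Ioo a b) ≠ ⊤ := by
    intro h
    rw [h, ENNReal.mul_top (by simpa using hvolt)] at hle
    exact hx (top_le_iff.1 hle)
  rw [hInt0]
  refine (mul_le_mul' le_rfl (MM_ne_zero_interval hab hμt)).trans ?_
  rw [mul_left_comm]
  exact mul_le_mul' le_rfl hle

lemma L1 {r : ℝ} (hr : 1 < r) (hr2 : r < 2) {w f : ℝ → ℝ} (hw : AEMeasurable w volume)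
    (hw0 : ∀ x, 0 ≤ w x) (hf : AEMeasurable f volume) {F : Set ℝ} (hF : MeasurableSet F)
    (hV : (∫⁻ x, ENNReal.ofReal (f x ^ 2) *
                  Mr (r / (2 - r)) w x ^ (2 * (r / (2 - r)) / r) *
                  ENNReal.ofReal (w x) ^ (-(r / (2 - r)))) ≠ ⊤) :
    ∫⁻ x, ENNReal.ofReal |f x| * Mr r (F.indicator w) x ≤
      (∫⁻ x, ENNReal.ofReal (f x ^ 2) *
                  Mr (r / (2 - r)) w x ^ (2 * (r / (2 - r)) / r) *
                  ENNReal.ofReal (w x) ^ (-(r / (2 - r)))) ^ ((1:ℝ)/2) *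
      (ENNReal.ofReal ((2 / r) * 2 ^ (2 / r + 1) / (2 / r - 1)) *
        ∫⁻ x in F, ENNReal.ofReal (w x)) ^ ((1:ℝ)/2) := by
  set α := r / (2 - r) with hα
  have h2r : 0 < 2 - r := by linarith
  have hr0 : 0 < r := by linarith
  have hα0 : 0 < α := by positivity
  have hp : 1 < 2 / r := by rw [lt_div_iff₀ hr0]; linarith
  set u : ℝ → ℝ≥0∞ := fun y => ENNReal.ofReal (w y) with hu
  have hum : AEMeasurable u volume := hw.ennreal_ofReal
  have hut : ∀ x, u x ≠ ⊤ := fun x => ENNReal.ofReal_ne_top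
  set G := MM volume (fun y => u y ^ α) with hG
  have hGe : ∀ x, Mr α w x = G x ^ (1 / α) := by
    intro x; rw [Mr_eq hα0]
    simp only [abs_of_nonneg (hw0 _)]; rfl
  have hGV : ∀ x, Mr α w x ^ (2 * α / r) = G x ^ (2 / r) := by
    intro x; rw [hGe, ← ENNReal.rpow_mul]; congr 1; field_simp
  set V : ℝ → ℝ≥0∞ := fun x => ENNReal.ofReal (f x ^ 2) * Mr α w x ^ (2 * α / r) * u x ^ (-α)
    with hVdef
  set μ := volume.withDensity (fun y => u y ^ α) with hμ
  set h := (F.indicator fun y => u y ^ (r - α)) with hh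
  have hGm : Measurable G := measurable_MM _ _
  have hVm : AEMeasurable V volume := by
    have e : V = fun x => ENNReal.ofReal (f x ^ 2) * G x ^ (2 / r) * u x ^ (-α) := by
      funext x; simp only [hVdef, hGV]
    rw [e]
    exact (((hf.pow_const 2).ennreal_ofReal).mul (hGm.pow_const _).aemeasurable).mul
      (hum.pow_const _)
  have hpt : ∀ᵐ x, ENNReal.ofReal |f x| * Mr r (F.indicator w) x ≤
      V x ^ ((1:ℝ)/2) * (MM μ h x ^ (2 / r) * u x ^ α) ^ ((1:ℝ)/2) := by
    filter_upwards [ae_lt_top' hVm hV] with x hx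
    by_cases hfx : f x = 0
    · simp [hfx]
    have hf2 : ENNReal.ofReal (f x ^ 2) ≠ 0 := by simp; positivity
    have hua : u x ^ (-α) ≠ 0 := by
      rw [ENNReal.rpow_neg]; simp [hα0.le, hut x]
    have hMr : Mr r (F.indicator w) x = MM volume (fun y => F.indicator u y ^ r) x ^ (1 / r) := by
      rw [Mr_eq hr0]
      congr 2
      funext y
      congr 1
      by_cases hy : y ∈ F <;> simp [hy, hu, abs_of_nonneg (hw0 y)]
    have hGt : G x ≠ ⊤ := by
      intro ht
      simp only [hVdef, hGV, ht] at hx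
      rw [ENNReal.top_rpow_of_pos (by positivity), ENNReal.mul_top hf2,
        ENNReal.top_mul hua] at hx
      exact lt_irrefl _ hx
    have hle := MM_change hum hut hr0 hα0 hF hGt
    rw [hMr]
    have hle2 : MM volume (fun y => F.indicator u y ^ r) x ^ (1 / r) ≤
      (MM μ h x * G x) ^ (1 / r) := by gcongr
    refine (mul_le_mul' le_rfl hle2).trans ?_
    by_cases hG0 : G x = 0
    · rw [hG0, mul_zero, ENNReal.zero_rpow_of_pos (by positivity), mul_zero]; exact zero_le
    have hu0 : u x ≠ 0 := by
      intro hu0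
      simp only [hVdef, hGV, hu0] at hx
      rw [ENNReal.zero_rpow_of_neg (by linarith), ENNReal.mul_top] at hx
      · exact lt_irrefl _ hx
      · refine mul_ne_zero hf2 ?_
        simp [hG0, hGt]
    simp only [hVdef, hGV]
    have e1 : ENNReal.ofReal |f x| = ENNReal.ofReal (f x ^ 2) ^ ((1:ℝ)/2) := by
      rw [ENNReal.ofReal_rpow_of_nonneg (sq_nonneg _) (by norm_num), ← Real.sqrt_eq_rpow,
        Real.sqrt_sq_eq_abs]
    have hhalf : (0:ℝ) ≤ 1 / 2 := by norm_num
    rw [e1, ENNReal.mul_rpow_of_nonneg _ _ hhalf, ENNReal.mul_rpow_of_nonneg _ _ hhalf,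
      ENNReal.mul_rpow_of_nonneg _ _ hhalf, ENNReal.mul_rpow_of_nonneg _ _ (by positivity),
      ← ENNReal.rpow_mul, ← ENNReal.rpow_mul, ← ENNReal.rpow_mul, ← ENNReal.rpow_mul,
      show 2 / r * (1 / 2) = 1 / r by ring]
    have e2 : u x ^ (-α * (1 / 2)) * u x ^ (α * (1 / 2)) = 1 := by
      rw [← ENNReal.rpow_add _ _ hu0 (hut x)]; ring_nf; simp
    apply le_of_eq
    calc _ = ENNReal.ofReal (f x ^ 2) ^ ((1:ℝ) / 2) * (MM μ h x ^ (1 / r) * G x ^ (1 / r)) * 1 := by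
          rw [mul_one]
      _ = _ := by rw [← e2]; ring
  refine (lintegral_mono_ae hpt).trans ?_
  refine (ENNReal.lintegral_mul_norm_pow_le hVm
    (((measurable_MM μ h).pow_const _).aemeasurable.mul (hum.pow_const _))
    (by norm_num) (by norm_num) (by norm_num)).trans ?_
  refine mul_le_mul' le_rfl ?_
  gcongr
  have hhm : AEMeasurable h volume := (hum.pow_const _).indicator hF
  have hst := strong_type hp μ (hhm.mono_ac (withDensity_absolutelyContinuous _ _))
  rw [hμ, lintegral_withDensity_eq_lintegral_mul₀ (hum.pow_const _)
    ((measurable_MM _ h).pow_const _).aemeasurable,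
    lintegral_withDensity_eq_lintegral_mul₀ (hum.pow_const _) (hhm.pow_const _)] at hst
  calc _ = _ := lintegral_congr fun x => mul_comm _ _
    _ ≤ _ := hst
    _ = _ := by
      congr 1
      rw [← lintegral_indicator hF]
      refine lintegral_congr fun x => ?_
      simp only [Pi.mul_apply, hh]
      by_cases hx : x ∈ F
      · simp only [indicator_of_mem hx]
        have h1 : (r - α) * (2 / r) + α = 1 := by rw [hα]; field_simp; ring
        rw [← ENNReal.rpow_mul, mul_comm, rpow_sub_mul (hut x) hα0 (by rw [h1]; norm_num), h1,
          ENNReal.rpow_one]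
      · simp only [indicator_of_notMem hx]
        rw [ENNReal.zero_rpow_of_pos (by positivity), mul_zero]

/-- truncated Hilbert transform -/
def TT (f : ℝ → ℝ) (x ε : ℝ) : ℝ := ∫ y in {y : ℝ | ε < |x - y|}, f y / (x - y)

lemma Hil_eq (f : ℝ → ℝ) (x : ℝ) : Hil f x = limUnder (𝓝[>] (0 : ℝ)) (TT f x) := rfl

lemma measurableSet_far (x ε : ℝ) : MeasurableSet {y : ℝ | ε < |x - y|} :=
  measurableSet_lt measurable_const (by fun_prop)

lemma Hil_of_tendsto {f : ℝ → ℝ} {x L : ℝ} (h : Tendsto (TT f x) (𝓝[>] 0) (𝓝 L)) :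
    Hil f x = L := h.limUnder_eq

lemma Hil_zero_of_not_int {f : ℝ → ℝ} {x ε : ℝ} (hε : 0 < ε)
    (h : ¬ IntegrableOn (fun y => f y / (x - y)) {y : ℝ | ε < |x - y|}) : Hil f x = 0 := by
  apply Hil_of_tendsto
  refine tendsto_const_nhds.congr' ?_
  filter_upwards [Ioo_mem_nhdsGT hε] with δ hδ
  refine (integral_undef fun hc => h ?_).symm
  refine IntegrableOn.mono_set hc fun y hy => ?_
  exact lt_trans hδ.2 hy

lemma aemeasurable_of_Hil_ne {f : ℝ → ℝ} {x : ℝ} (h : Hil f x ≠ 0) : AEMeasurable f volume := by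
  have h1 : ∀ ε : ℝ, 0 < ε →
      IntegrableOn (fun y => f y / (x - y)) {y : ℝ | ε < |x - y|} := by
    intro ε hε
    by_contra hc
    exact h (Hil_zero_of_not_int hε hc)
  have h2 : AEStronglyMeasurable (fun y => f y / (x - y))
      (volume.restrict (⋃ n : ℕ, {y : ℝ | 1 / ((n : ℝ) + 1) < |x - y|})) := by
    rw [aestronglyMeasurable_iUnion_iff]
    intro n
    exact (h1 _ (by positivity)).aestronglyMeasurable
  have h3 : (⋃ n : ℕ, {y : ℝ | 1 / ((n : ℝ) + 1) < |x - y|}) = {x}ᶜ := by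
    ext y
    simp only [mem_iUnion, mem_compl_iff, mem_singleton_iff]
    constructor
    · rintro ⟨n, hn⟩ rfl
      have hn' : 1 / ((n : ℝ) + 1) < |y - y| := hn
      simp at hn'
      linarith [Nat.cast_nonneg (α := ℝ) n]
    · intro hy
      exact exists_nat_one_div_lt (abs_pos.2 (sub_ne_zero.2 (Ne.symm hy)))
  rw [h3] at h2
  have h4 : volume.restrict ({x}ᶜ : Set ℝ) = volume := by
    rw [Measure.restrict_eq_self_of_ae_mem]
    exact measure_eq_zero_iff_ae_notMem.1 (by simp)
  rw [h4] at h2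
  have h5 : AEMeasurable (fun y => f y / (x - y) * (x - y)) volume :=
    h2.aemeasurable.mul (by fun_prop)
  refine h5.congr ?_
  filter_upwards [measure_eq_zero_iff_ae_notMem.1 (show volume {x} = 0 by simp)] with y hy
  have : x - y ≠ 0 := sub_ne_zero.2 fun h => hy (by simp [h])
  field_simp

lemma abs_Hil_le {f φ : ℝ → ℝ} {x L : ℝ}
    (hi : ∀ ε : ℝ, 0 < ε → IntegrableOn (fun y => φ y / (x - y)) {y : ℝ | ε < |x - y|})
    (hL : Tendsto (TT φ x) (𝓝[>] 0) (𝓝 L)) :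
    |Hil f x| ≤ |L| + |Hil (fun y => f y - φ y) x| := by
  by_cases hf : ∀ ε : ℝ, 0 < ε → IntegrableOn (fun y => f y / (x - y)) {y : ℝ | ε < |x - y|}
  · have hT : ∀ᶠ ε in 𝓝[>] (0 : ℝ), TT (fun y => f y - φ y) x ε = TT f x ε - TT φ x ε := by
      filter_upwards [self_mem_nhdsWithin] with ε hε
      unfold TT
      rw [← integral_sub (hf ε hε) (hi ε hε)]
      congr 1; funext y; ring
    by_cases hex : ∃ M, Tendsto (TT f x) (𝓝[>] 0) (𝓝 M)
    · obtain ⟨M, hM⟩ := hex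
      rw [Hil_of_tendsto hM, Hil_of_tendsto ((hM.sub hL).congr' (hT.mono fun _ h => h.symm))]
      calc |M| = |L + (M - L)| := by congr 1; ring
        _ ≤ _ := abs_add_le _ _
    · have hex2 : ∀ M, ¬ Tendsto (TT (fun y => f y - φ y) x) (𝓝[>] 0) (𝓝 M) := by
        intro M hM
        apply hex
        refine ⟨M + L, (hM.add hL).congr' ?_⟩
        filter_upwards [hT] with ε h
        rw [h]; ring
      have : Hil f x = Hil (fun y => f y - φ y) x := by
        rw [Hil_eq, Hil_eq]
        unfold limUnder lim
        congr 1
        funext M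
        apply propext
        constructor
        · intro h; exact absurd ⟨M, h⟩ hex
        · intro h; exact absurd h (hex2 M)
      rw [this]
      linarith [abs_nonneg L]
  · push Not at hf
    obtain ⟨ε, hε, hc⟩ := hf
    rw [Hil_zero_of_not_int hε hc, abs_zero]
    positivity

lemma integrableOn_far {f : ℝ → ℝ} (hf : Integrable f) (x : ℝ) {ε : ℝ} (hε : 0 < ε) :
    IntegrableOn (fun y => f y / (x - y)) {y : ℝ | ε < |x - y|} := by
  refine Integrable.mono' (hf.abs.div_const ε).integrableOn ?_ ?_
  · exact (hf.aestronglyMeasurable.aemeasurable.div (by fun_prop)).aestronglyMeasurable.restrict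
  · filter_upwards [ae_restrict_mem (measurableSet_far x ε)] with y hy
    have hy' : ε < |x - y| := hy
    rw [Real.norm_eq_abs, abs_div]
    gcongr

/-- symmetric form of the Hilbert transform -/
def HL (f : ℝ → ℝ) (x : ℝ) : ℝ := (1 / 2) * ∫ s, (f (x - s) - f (x + s)) / s

lemma TT_eq {f : ℝ → ℝ} (hf : Integrable f) (x : ℝ) {ε : ℝ} (hε : 0 < ε) :
    TT f x ε = (1 / 2) * ∫ s in {s : ℝ | ε < |s|}, (f (x - s) - f (x + s)) / s := by
  have hms : MeasurableSet {s : ℝ | ε < |s|} := measurableSet_lt measurable_const (by fun_prop)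
  have e1 : TT f x ε = ∫ s in {s : ℝ | ε < |s|}, f (x - s) / s := by
    unfold TT
    rw [← integral_indicator (measurableSet_far x ε), ← integral_indicator hms,
      ← integral_sub_left_eq_self _ _ x]
    congr 1; funext s
    simp only [indicator]
    simp
  have hInt0 : IntegrableOn (fun s => f (x - s) / s) {s : ℝ | ε < |s|} := by
    rw [← integrable_indicator_iff hms]
    have := (integrable_indicator_iff (measurableSet_far x ε)).2 (integrableOn_far hf x hε)
    have h2 := (this.comp_sub_left x)
    refine h2.congr (Eventually.of_forall fun s => ?_)
    simp only [indicator]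
    simp
  have e2 : TT f x ε = ∫ s in {s : ℝ | ε < |s|}, - (f (x + s) / s) := by
    rw [e1, ← integral_indicator hms, ← integral_indicator hms, ← integral_neg_eq_self]
    congr 1; funext s
    simp only [indicator]
    simp [div_neg]
  have hInt2 : IntegrableOn (fun s => - (f (x + s) / s)) {s : ℝ | ε < |s|} := by
    rw [← integrable_indicator_iff hms] at hInt0 ⊢
    refine hInt0.comp_neg.congr (Eventually.of_forall fun s => ?_)
    simp only [indicator]
    simp [div_neg]
  have e3 : ∫ s in {s : ℝ | ε < |s|}, (f (x - s) - f (x + s)) / s = TT f x ε + TT f x ε := by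
    nth_rewrite 1 [e1]
    rw [e2, ← integral_add hInt0 hInt2]
    congr 1; funext s; ring
  rw [e3]; ring

lemma HL_bound {f : ℝ → ℝ} {K : NNReal} (hK : LipschitzWith K f) {R : ℝ}
    (hR : ∀ y, R < |y| → f y = 0) {x D : ℝ} (hx : |x| ≤ D) (s : ℝ) :
    ‖(f (x - s) - f (x + s)) / s‖ ≤ (Icc (-(R + D)) (R + D)).indicator (fun _ => (2 * K : ℝ)) s := by
  by_cases hs : s ∈ Icc (-(R + D)) (R + D)
  · rw [indicator_of_mem hs, norm_div, Real.norm_eq_abs, Real.norm_eq_abs]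
    have h := hK.dist_le_mul (x - s) (x + s)
    rw [Real.dist_eq, Real.dist_eq, show x - s - (x + s) = -(2 * s) by ring, abs_neg, abs_mul] at h
    by_cases h0 : s = 0
    · simp [h0]
    · rw [div_le_iff₀ (abs_pos.2 h0)]
      calc _ ≤ _ := h
        _ = _ := by rw [abs_of_pos (by norm_num : (0:ℝ) < 2)]; ring
  · rw [indicator_of_notMem hs]
    have hs' : R + D < |s| := by
      by_contra hc
      push Not at hc
      exact hs (abs_le.1 hc)
    have h1 : R < |x - s| := by
      have := abs_sub_abs_le_abs_sub s x
      rw [abs_sub_comm s x] at this; linarith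
    have h2 : R < |x + s| := by
      have := abs_sub_abs_le_abs_sub s (-x)
      rw [abs_neg, sub_neg_eq_add, add_comm s x] at this; linarith
    rw [hR _ h1, hR _ h2]; simp

lemma HL_meas {f : ℝ → ℝ} (hf : Continuous f) (x : ℝ) :
    AEStronglyMeasurable (fun s => (f (x - s) - f (x + s)) / s) volume := by
  refine Measurable.aestronglyMeasurable ?_
  have h1 : Measurable f := hf.measurable
  fun_prop

lemma HL_dom (R D : ℝ) (C : ℝ) : Integrable ((Icc (-(R + D)) (R + D)).indicator (fun _ => C)) := by
  rw [integrable_indicator_iff measurableSet_Icc]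
  exact integrableOn_const (by simp)

lemma integrable_of_lip {f : ℝ → ℝ} (hf : Continuous f) {R : ℝ}
    (hR : ∀ y, R < |y| → f y = 0) : Integrable f := by
  refine hf.integrable_of_hasCompactSupport ?_
  refine HasCompactSupport.intro (isCompact_Icc (a := -R) (b := R)) fun y hy => hR y ?_
  by_contra hc
  push Not at hc
  exact hy (abs_le.1 hc)

lemma TT_tendsto {f : ℝ → ℝ} {K : NNReal} (hK : LipschitzWith K f) {R : ℝ}
    (hR : ∀ y, R < |y| → f y = 0) (x : ℝ) :
    Tendsto (TT f x) (𝓝[>] 0) (𝓝 (HL f x)) := by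
  have hfi := integrable_of_lip hK.continuous hR
  have hmain : Tendsto (fun ε : ℝ => (1 / 2) *
      ∫ s, {s : ℝ | ε < |s|}.indicator (fun s => (f (x - s) - f (x + s)) / s) s) (𝓝[>] 0)
      (𝓝 (HL f x)) := by
    refine Tendsto.const_mul _ ?_
    refine tendsto_integral_filter_of_dominated_convergence
      ((Icc (-(R + |x|)) (R + |x|)).indicator (fun _ => (2 * K : ℝ))) ?_ ?_ (HL_dom _ _ _) ?_
    · refine Eventually.of_forall fun ε => (HL_meas hK.continuous x).indicator ?_
      exact measurableSet_lt measurable_const (by fun_prop)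
    · refine Eventually.of_forall fun ε => Eventually.of_forall fun s => ?_
      exact (norm_indicator_le_norm_self _ s).trans (HL_bound hK hR le_rfl s)
    · refine Eventually.of_forall fun s => ?_
      by_cases hs : s = 0
      · have : (fun ε : ℝ => {s : ℝ | ε < |s|}.indicator
            (fun s => (f (x - s) - f (x + s)) / s) s) = fun _ => 0 := by
          funext ε; simp [indicator, hs]
        rw [this, hs]; simp
      · refine tendsto_const_nhds.congr' ?_
        filter_upwards [Ioo_mem_nhdsGT (abs_pos.2 hs)] with ε hε
        rw [indicator_of_mem]
        exact hε.2
  refine hmain.congr' ?_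
  filter_upwards [self_mem_nhdsWithin] with ε hε
  rw [TT_eq hfi x hε, integral_indicator]
  exact measurableSet_lt measurable_const (by fun_prop)

lemma HL_continuous {f : ℝ → ℝ} {K : NNReal} (hK : LipschitzWith K f) {R : ℝ}
    (hR : ∀ y, R < |y| → f y = 0) : Continuous (HL f) := by
  rw [continuous_iff_continuousAt]
  intro x
  refine ContinuousAt.mul continuousAt_const ?_
  refine continuousAt_of_dominated
    (bound := (Icc (-(R + (|x| + 1))) (R + (|x| + 1))).indicator (fun _ => (2 * K : ℝ)))
    ?_ ?_ (HL_dom _ _ _) ?_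
  · exact Eventually.of_forall fun y => HL_meas hK.continuous y
  · filter_upwards [Metric.ball_mem_nhds x one_pos] with y hy
    refine Eventually.of_forall fun s => HL_bound hK hR ?_ s
    rw [Metric.mem_ball, Real.dist_eq] at hy
    have := abs_sub_abs_le_abs_sub y x
    linarith
  · refine Eventually.of_forall fun s => ?_
    have := hK.continuous
    refine Continuous.continuousAt ?_
    fun_prop

lemma Hil_eq_HL {f : ℝ → ℝ} {K : NNReal} (hK : LipschitzWith K f) {R : ℝ}
    (hR : ∀ y, R < |y| → f y = 0) (x : ℝ) : Hil f x = HL f x :=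
  Hil_of_tendsto (TT_tendsto hK hR x)

/-- functions vanishing near `x` -/
lemma TT_tendsto_far {f : ℝ → ℝ} {x δ : ℝ} (hδ : 0 < δ)
    (h0 : ∀ y, |x - y| < δ → f y = 0) :
    Tendsto (TT f x) (𝓝[>] 0) (𝓝 (∫ y, f y / (x - y))) := by
  refine tendsto_const_nhds.congr' ?_
  filter_upwards [Ioo_mem_nhdsGT hδ] with ε hε
  unfold TT
  rw [← integral_indicator (measurableSet_far x ε)]
  congr 1
  funext y
  by_cases hy : y ∈ {y : ℝ | ε < |x - y|}
  · rw [indicator_of_mem hy]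
  · rw [indicator_of_notMem hy, h0 y, zero_div]
    have : |x - y| ≤ ε := not_lt.1 hy
    exact this.trans_lt hε.2

/-- the hypothesis of the theorem -/
def Hyp (r A : ℝ) : Prop :=
  ∀ w f : ℝ → ℝ, IsWeight w →
          (∫⁻ x, ENNReal.ofReal |f x| * Mr r w x) < ⊤ →
          ∀ lam : ℝ, 0 < lam →
            ENNReal.ofReal lam *
                (∫⁻ x in {x : ℝ | lam < |Hil f x|}, ENNReal.ofReal (w x))
              ≤ ENNReal.ofReal A * ∫⁻ x, ENNReal.ofReal |f x| * Mr r w x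

structure A1W (r : ℝ) (W : ℝ → ℝ) : Prop where
  meas : Measurable W
  pos : ∀ x, 0 < W x
  bdd : ∃ B : ℝ, ∀ x, W x ≤ B
  a1 : ∀ x, MM volume (fun y => ENNReal.ofReal (W y)) x ≤ 11 * ENNReal.ofReal (W x)
  ar : ∀ x, MM volume (fun y => ENNReal.ofReal (W y) ^ r) x ≤ 11 * ENNReal.ofReal (W x) ^ r

/-- measure with density `W` -/
def wm (W : ℝ → ℝ) : Measure ℝ := volume.withDensity (fun y => ENNReal.ofReal (W y))

instance (W : ℝ → ℝ) : SFinite (wm W) := by unfold wm; infer_instance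

lemma wm_ac (W : ℝ → ℝ) : wm W ≪ volume := withDensity_absolutelyContinuous _ _

lemma A1W.ac {r : ℝ} {W : ℝ → ℝ} (h : A1W r W) : volume ≪ wm W := by
  refine withDensity_absolutelyContinuous' h.meas.ennreal_ofReal.aemeasurable ?_
  exact Eventually.of_forall fun x => by simpa using h.pos x

lemma wm_lintegral {r : ℝ} {W : ℝ → ℝ} (h : A1W r W) {g : ℝ → ℝ≥0∞} (hg : AEMeasurable g volume) :
    ∫⁻ x, g x ∂(wm W) = ∫⁻ x, ENNReal.ofReal (W x) * g x :=
  lintegral_withDensity_eq_lintegral_mul₀ h.meas.ennreal_ofReal.aemeasurable hg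

lemma wm_setLIntegral {r : ℝ} {W : ℝ → ℝ} (h : A1W r W) {g : ℝ → ℝ≥0∞}
    (hg : AEMeasurable g volume) {s : Set ℝ} (hs : MeasurableSet s) :
    ∫⁻ x in s, g x ∂(wm W) = ∫⁻ x in s, ENNReal.ofReal (W x) * g x := by
  unfold wm
  rw [restrict_withDensity hs]
  exact lintegral_withDensity_eq_lintegral_mul₀ h.meas.ennreal_ofReal.aemeasurable hg.restrict

lemma A1W.wm_ne_top {r : ℝ} {W : ℝ → ℝ} (h : A1W r W) {s : Set ℝ} (hs : volume s ≠ ⊤) :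
    wm W s ≠ ⊤ := by
  obtain ⟨B, hB⟩ := h.bdd
  unfold wm
  rw [withDensity_apply' _ s]
  refine ne_top_of_le_ne_top (b := ENNReal.ofReal B * volume s)
    (ENNReal.mul_ne_top ENNReal.ofReal_ne_top hs) ?_
  rw [← setLIntegral_const]
  exact lintegral_mono fun x => ENNReal.ofReal_le_ofReal (hB x)

lemma A1W.wm_ne_zero {r : ℝ} {W : ℝ → ℝ} (h : A1W r W) {a b : ℝ} (hab : a < b) :
    wm W (Ioo a b) ≠ 0 := by
  intro h0
  have := h.ac h0
  simp at this
  linarith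

lemma A1W.MM_le {r : ℝ} {W : ℝ → ℝ} (h : A1W r W) {g : ℝ → ℝ≥0∞} (hg : AEMeasurable g volume)
    (x : ℝ) : MM volume g x ≤ 11 * MM (wm W) g x := by
  refine RT.MM_le fun a b hx => ?_
  have hab := hx.1.trans hx.2
  have hm0 := h.wm_ne_zero hab
  have hmt : wm W (Ioo a b) ≠ ⊤ := h.wm_ne_top (by simp)
  have hle := le_MM (wm W) g hx
  refine le_trans ?_ (mul_le_mul' le_rfl hle)
  rw [wm_setLIntegral h hg measurableSet_Ioo, mul_left_comm, ← ENNReal.div_eq_inv_mul (b := wm W _),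
    ENNReal.le_div_iff_mul_le (Or.inl hm0) (Or.inl hmt), mul_comm, ← mul_assoc,
    ← lintegral_const_mul' _ _ (ENNReal.mul_ne_top hmt (by simpa using hab)),
    ← lintegral_const_mul' _ _ (by simp)]
  refine setLIntegral_mono' measurableSet_Ioo fun y hy => ?_
  rw [← mul_assoc]
  refine mul_le_mul' ?_ le_rfl
  have := (le_MM volume (fun y => ENNReal.ofReal (W y)) hy).trans (h.a1 y)
  unfold wm
  rwa [withDensity_apply _ measurableSet_Ioo, mul_comm]

lemma A1W.weak_set {r : ℝ} {W : ℝ → ℝ} (h : A1W r W) {E : Set ℝ} (hE : MeasurableSet E) :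
    wm W {x | 1 / 4 < MM volume (E.indicator fun _ => 1) x} ≤ 88 * wm W E := by
  have hm : Measurable (E.indicator (fun _ => (1 : ℝ≥0∞))) := measurable_const.indicator hE
  have h1 := weak_type (wm W) hm.aemeasurable (1 / 44)
  rw [lintegral_indicator_const hE, one_mul] at h1
  have hsub : {x | 1 / 4 < MM volume (E.indicator fun _ => (1 : ℝ≥0∞)) x} ⊆
      {x | 1 / 44 < MM (wm W) (E.indicator fun _ => (1 : ℝ≥0∞)) x} := by
    intro x hx
    have hx' : 1 / 4 < MM volume (E.indicator fun _ => (1 : ℝ≥0∞)) x := hx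
    show 1 / 44 < MM (wm W) (E.indicator fun _ => (1 : ℝ≥0∞)) x
    have h2 := hx'.trans_le (h.MM_le hm.aemeasurable x)
    by_contra hc
    push Not at hc
    have h3 := h2.trans_le (mul_le_mul' le_rfl hc)
    have : (11 : ℝ≥0∞) * (1 / 44) = 1 / 4 := by
      rw [← ENNReal.toReal_eq_toReal_iff' (by finiteness) (by finiteness)]
      simp; norm_num
    rw [this] at h3
    exact lt_irrefl _ h3
  refine (measure_mono hsub).trans ?_
  calc _ = 44 * (1 / 44 * wm W {x | 1 / 44 < MM (wm W) (E.indicator fun _ => (1 : ℝ≥0∞)) x}) := by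
        rw [← mul_assoc, ENNReal.mul_div_cancel (by simp) (by simp), one_mul]
    _ ≤ 44 * (2 * wm W E) := mul_le_mul' le_rfl h1
    _ = _ := by rw [← mul_assoc]; norm_num

lemma A1W.weak_two {r : ℝ} {W : ℝ → ℝ} (h : A1W r W) {g : ℝ → ℝ≥0∞} (hg : AEMeasurable g volume)
    (t : ℝ≥0∞) :
    t ^ (2:ℝ) * wm W {x | t < MM volume g x} ≤ 1936 * ∫⁻ x, g x ^ (2:ℝ) ∂(wm W) := by
  have hst := strong_type (p := 2) (by norm_num) (wm W) (hg.mono_ac (wm_ac W))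
  have hc : ENNReal.ofReal (2 * 2 ^ ((2:ℝ) + 1) / (2 - 1)) = 16 := by
    rw [show (2:ℝ) + 1 = ((3 : ℕ) : ℝ) by norm_num, Real.rpow_natCast]; norm_num
  rw [hc] at hst
  calc _ ≤ t ^ (2:ℝ) * wm W {x | t ^ (2:ℝ) ≤ MM volume g x ^ (2:ℝ)} := by
        refine mul_le_mul' le_rfl (measure_mono fun x hx => ?_)
        have hx' : t < MM volume g x := hx
        show t ^ (2:ℝ) ≤ MM volume g x ^ (2:ℝ)
        gcongr
    _ ≤ ∫⁻ x, MM volume g x ^ (2:ℝ) ∂(wm W) :=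
        mul_meas_ge_le_lintegral ((measurable_MM volume g).pow_const _) _
    _ ≤ ∫⁻ x, 121 * MM (wm W) g x ^ (2:ℝ) ∂(wm W) := by
        refine lintegral_mono fun x => ?_
        calc _ ≤ (11 * MM (wm W) g x) ^ (2:ℝ) := by
              have := h.MM_le hg x
              gcongr
          _ = _ := by
              rw [ENNReal.mul_rpow_of_nonneg _ _ (by norm_num)]
              norm_num
    _ = 121 * ∫⁻ x, MM (wm W) g x ^ (2:ℝ) ∂(wm W) := lintegral_const_mul' _ _ (by simp)
    _ ≤ 121 * (16 * ∫⁻ x, g x ^ (2:ℝ) ∂(wm W)) := mul_le_mul' le_rfl hst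
    _ = _ := by rw [← mul_assoc]; norm_num

lemma rpow_eleven {r : ℝ} (hr : 1 < r) {c : ℝ≥0∞} (hc : 1 ≤ c) (u : ℝ≥0∞) :
    (c * u ^ r) ^ (1 / r) ≤ c * u := by
  have hr0 : 0 < r := by linarith
  rw [ENNReal.mul_rpow_of_nonneg _ _ (by positivity), ← ENNReal.rpow_mul,
    mul_one_div_cancel hr0.ne', ENNReal.rpow_one]
  refine mul_le_mul' ?_ le_rfl
  calc c ^ (1 / r) ≤ c ^ (1 : ℝ) :=
        ENNReal.rpow_le_rpow_of_exponent_le hc (by rw [div_le_one hr0]; linarith)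
    _ = c := ENNReal.rpow_one c

lemma A1W.Mr_le {r : ℝ} (hr : 1 < r) {W : ℝ → ℝ} (h : A1W r W) (s : Set ℝ) (x : ℝ) :
    Mr r (s.indicator W) x ≤ 11 * ENNReal.ofReal (W x) := by
  rw [Mr_eq (by linarith)]
  refine le_trans ?_ (rpow_eleven hr (by norm_num : (1:ℝ≥0∞) ≤ 11) (ENNReal.ofReal (W x)))
  have hr0 : 0 < r := by linarith
  gcongr
  refine le_trans ?_ (h.ar x)
  refine MM_mono (Eventually.of_forall fun y => ?_) x
  gcongr
  by_cases hy : y ∈ s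
  · rw [indicator_of_mem hy, abs_of_pos (h.pos y)]
  · rw [indicator_of_notMem hy, abs_zero]; exact (h.pos y).le

lemma A1W.Mr_far {r : ℝ} (hr : 1 < r) {W : ℝ → ℝ} (h : A1W r W) {z ρ x ξ : ℝ}
    (hx : 2 * ρ ≤ |x - z|) (hξ : ξ ∈ Ioo (z - ρ) (z + ρ)) :
    Mr r ((Ioo (z - ρ) (z + ρ)).indicator W) x ≤ 22 * ENNReal.ofReal (W ξ) := by
  rw [Mr_eq (by linarith)]
  refine le_trans ?_ (rpow_eleven hr (by norm_num : (1:ℝ≥0∞) ≤ 22) (ENNReal.ofReal (W ξ)))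
  have hr0 : 0 < r := by linarith
  gcongr
  refine RT.MM_le fun a b hab => ?_
  set I := Ioo (z - ρ) (z + ρ) with hI
  have hfun : ∀ y, ENNReal.ofReal |I.indicator W y| ^ r =
      I.indicator (fun y => ENNReal.ofReal (W y) ^ r) y := by
    intro y
    by_cases hy : y ∈ I
    · rw [indicator_of_mem hy, indicator_of_mem hy, abs_of_pos (h.pos y)]
    · rw [indicator_of_notMem hy, indicator_of_notMem hy]; simp [hr0]
  simp_rw [hfun]
  by_cases hdis : Disjoint (Ioo a b) I
  · have : ∫⁻ y in Ioo a b, I.indicator (fun y => ENNReal.ofReal (W y) ^ r) y = 0 := by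
      rw [setLIntegral_congr_fun (g := fun _ => 0) measurableSet_Ioo]
      · simp
      · intro y hy
        exact indicator_of_notMem (fun hy2 => disjoint_left.1 hdis hy hy2) _
    rw [this]; simp
  · obtain ⟨y, hy, hyI⟩ := not_disjoint_iff.1 hdis
    have hlen : ρ ≤ b - a := by
      have h1 : |y - z| < ρ := by rw [abs_lt]; constructor <;> linarith [hyI.1, hyI.2]
      have h2 : |x - y| < b - a := by
        rw [abs_lt]; constructor <;> linarith [hy.1, hy.2, hab.1, hab.2]
      have h3 := abs_sub_le x y z
      linarith
    have h1 : ∫⁻ y in Ioo a b, I.indicator (fun y => ENNReal.ofReal (W y) ^ r) y ≤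
        (11 * ENNReal.ofReal (W ξ) ^ r) * ENNReal.ofReal (2 * ρ) := by
      calc _ ≤ ∫⁻ y, I.indicator (fun y => ENNReal.ofReal (W y) ^ r) y :=
            setLIntegral_le_lintegral _ _
        _ = ∫⁻ y in I, ENNReal.ofReal (W y) ^ r := lintegral_indicator measurableSet_Ioo _
        _ ≤ _ := MM_ne_zero_interval hξ (by simp)
        _ ≤ _ := by
          rw [Real.volume_Ioo, show z + ρ - (z - ρ) = 2 * ρ by ring]
          exact mul_le_mul' (h.ar ξ) le_rfl
    rw [Real.volume_Ioo, ← ENNReal.div_eq_inv_mul]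
    apply ENNReal.div_le_of_le_mul
    refine h1.trans ?_
    calc (11 * ENNReal.ofReal (W ξ) ^ r) * ENNReal.ofReal (2 * ρ)
        ≤ (11 * ENNReal.ofReal (W ξ) ^ r) * ENNReal.ofReal (2 * (b - a)) := by
          gcongr
      _ = _ := by
          rw [ENNReal.ofReal_mul (by norm_num)]
          simp only [ENNReal.ofReal_ofNat]
          rw [show (22 : ℝ≥0∞) = 11 * 2 by norm_num]; ring

lemma isWeight_of_bdd {w : ℝ → ℝ} (hm : AEMeasurable w volume) (h0 : ∀ x, 0 ≤ w x) {B : ℝ}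
    (hB : ∀ x, w x ≤ B) : IsWeight w := by
  refine ⟨h0, ?_⟩
  refine (locallyIntegrable_const B).mono hm.aestronglyMeasurable ?_
  refine Eventually.of_forall fun x => ?_
  rw [Real.norm_eq_abs, Real.norm_eq_abs, abs_of_nonneg (h0 x)]
  exact (hB x).trans (le_abs_self B)

lemma Mr_one {r : ℝ} (hr : 0 < r) (x : ℝ) : Mr r (fun _ => 1) x ≤ 1 := by
  rw [Mr_eq hr]
  simp only [abs_one, ENNReal.ofReal_one, ENNReal.one_rpow]
  calc _ ≤ (1 : ℝ≥0∞) ^ (1 / r) := by gcongr; exact MM_const_le _ _ _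
    _ = 1 := ENNReal.one_rpow _

lemma Hyp.weak_one {r A : ℝ} (hr : 1 < r) (H : Hyp r A) {f : ℝ → ℝ} (hf : Integrable f) {lam : ℝ}
    (hl : 0 < lam) :
    ENNReal.ofReal lam * volume {x : ℝ | lam < |Hil f x|} ≤
      ENNReal.ofReal A * ∫⁻ x, ENNReal.ofReal |f x| := by
  have hle : ∫⁻ x, ENNReal.ofReal |f x| * Mr r (fun _ => 1) x ≤ ∫⁻ x, ENNReal.ofReal |f x| := by
    refine lintegral_mono fun x => ?_
    calc _ ≤ ENNReal.ofReal |f x| * 1 := mul_le_mul' le_rfl (Mr_one (by linarith) x)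
      _ = _ := mul_one _
  have hfin : ∫⁻ x, ENNReal.ofReal |f x| < ⊤ := by
    have := hf.abs.lintegral_lt_top
    simpa using this
  have h := H (fun _ => 1) f (isWeight_of_bdd (B := 1) aemeasurable_const (by simp) (by simp))
    (hle.trans_lt hfin) lam hl
  simp only [ENNReal.ofReal_one, lintegral_const, Measure.restrict_apply_univ, one_mul] at h
  exact h.trans (mul_le_mul' le_rfl hle)

lemma Hyp.lower {r A : ℝ} (hr : 1 < r) (H : Hyp r A) (hA : 0 < A) : 3 / 4 ≤ A := by
  set f : ℝ → ℝ := (Icc (0:ℝ) 1).indicator fun _ => 1 with hf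
  have hfi : Integrable f := by
    rw [hf, integrable_indicator_iff measurableSet_Icc]
    exact integrableOn_const (by simp)
  have h := H.weak_one hr hfi (lam := 1 / 4) (by norm_num)
  have hnorm : ∫⁻ x, ENNReal.ofReal |f x| = 1 := by
    have : (fun x => ENNReal.ofReal |f x|) = (Icc (0:ℝ) 1).indicator fun _ => 1 := by
      funext x
      by_cases hx : x ∈ Icc (0:ℝ) 1 <;> simp [hf, hx]
    rw [this, lintegral_indicator_const measurableSet_Icc]; simp
  rw [hnorm, mul_one] at h
  have hsub : Ioo (1:ℝ) 4 ⊆ {x : ℝ | 1 / 4 < |Hil f x|} := by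
    intro x hx
    show 1 / 4 < |Hil f x|
    have hz : ∀ y, |x - y| < x - 1 → f y = 0 := by
      intro y hy
      rw [hf, indicator_of_notMem]
      intro hy2
      rw [abs_lt] at hy
      linarith [hy.2, hy2.2]
    rw [Hil_of_tendsto (TT_tendsto_far (by linarith [hx.1] : 0 < x - 1) hz)]
    have e : ∫ y, f y / (x - y) = ∫ y in Icc (0:ℝ) 1, 1 / (x - y) := by
      rw [← integral_indicator measurableSet_Icc]
      congr 1; funext y
      by_cases hy : y ∈ Icc (0:ℝ) 1 <;> simp [hf, hy]
    have hcont : ContinuousOn (fun y => 1 / (x - y)) (Icc (0:ℝ) 1) := by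
      refine ContinuousOn.div continuousOn_const (by fun_prop) fun y hy => ?_
      have : 0 < x - y := by linarith [hx.1, hy.2]
      exact this.ne'
    have hge : 1 / x ≤ ∫ y in Icc (0:ℝ) 1, 1 / (x - y) := by
      have h1 : ∫ y in Icc (0:ℝ) 1, 1 / x = 1 / x := by simp
      rw [← h1]
      refine setIntegral_mono_on (integrableOn_const (by simp))
        (hcont.integrableOn_compact isCompact_Icc) measurableSet_Icc fun y hy => ?_
      have : 0 < x - y := by linarith [hx.1, hy.2]
      gcongr
      linarith [hy.1]
    rw [e]
    refine lt_of_lt_of_le ?_ (hge.trans (le_abs_self _))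
    have : 0 < x := by linarith [hx.1]
    gcongr
    exact hx.2
  have h2 := (mul_le_mul' (le_refl (ENNReal.ofReal (1 / 4))) (measure_mono hsub)).trans h
  rw [Real.volume_Ioo, ← ENNReal.ofReal_mul (by norm_num), ENNReal.ofReal_le_ofReal_iff hA.le] at h2
  linarith

/-- restricted measure of a possibly nonmeasurable set -/
lemma wm_inter {r : ℝ} {W : ℝ → ℝ} (_h : A1W r W) {I S : Set ℝ} (hI : MeasurableSet I) :
    ∫⁻ x in S, ENNReal.ofReal (I.indicator W x) = wm W (S ∩ I) := by
  have : (fun x => ENNReal.ofReal (I.indicator W x)) =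
      I.indicator (fun x => ENNReal.ofReal (W x)) := by
    funext x; by_cases hx : x ∈ I <;> simp [hx]
  rw [this, lintegral_indicator hI, Measure.restrict_restrict hI, wm, withDensity_apply',
    inter_comm]

lemma A1W.lint_lt_top {r : ℝ} {W : ℝ → ℝ} (h : A1W r W) {f : ℝ → ℝ} (hf : Integrable f) :
    ∫⁻ x, ENNReal.ofReal |f x| ∂(wm W) < ⊤ := by
  obtain ⟨B, hB⟩ := h.bdd
  rw [wm_lintegral h hf.abs.aestronglyMeasurable.aemeasurable.ennreal_ofReal]
  calc _ ≤ ∫⁻ x, ENNReal.ofReal B * ENNReal.ofReal |f x| :=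
        lintegral_mono fun x => mul_le_mul' (ENNReal.ofReal_le_ofReal (hB x)) le_rfl
    _ = ENNReal.ofReal B * ∫⁻ x, ENNReal.ofReal |f x| :=
        lintegral_const_mul' _ _ ENNReal.ofReal_ne_top
    _ < ⊤ := ENNReal.mul_lt_top ENNReal.ofReal_lt_top (by simpa using hf.abs.lintegral_lt_top)

lemma Hyp.weak_A1 {r A : ℝ} (hr : 1 < r) (H : Hyp r A) {W : ℝ → ℝ} (h : A1W r W) {f : ℝ → ℝ}
    (hf : Integrable f) {lam : ℝ} (hl : 0 < lam) :
    ENNReal.ofReal lam * wm W {x : ℝ | lam < |Hil f x|} ≤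
      ENNReal.ofReal A * (11 * ∫⁻ x, ENNReal.ofReal |f x| ∂(wm W)) := by
  obtain ⟨B, hB⟩ := h.bdd
  have hle : ∫⁻ x, ENNReal.ofReal |f x| * Mr r W x ≤
      11 * ∫⁻ x, ENNReal.ofReal |f x| ∂(wm W) := by
    rw [wm_lintegral h hf.abs.aestronglyMeasurable.aemeasurable.ennreal_ofReal,
      ← lintegral_const_mul' _ _ (by simp)]
    refine lintegral_mono fun x => ?_
    have := h.Mr_le hr univ x
    rw [indicator_univ] at this
    rw [← mul_assoc, mul_comm]
    exact mul_le_mul' this le_rfl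
  have h1 := H W f (isWeight_of_bdd h.meas.aemeasurable (fun x => (h.pos x).le) hB)
    (hle.trans_lt (ENNReal.mul_lt_top (by simp) (h.lint_lt_top hf))) lam hl
  rw [wm, withDensity_apply']
  exact h1.trans (mul_le_mul' le_rfl hle)

lemma Hyp.local_est {r A : ℝ} (hr : 1 < r) (H : Hyp r A) {W : ℝ → ℝ} (h : A1W r W) {f : ℝ → ℝ}
    (hf : Integrable f) {lam : ℝ} (hl : 0 < lam) {z ρ : ℝ} :
    ENNReal.ofReal (2 * ρ) * (ENNReal.ofReal lam *
      wm W ({x : ℝ | lam < |Hil f x|} ∩ Ioo (z - ρ) (z + ρ))) ≤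
      ENNReal.ofReal A * (11 * (ENNReal.ofReal (2 * ρ) *
        ∫⁻ x in Ioo (z - 2 * ρ) (z + 2 * ρ), ENNReal.ofReal |f x| ∂(wm W)) +
        22 * (wm W (Ioo (z - ρ) (z + ρ)) * ∫⁻ x, ENNReal.ofReal |f x|)) := by
  obtain ⟨B, hB⟩ := h.bdd
  set I := Ioo (z - ρ) (z + ρ) with hI
  set I2 := Ioo (z - 2 * ρ) (z + 2 * ρ) with hI2
  have hfm : AEMeasurable (fun x => ENNReal.ofReal |f x|) volume :=
    hf.abs.aestronglyMeasurable.aemeasurable.ennreal_ofReal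
  set N := ∫⁻ x, ENNReal.ofReal |f x| with hN
  have hNt : N < ⊤ := by simpa using hf.abs.lintegral_lt_top
  set P := ∫⁻ x in I2, ENNReal.ofReal |f x| ∂(wm W) with hP
  have hPt : P < ⊤ := (setLIntegral_le_lintegral _ _).trans_lt (h.lint_lt_top hf)
  have hle : ∀ ξ ∈ I, ∫⁻ x, ENNReal.ofReal |f x| * Mr r (I.indicator W) x ≤
      11 * P + 22 * ENNReal.ofReal (W ξ) * N := by
    intro ξ hξ
    rw [← lintegral_add_compl _ (measurableSet_Ioo : MeasurableSet I2)]
    refine add_le_add ?_ ?_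
    · rw [hP, wm_setLIntegral h hfm measurableSet_Ioo, ← lintegral_const_mul' _ _ (by simp)]
      refine lintegral_mono fun x => ?_
      rw [← mul_assoc, mul_comm]
      exact mul_le_mul' (h.Mr_le hr I x) le_rfl
    · calc _ ≤ ∫⁻ x in I2ᶜ, 22 * ENNReal.ofReal (W ξ) * ENNReal.ofReal |f x| := by
            refine setLIntegral_mono' measurableSet_Ioo.compl fun x hx => ?_
            rw [mul_comm]
            refine mul_le_mul' (h.Mr_far hr ?_ hξ) le_rfl
            by_contra hc
            push Not at hc
            rw [abs_lt] at hc
            exact hx ⟨by linarith [hc.1], by linarith [hc.2]⟩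
        _ ≤ ∫⁻ x, 22 * ENNReal.ofReal (W ξ) * ENNReal.ofReal |f x| := setLIntegral_le_lintegral _ _
        _ = _ := lintegral_const_mul' _ _ (by finiteness)
  have hmain : ∀ ξ ∈ I, ENNReal.ofReal lam * wm W ({x : ℝ | lam < |Hil f x|} ∩ I) ≤
      ENNReal.ofReal A * (11 * P + 22 * ENNReal.ofReal (W ξ) * N) := by
    intro ξ hξ
    have hwt : IsWeight (I.indicator W) := by
      refine isWeight_of_bdd (h.meas.indicator measurableSet_Ioo).aemeasurable
        (fun x => indicator_nonneg (fun y _ => (h.pos y).le) x) (B := B) fun x => ?_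
      by_cases hx : x ∈ I
      · rw [indicator_of_mem hx]; exact hB x
      · rw [indicator_of_notMem hx]; exact (h.pos x).le.trans (hB x)
    have h1 := H (I.indicator W) f hwt ((hle ξ hξ).trans_lt (by finiteness)) lam hl
    rw [wm_inter h measurableSet_Ioo] at h1
    exact h1.trans (mul_le_mul' le_rfl (hle ξ hξ))
  have hInt0 := setLIntegral_mono' (μ := volume) (measurableSet_Ioo : MeasurableSet I) hmain
  have hvol : volume I = ENNReal.ofReal (2 * ρ) := by
    rw [Real.volume_Ioo]; congr 1; ring
  have hWm : Measurable fun ξ => ENNReal.ofReal (W ξ) := h.meas.ennreal_ofReal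
  rw [setLIntegral_const, hvol, lintegral_const_mul' _ _ ENNReal.ofReal_ne_top,
    lintegral_add_left measurable_const, setLIntegral_const, hvol,
    lintegral_mul_const _ (hWm.const_mul 22), lintegral_const_mul _ hWm] at hInt0
  have hwI : wm W I = ∫⁻ ξ in I, ENNReal.ofReal (W ξ) := by rw [wm, withDensity_apply']
  rw [← hwI] at hInt0
  calc _ = _ := mul_comm _ _
    _ ≤ _ := hInt0
    _ = _ := by ring

lemma tail_est {g : ℝ → ℝ≥0∞} (hg : AEMeasurable g volume) {z ξ D : ℝ} (hξ : |ξ - z| < D)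
    {t : ℝ≥0∞} (ht : MM volume g ξ ≤ t) :
    ∫⁻ y in {y : ℝ | D ≤ |y - z|}, g y * ENNReal.ofReal (1 / |y - z| ^ 2) ≤
      ENNReal.ofReal (8 / D) * t := by
  have hD : 0 < D := (abs_nonneg _).trans_lt hξ
  have hms : MeasurableSet {y : ℝ | D ≤ |y - z|} := measurableSet_le measurable_const (by fun_prop)
  let B : ℕ → Set ℝ := fun k => Ioo (z - 2 ^ (k + 1) * D) (z + 2 ^ (k + 1) * D)
  have hpt : ∀ y ∈ {y : ℝ | D ≤ |y - z|}, g y * ENNReal.ofReal (1 / |y - z| ^ 2) ≤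
      ∑' k : ℕ, ENNReal.ofReal (1 / (2 ^ k * D) ^ 2) * (B k).indicator g y := by
    intro y hy
    have hy' : D ≤ |y - z| := hy
    obtain ⟨k, hk1, hk2⟩ := exists_nat_pow_near (x := |y - z| / D) (y := 2)
      ((one_le_div hD).2 hy') (by norm_num)
    rw [le_div_iff₀ hD] at hk1
    rw [div_lt_iff₀ hD] at hk2
    refine le_trans ?_ (ENNReal.le_tsum k)
    have hyB : y ∈ B k := by
      rw [abs_lt] at hk2
      exact ⟨by linarith [hk2.1], by linarith [hk2.2]⟩
    rw [indicator_of_mem hyB, mul_comm]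
    gcongr
  calc _ ≤ ∫⁻ y in {y : ℝ | D ≤ |y - z|},
        ∑' k : ℕ, ENNReal.ofReal (1 / (2 ^ k * D) ^ 2) * (B k).indicator g y :=
        setLIntegral_mono' hms hpt
    _ ≤ ∫⁻ y, ∑' k : ℕ, ENNReal.ofReal (1 / (2 ^ k * D) ^ 2) * (B k).indicator g y :=
        setLIntegral_le_lintegral _ _
    _ = ∑' k : ℕ, ENNReal.ofReal (1 / (2 ^ k * D) ^ 2) * ∫⁻ y in B k, g y := by
        rw [lintegral_tsum fun k => (hg.indicator measurableSet_Ioo).const_mul _]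
        refine tsum_congr fun k => ?_
        rw [lintegral_const_mul' _ _ ENNReal.ofReal_ne_top, lintegral_indicator measurableSet_Ioo]
    _ ≤ ∑' k : ℕ, ENNReal.ofReal (4 / D * (1 / 2) ^ k) * t := by
        refine ENNReal.tsum_le_tsum fun k => ?_
        have h2k : (1:ℝ) ≤ 2 ^ (k + 1) := one_le_pow₀ (by norm_num)
        have hξB : ξ ∈ B k := by
          have hDk : D ≤ 2 ^ (k + 1) * D := by nlinarith
          rw [abs_lt] at hξ
          exact ⟨by linarith [hξ.1], by linarith [hξ.2]⟩
        have h1 := MM_ne_zero_interval (μ := volume) (g := g) hξB (by simp)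
        calc _ ≤ ENNReal.ofReal (1 / (2 ^ k * D) ^ 2) *
              (t * ENNReal.ofReal (2 * (2 ^ (k + 1) * D))) := by
              refine mul_le_mul' le_rfl (h1.trans ?_)
              rw [Real.volume_Ioo]
              refine mul_le_mul' ht (le_of_eq ?_)
              congr 1; ring
          _ = ENNReal.ofReal (1 / (2 ^ k * D) ^ 2) *
              ENNReal.ofReal (2 * (2 ^ (k + 1) * D)) * t := by ring
          _ = _ := by
              rw [← ENNReal.ofReal_mul (by positivity)]
              congr 2
              rw [one_div_pow, pow_succ]
              field_simp
              ring
    _ = _ := by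
        rw [ENNReal.tsum_mul_right, ← ENNReal.ofReal_tsum_of_nonneg (fun k => by positivity)
          (summable_geometric_two.mul_left _), tsum_mul_left, tsum_geometric_two]
        congr 2; ring

lemma integrable_far {f : ℝ → ℝ} (hf : Integrable f) {x δ : ℝ} (hδ : 0 < δ)
    (h0 : ∀ y, |x - y| < δ → f y = 0) : Integrable (fun y => f y / (x - y)) := by
  have h1 := (integrable_indicator_iff (measurableSet_far x (δ / 2))).2
    (integrableOn_far hf x (half_pos hδ))
  refine h1.congr (Eventually.of_forall fun y => ?_)
  by_cases hy : y ∈ {y : ℝ | δ / 2 < |x - y|}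
  · simp only [indicator_of_mem hy]
  · simp only [indicator_of_notMem hy]
    rw [h0 y, zero_div]
    have : |x - y| ≤ δ / 2 := not_lt.1 hy
    linarith

lemma kernel_est {f : ℝ → ℝ} (hf : Integrable f) {z d x x' ξ s : ℝ} (hd : 0 < d)
    (h0 : ∀ y, |y - z| < 4 * d → f y = 0) (hx : |x - z| < d / 10) (hx' : |x' - z| < 2 * d)
    (hξ : |ξ - z| < d / 10) (hs : 0 ≤ s)
    (hM : MM volume (fun y => ENNReal.ofReal |f y|) ξ ≤ ENNReal.ofReal s) :
    |(∫ y, f y / (x - y)) - ∫ y, f y / (x' - y)| ≤ 10 * s := by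
  have i1 : Integrable (fun y => f y / (x - y)) := by
    refine integrable_far hf hd fun y hy => h0 y ?_
    have := abs_sub_le y x z
    rw [abs_sub_comm y x] at this
    linarith
  have i2 : Integrable (fun y => f y / (x' - y)) := by
    refine integrable_far hf hd fun y hy => h0 y ?_
    have := abs_sub_le y x' z
    rw [abs_sub_comm y x'] at this
    linarith
  rw [← integral_sub i1 i2, ← Real.norm_eq_abs, ← ENNReal.ofReal_le_ofReal_iff (by positivity),
    ofReal_norm]
  refine (enorm_integral_le_lintegral_enorm _).trans ?_
  have hfm : AEMeasurable (fun x => ENNReal.ofReal |f x|) volume :=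
    hf.abs.aestronglyMeasurable.aemeasurable.ennreal_ofReal
  have hms : MeasurableSet {y : ℝ | 4 * d ≤ |y - z|} :=
    measurableSet_le measurable_const (by fun_prop)
  have hpt : ∀ y, ‖f y / (x - y) - f y / (x' - y)‖ₑ ≤ {y : ℝ | 4 * d ≤ |y - z|}.indicator
      (fun y => ENNReal.ofReal (5 * d) *
        (ENNReal.ofReal |f y| * ENNReal.ofReal (1 / |y - z| ^ 2))) y := by
    intro y
    by_cases hy : y ∈ {y : ℝ | 4 * d ≤ |y - z|}
    · have hy' : 4 * d ≤ |y - z| := hy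
      rw [indicator_of_mem hy, ← ENNReal.ofReal_mul (abs_nonneg _),
        ← ENNReal.ofReal_mul (by positivity), ← ofReal_norm, Real.norm_eq_abs]
      apply ENNReal.ofReal_le_ofReal
      have ha : 39 / 40 * |y - z| ≤ |x - y| := by
        have := abs_sub_le y x z
        rw [abs_sub_comm y x] at this
        linarith
      have hb : 1 / 2 * |y - z| ≤ |x' - y| := by
        have := abs_sub_le y x' z
        rw [abs_sub_comm y x'] at this
        linarith
      have hc : |x' - x| ≤ 21 / 10 * d := by
        have := abs_sub_le x' z x
        rw [abs_sub_comm z x] at this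
        linarith
      have hyp : 0 < |y - z| := by linarith
      have hxn : x - y ≠ 0 := by
        intro h; rw [h, abs_zero] at ha; linarith
      have hxn' : x' - y ≠ 0 := by
        intro h; rw [h, abs_zero] at hb; linarith
      have e : f y / (x - y) - f y / (x' - y) = f y * ((x' - x) / ((x - y) * (x' - y))) := by
        field_simp; ring
      rw [e, abs_mul, abs_div, abs_mul]
      calc |f y| * (|x' - x| / (|x - y| * |x' - y|)) ≤
          |f y| * ((21 / 10 * d) / ((39 / 40 * |y - z|) * (1 / 2 * |y - z|))) := by gcongr
        _ ≤ |f y| * (5 * d / |y - z| ^ 2) := by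
          gcongr |f y| * ?_
          rw [div_le_div_iff₀ (by positivity) (by positivity)]
          have : 0 < d * |y - z| ^ 2 := by positivity
          nlinarith
        _ = _ := by ring
    · rw [indicator_of_notMem hy, h0 y (not_le.1 hy)]; simp
  refine (lintegral_mono hpt).trans ?_
  rw [lintegral_indicator hms, lintegral_const_mul' _ _ ENNReal.ofReal_ne_top]
  have ht := tail_est hfm (z := z) (D := 4 * d) (by linarith) hM
  refine (mul_le_mul' le_rfl ht).trans ?_
  rw [← ENNReal.ofReal_mul (by positivity), ← ENNReal.ofReal_mul (by positivity)]
  apply ENNReal.ofReal_le_ofReal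
  apply le_of_eq
  field_simp
  ring

lemma pointwise {r A : ℝ} (hr : 1 < r) (H : Hyp r A) (hA : 0 < A) {f : ℝ → ℝ} {K : NNReal}
    (hK : LipschitzWith K f) {R : ℝ} (hR : ∀ y, R < |y| → f y = 0) {lam γ : ℝ} (hl : 0 < lam)
    (hγ : 0 < γ) (hγ1 : 8 * A * γ ≤ 1) (hγ2 : 10 * γ ≤ 1) {z d x0 x ξ : ℝ} (hd : 0 < d)
    (hx0 : |x0 - z| ≤ d)
    (hE : volume ({y | lam < |HL f y|} ∩ Ioo (x0 - d) (x0 + d)) ≤ ENNReal.ofReal (d / 2))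
    (hξ : |ξ - z| < d / 10)
    (hM : MM volume (fun y => ENNReal.ofReal |f y|) ξ ≤ ENNReal.ofReal (γ * lam))
    (hx : |x - z| < d / 10) (hHx : 4 * lam < |HL f x|) :
    lam < |Hil ((Ioo (z - 4 * d) (z + 4 * d)).indicator f) x| := by
  set J := Ioo (z - 4 * d) (z + 4 * d) with hJ
  have hfi := integrable_of_lip hK.continuous hR
  set f1 := J.indicator f with hf1
  set f2 := Jᶜ.indicator f with hf2
  have hf1i : Integrable f1 := hfi.indicator measurableSet_Ioo
  have hf2i : Integrable f2 := hfi.indicator measurableSet_Ioo.compl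
  have hsub : (fun y => f y - f2 y) = f1 := by
    funext y
    by_cases hy : y ∈ J <;> simp [hf1, hf2, hy]
  have hJabs : ∀ y, |y - z| < 4 * d → y ∈ J := by
    intro y hy
    rw [abs_lt] at hy
    exact ⟨by linarith [hy.1], by linarith [hy.2]⟩
  have h0 : ∀ y, |y - z| < 4 * d → f2 y = 0 := fun y hy =>
    indicator_of_notMem (notMem_compl_iff.2 (hJabs y hy)) _
  have hnear : ∀ u, |u - z| < 2 * d → Tendsto (TT f2 u) (𝓝[>] 0) (𝓝 (∫ y, f2 y / (u - y))) := by
    intro u hu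
    refine TT_tendsto_far hd fun y hy => h0 y ?_
    have := abs_sub_le y u z
    rw [abs_sub_comm y u] at this
    linarith
  -- norm of f1
  have hN : ∫⁻ y, ENNReal.ofReal |f1 y| ≤ ENNReal.ofReal (8 * d * (γ * lam)) := by
    have e : (fun y => ENNReal.ofReal |f1 y|) = J.indicator fun y => ENNReal.ofReal |f y| := by
      funext y; by_cases hy : y ∈ J <;> simp [hf1, hy]
    rw [e, lintegral_indicator measurableSet_Ioo]
    refine (MM_ne_zero_interval (hJabs ξ (by linarith)) (by simp)).trans ?_
    rw [Real.volume_Ioo, mul_comm, ENNReal.ofReal_mul (by positivity)]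
    refine mul_le_mul' (le_of_eq ?_) hM
    congr 1; ring
  -- choose the point
  obtain ⟨x', hx'B, hx'1, hx'2⟩ : ∃ x' ∈ Ioo (x0 - d) (x0 + d), |HL f x'| ≤ lam ∧
      |Hil f1 x'| ≤ lam := by
    by_contra hc
    push Not at hc
    have hcov : Ioo (x0 - d) (x0 + d) ⊆ ({y | lam < |HL f y|} ∩ Ioo (x0 - d) (x0 + d)) ∪
        {y | lam < |Hil f1 y|} := by
      intro y hy
      by_cases h : lam < |HL f y|
      · exact Or.inl ⟨h, hy⟩
      · exact Or.inr (hc y hy (not_lt.1 h))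
    have hw := H.weak_one hr hf1i hl
    have hw2 : volume {y | lam < |Hil f1 y|} ≤ ENNReal.ofReal d := by
      have h1 : ENNReal.ofReal lam * volume {y | lam < |Hil f1 y|} ≤
          ENNReal.ofReal lam * ENNReal.ofReal d := by
        refine hw.trans ((mul_le_mul' le_rfl hN).trans ?_)
        rw [← ENNReal.ofReal_mul hA.le, ← ENNReal.ofReal_mul hl.le]
        apply ENNReal.ofReal_le_ofReal
        have : 0 < lam * d := by positivity
        nlinarith
      rwa [ENNReal.mul_le_mul_iff_right (by simpa using hl) ENNReal.ofReal_ne_top] at h1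
    have h3 := (measure_mono hcov).trans ((measure_union_le _ _).trans (add_le_add hE hw2))
    rw [Real.volume_Ioo, ← ENNReal.ofReal_add (by positivity) (by positivity),
      ENNReal.ofReal_le_ofReal_iff (by positivity)] at h3
    linarith
  have hx'z : |x' - z| < 2 * d := by
    have h1 : |x' - x0| < d := by rw [abs_lt]; constructor <;> linarith [hx'B.1, hx'B.2]
    have := abs_sub_le x' x0 z
    linarith
  have hT' : Hil f1 x' = HL f x' - ∫ y, f2 y / (x' - y) := by
    apply Hil_of_tendsto
    refine ((TT_tendsto hK hR x').sub (hnear x' hx'z)).congr' ?_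
    filter_upwards [self_mem_nhdsWithin] with ε hε
    unfold TT
    rw [← integral_sub (integrableOn_far hfi x' hε) (integrableOn_far hf2i x' hε)]
    congr 1; funext y
    rw [← hsub]; ring
  have hL' : |∫ y, f2 y / (x' - y)| ≤ 2 * lam := by
    have : ∫ y, f2 y / (x' - y) = HL f x' - Hil f1 x' := by rw [hT']; ring
    rw [this]
    have := abs_sub (HL f x') (Hil f1 x')
    linarith
  have hM2 : MM volume (fun y => ENNReal.ofReal |f2 y|) ξ ≤ ENNReal.ofReal (γ * lam) := by
    refine (MM_mono (Eventually.of_forall fun y => ?_) ξ).trans hM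
    apply ENNReal.ofReal_le_ofReal
    have := norm_indicator_le_norm_self (s := Jᶜ) f y
    simpa using this
  have hk := kernel_est hf2i hd h0 hx hx'z hξ (by positivity) hM2
  have hLx : |∫ y, f2 y / (x - y)| ≤ 3 * lam := by
    have h1 := abs_add_le ((∫ y, f2 y / (x - y)) - ∫ y, f2 y / (x' - y)) (∫ y, f2 y / (x' - y))
    rw [sub_add_cancel] at h1
    nlinarith
  have hfin := abs_Hil_le (f := f) (fun ε hε => integrableOn_far hf2i x hε)
    (hnear x (by linarith))
  rw [hsub, Hil_eq_HL hK hR] at hfin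
  linarith

/-- kernel of the continuous Whitney decomposition -/
def wk' (d : ℝ → ℝ) (c z x : ℝ) : ℝ≥0∞ :=
  if |x - z| < c * d z then ENNReal.ofReal (1 / d z) else 0

lemma measurable_wk' {d : ℝ → ℝ} (hd : Measurable d) (c : ℝ) :
    Measurable (fun p : ℝ × ℝ => wk' d c p.1 p.2) := by
  unfold wk'
  refine Measurable.ite ?_ ?_ measurable_const
  · exact measurableSet_lt (by fun_prop) (by fun_prop)
  · fun_prop

lemma wk'_lower {Ω : Set ℝ} (hne : Ωᶜ.Nonempty) (hO : IsOpen Ω) {x : ℝ} (hx : x ∈ Ω) :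
    ENNReal.ofReal (1 / 6) ≤
      ∫⁻ z in Ω, wk' (fun z => Metric.infDist z Ωᶜ) (1 / 10) z x := by
  set d := fun z => Metric.infDist z Ωᶜ with hd
  have hD : 0 < d x := (hO.isClosed_compl.notMem_iff_infDist_pos hne).1 (by simpa using hx)
  have hlip : ∀ u v, d u ≤ d v + |u - v| := fun u v => by
    have := Metric.infDist_le_infDist_add_dist (s := Ωᶜ) (x := u) (y := v)
    rwa [Real.dist_eq] at this
  have hsub : Ioo (x - d x / 11) (x + d x / 11) ⊆ Ω := by
    intro z hz
    have h1 : |x - z| < d x / 11 := by rw [abs_lt]; constructor <;> linarith [hz.1, hz.2]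
    have h2 := hlip x z
    have h3 : 0 < d z := by linarith
    by_contra hc
    exact (hO.isClosed_compl.notMem_iff_infDist_pos hne).2 h3 hc
  calc ENNReal.ofReal (1 / 6) = ∫⁻ z in Ioo (x - d x / 11) (x + d x / 11),
        ENNReal.ofReal (11 / (12 * d x)) := by
        rw [setLIntegral_const, Real.volume_Ioo, ← ENNReal.ofReal_mul (by positivity)]
        congr 1; field_simp; ring
    _ ≤ ∫⁻ z in Ioo (x - d x / 11) (x + d x / 11), wk' d (1 / 10) z x := by
        refine setLIntegral_mono' measurableSet_Ioo fun z hz => ?_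
        have h1 : |x - z| < d x / 11 := by rw [abs_lt]; constructor <;> linarith [hz.1, hz.2]
        have h2 := hlip x z
        have h4 := hlip z x
        rw [abs_sub_comm] at h4
        have h3 : 0 < d z := by linarith
        unfold wk'
        rw [if_pos (by linarith)]
        apply ENNReal.ofReal_le_ofReal
        rw [div_le_div_iff₀ (by positivity) h3]
        linarith
    _ ≤ _ := lintegral_mono_set hsub

lemma wk'_upper {Ω : Set ℝ} (hne : Ωᶜ.Nonempty) (hO : IsOpen Ω) (x : ℝ) :
    ∫⁻ z in Ω, wk' (fun z => Metric.infDist z Ωᶜ) (1 / 5) z x ≤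
      Ω.indicator (fun _ => ENNReal.ofReal (2 / 3)) x := by
  set d := fun z => Metric.infDist z Ωᶜ with hd
  have hlip : ∀ u v, d u ≤ d v + |u - v| := fun u v => by
    have := Metric.infDist_le_infDist_add_dist (s := Ωᶜ) (x := u) (y := v)
    rwa [Real.dist_eq] at this
  by_cases hx : x ∈ Ω
  · have hD : 0 < d x := (hO.isClosed_compl.notMem_iff_infDist_pos hne).1 (by simpa using hx)
    rw [indicator_of_mem hx]
    calc _ ≤ ∫⁻ z, wk' d (1 / 5) z x := setLIntegral_le_lintegral _ _
      _ ≤ ∫⁻ z, (Ioo (x - d x / 4) (x + d x / 4)).indicator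
          (fun _ => ENNReal.ofReal (4 / (3 * d x))) z := by
          refine lintegral_mono fun z => ?_
          unfold wk'
          split_ifs with hc
          · have h2 := hlip x z
            have h4 := hlip z x
            rw [abs_sub_comm] at h4
            have h5 : |x - z| < d x / 4 := by linarith
            have h3 : 0 < d z := by linarith
            rw [indicator_of_mem]
            · apply ENNReal.ofReal_le_ofReal
              rw [div_le_div_iff₀ h3 (by positivity)]
              linarith
            · rw [abs_lt] at h5
              exact ⟨by linarith [h5.2], by linarith [h5.1]⟩
          · exact zero_le
      _ = _ := by
          rw [lintegral_indicator_const measurableSet_Ioo, Real.volume_Ioo,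
            ← ENNReal.ofReal_mul (by positivity)]
          congr 1; field_simp; ring
  · rw [indicator_of_notMem hx]
    refine le_of_eq ?_
    rw [lintegral_eq_zero_iff']
    · refine Eventually.of_forall fun z => ?_
      show (if |x - z| < 1 / 5 * d z then ENNReal.ofReal (1 / d z) else 0) = 0
      rw [if_neg]
      intro hc
      have h2 := hlip z x
      have h0 : d x = 0 := Metric.infDist_zero_of_mem hx
      rw [abs_sub_comm] at h2
      have := abs_nonneg (x - z)
      linarith
    · have hdm : Measurable d := (Metric.continuous_infDist_pt _).measurable
      exact ((measurable_wk' hdm (1/5)).comp (measurable_id.prodMk measurable_const)).aemeasurable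

lemma whitney {Ω : Set ℝ} (hne : Ωᶜ.Nonempty) (hO : IsOpen Ω) (m : Measure ℝ) [SFinite m]
    {F : Set ℝ} (hF : MeasurableSet F) (hFO : F ⊆ Ω) {g : ℝ → ℝ≥0∞} (hg : Measurable g)
    (hloc : ∀ z ∈ Ω, m (F ∩ Ioo (z - Metric.infDist z Ωᶜ / 10) (z + Metric.infDist z Ωᶜ / 10)) ≤
      ∫⁻ y in Ioo (z - Metric.infDist z Ωᶜ / 5) (z + Metric.infDist z Ωᶜ / 5), g y ∂m) :
    m F ≤ 4 * ∫⁻ y in Ω, g y ∂m := by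
  set d := fun z => Metric.infDist z Ωᶜ with hd
  have hdm : Measurable d := (Metric.continuous_infDist_pt _).measurable
  have habs : ∀ x z c : ℝ, |x - z| < c ↔ x ∈ Ioo (z - c) (z + c) := by
    intro x z c
    rw [abs_lt]
    constructor
    · rintro ⟨h1, h2⟩; exact ⟨by linarith, by linarith⟩
    · rintro ⟨h1, h2⟩; exact ⟨by linarith, by linarith⟩
  have key : ENNReal.ofReal (1 / 6) * m F ≤ ENNReal.ofReal (2 / 3) * ∫⁻ y in Ω, g y ∂m := by
    calc ENNReal.ofReal (1 / 6) * m F = ∫⁻ x in F, ENNReal.ofReal (1 / 6) ∂m :=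
          (setLIntegral_const _ _).symm
      _ ≤ ∫⁻ x in F, (∫⁻ z in Ω, wk' d (1 / 10) z x) ∂m :=
          setLIntegral_mono' hF fun x hx => wk'_lower hne hO (hFO hx)
      _ = ∫⁻ z in Ω, (∫⁻ x in F, wk' d (1 / 10) z x ∂m) := by
          rw [lintegral_lintegral_swap]
          exact ((measurable_wk' hdm _).comp measurable_swap).aemeasurable
      _ ≤ ∫⁻ z in Ω, (∫⁻ x, wk' d (1 / 5) z x * g x ∂m) := by
          refine setLIntegral_mono' hO.measurableSet fun z hz => ?_
          have e1 : ∫⁻ x in F, wk' d (1 / 10) z x ∂m =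
              ENNReal.ofReal (1 / d z) * m (F ∩ Ioo (z - d z / 10) (z + d z / 10)) := by
            have : ∀ x, wk' d (1 / 10) z x = (Ioo (z - d z / 10) (z + d z / 10)).indicator
                (fun _ => ENNReal.ofReal (1 / d z)) x := by
              intro x
              unfold wk'
              rw [show 1 / 10 * d z = d z / 10 by ring]
              by_cases hx : |x - z| < d z / 10
              · rw [if_pos hx, indicator_of_mem ((habs _ _ _).1 hx)]
              · rw [if_neg hx, indicator_of_notMem (fun h => hx ((habs _ _ _).2 h))]
            simp_rw [this]
            rw [lintegral_indicator_const measurableSet_Ioo,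
              Measure.restrict_apply measurableSet_Ioo, inter_comm]
          have e2 : ∫⁻ x, wk' d (1 / 5) z x * g x ∂m =
              ENNReal.ofReal (1 / d z) * ∫⁻ y in Ioo (z - d z / 5) (z + d z / 5), g y ∂m := by
            have : ∀ x, wk' d (1 / 5) z x * g x = (Ioo (z - d z / 5) (z + d z / 5)).indicator
                (fun x => ENNReal.ofReal (1 / d z) * g x) x := by
              intro x
              unfold wk'
              rw [show 1 / 5 * d z = d z / 5 by ring]
              by_cases hx : |x - z| < d z / 5
              · rw [if_pos hx, indicator_of_mem ((habs _ _ _).1 hx)]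
              · rw [if_neg hx, indicator_of_notMem (fun h => hx ((habs _ _ _).2 h)), zero_mul]
            simp_rw [this]
            rw [lintegral_indicator measurableSet_Ioo,
              lintegral_const_mul' _ _ ENNReal.ofReal_ne_top]
          rw [e1, e2]
          exact mul_le_mul' le_rfl (hloc z hz)
      _ = ∫⁻ x, (∫⁻ z in Ω, wk' d (1 / 5) z x * g x) ∂m := by
          rw [lintegral_lintegral_swap]
          exact ((measurable_wk' hdm _).mul (hg.comp measurable_snd)).aemeasurable
      _ = ∫⁻ x, (∫⁻ z in Ω, wk' d (1 / 5) z x) * g x ∂m := by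
          refine lintegral_congr fun x => ?_
          rw [lintegral_mul_const]
          exact (measurable_wk' hdm _).comp (measurable_id.prodMk measurable_const)
      _ ≤ ∫⁻ x, Ω.indicator (fun x => ENNReal.ofReal (2 / 3) * g x) x ∂m := by
          refine lintegral_mono fun x => ?_
          have := wk'_upper hne hO x
          refine (mul_le_mul' this le_rfl).trans (le_of_eq ?_)
          by_cases hx : x ∈ Ω <;> simp [hx]
      _ = _ := by
          rw [lintegral_indicator hO.measurableSet, lintegral_const_mul' _ _ ENNReal.ofReal_ne_top]
  calc m F = 6 * (ENNReal.ofReal (1 / 6) * m F) := by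
        rw [← mul_assoc, show (6 : ℝ≥0∞) = ENNReal.ofReal 6 by simp,
          ← ENNReal.ofReal_mul (by norm_num)]
        norm_num
    _ ≤ 6 * (ENNReal.ofReal (2 / 3) * ∫⁻ y in Ω, g y ∂m) := mul_le_mul' le_rfl key
    _ = _ := by
        rw [← mul_assoc, show (6 : ℝ≥0∞) = ENNReal.ofReal 6 by simp,
          ← ENNReal.ofReal_mul (by norm_num)]
        norm_num

lemma good_local {r A : ℝ} (hr : 1 < r) (H : Hyp r A) (hA : 0 < A) {W : ℝ → ℝ} (h : A1W r W)
    {f : ℝ → ℝ} {K : NNReal} (hK : LipschitzWith K f) {R : ℝ} (hR : ∀ y, R < |y| → f y = 0)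
    {lam γ : ℝ} (hl : 0 < lam) (hγ : 0 < γ) (hγ1 : 8 * A * γ ≤ 1) (hγ2 : 10 * γ ≤ 1)
    {z d x0 : ℝ} (hd : 0 < d) (hx0 : |x0 - z| ≤ d)
    (hE : volume ({y | lam < |HL f y|} ∩ Ioo (x0 - d) (x0 + d)) ≤ ENNReal.ofReal (d / 2)) :
    wm W (({x | 4 * lam < |HL f x|} ∩
        {x | MM volume (fun y => ENNReal.ofReal |f y|) x ≤ ENNReal.ofReal (γ * lam)}) ∩
        Ioo (z - d / 10) (z + d / 10)) ≤
      ∫⁻ y in Ioo (z - d / 5) (z + d / 5),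
        (ENNReal.ofReal (11 * A / lam) * ENNReal.ofReal |f y| + ENNReal.ofReal (880 * A * γ)) ∂wm W := by
  set F := {x | 4 * lam < |HL f x|} ∩
        {x | MM volume (fun y => ENNReal.ofReal |f y|) x ≤ ENNReal.ofReal (γ * lam)} with hFdef
  rcases (F ∩ Ioo (z - d / 10) (z + d / 10)).eq_empty_or_nonempty with he | ⟨ξ, hξ⟩
  · rw [he]; simp
  have habs : ∀ x, x ∈ Ioo (z - d / 10) (z + d / 10) → |x - z| < d / 10 := by
    intro x hx
    rw [abs_lt]; constructor <;> linarith [hx.1, hx.2]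
  have hfi : Integrable f := integrable_of_lip hK.continuous hR
  set f1 := (Ioo (z - 4 * d) (z + 4 * d)).indicator f with hf1
  have hf1i : Integrable f1 := hfi.indicator measurableSet_Ioo
  have hsub : F ∩ Ioo (z - d / 10) (z + d / 10) ⊆
      {x | lam < |Hil f1 x|} ∩ Ioo (z - d / 10) (z + d / 10) := by
    rintro x ⟨hxF, hxI⟩
    refine ⟨?_, hxI⟩
    exact pointwise hr H hA hK hR hl hγ hγ1 hγ2 hd hx0 hE (habs ξ hξ.2) hξ.1.2 (habs x hxI) hxF.1
  have hloc := Hyp.local_est hr H h hf1i hl (z := z) (ρ := d / 10)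
  have hf1abs : ∀ x, ENNReal.ofReal |f1 x| =
      (Ioo (z - 4 * d) (z + 4 * d)).indicator (fun y => ENNReal.ofReal |f y|) x := by
    intro x
    by_cases hx : x ∈ Ioo (z - 4 * d) (z + 4 * d) <;> simp [hf1, hx]
  have hInt0 : ∫⁻ x, ENNReal.ofReal |f1 x| ≤ ENNReal.ofReal (γ * lam) * ENNReal.ofReal (8 * d) := by
    simp_rw [hf1abs]
    rw [lintegral_indicator measurableSet_Ioo]
    have hm : ξ ∈ Ioo (z - 4 * d) (z + 4 * d) := ⟨by linarith [hξ.2.1], by linarith [hξ.2.2]⟩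
    refine (MM_ne_zero_interval (μ := volume) hm (by rw [Real.volume_Ioo]; exact ENNReal.ofReal_ne_top)).trans ?_
    rw [Real.volume_Ioo, show z + 4 * d - (z - 4 * d) = 8 * d by ring]
    exact mul_le_mul' hξ.1.2 le_rfl
  have hInt2 : ∫⁻ x in Ioo (z - 2 * (d / 10)) (z + 2 * (d / 10)), ENNReal.ofReal |f1 x| ∂wm W ≤
      ∫⁻ x in Ioo (z - d / 5) (z + d / 5), ENNReal.ofReal |f x| ∂wm W := by
    rw [show 2 * (d / 10) = d / 5 by ring]
    refine lintegral_mono fun x => ?_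
    rw [hf1abs]
    exact indicator_le_self _ _ x
  have hm2 : wm W (Ioo (z - d / 10) (z + d / 10)) ≤ wm W (Ioo (z - d / 5) (z + d / 5)) :=
    measure_mono (Ioo_subset_Ioo (by linarith) (by linarith))
  have hc : (0:ℝ) < d / 5 * lam := by positivity
  rw [← ENNReal.mul_le_mul_iff_right (a := ENNReal.ofReal (d / 5 * lam))
    (by simpa using hc) ENNReal.ofReal_ne_top]
  rw [lintegral_add_right _ measurable_const, lintegral_const_mul' _ _ ENNReal.ofReal_ne_top,
    setLIntegral_const, mul_add]
  calc _ ≤ ENNReal.ofReal (d / 5 * lam) *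
        wm W ({x | lam < |Hil f1 x|} ∩ Ioo (z - d / 10) (z + d / 10)) :=
        mul_le_mul' le_rfl (measure_mono hsub)
    _ = ENNReal.ofReal (2 * (d / 10)) * (ENNReal.ofReal lam *
        wm W ({x | lam < |Hil f1 x|} ∩ Ioo (z - d / 10) (z + d / 10))) := by
        rw [← mul_assoc, ← ENNReal.ofReal_mul (by positivity)]; congr 2; ring
    _ ≤ _ := hloc
    _ ≤ ENNReal.ofReal A * (11 * (ENNReal.ofReal (2 * (d / 10)) *
          ∫⁻ x in Ioo (z - d / 5) (z + d / 5), ENNReal.ofReal |f x| ∂wm W) +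
          22 * (wm W (Ioo (z - d / 5) (z + d / 5)) *
            (ENNReal.ofReal (γ * lam) * ENNReal.ofReal (8 * d)))) :=
        mul_le_mul' le_rfl (add_le_add (mul_le_mul' le_rfl (mul_le_mul' le_rfl hInt2))
          (mul_le_mul' le_rfl (mul_le_mul' hm2 hInt0)))
    _ = _ := by
        rw [mul_add]
        congr 1
        · rw [← mul_assoc, ← mul_assoc, ← mul_assoc, show (11 : ℝ≥0∞) = ENNReal.ofReal 11 by simp,
            ← ENNReal.ofReal_mul hA.le, ← ENNReal.ofReal_mul (by positivity),
            ← ENNReal.ofReal_mul (by positivity)]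
          congr 2; field_simp; try ring
        · rw [mul_comm (wm W _), ← mul_assoc, ← mul_assoc, ← mul_assoc,
            show (22 : ℝ≥0∞) = ENNReal.ofReal 22 by simp,
            ← ENNReal.ofReal_mul (by positivity), ← ENNReal.ofReal_mul (by positivity),
            ← ENNReal.ofReal_mul (by positivity),
            ← mul_assoc (ENNReal.ofReal (d / 5 * lam)), ← ENNReal.ofReal_mul (by positivity)]
          congr 2; ring

/-- good lambda inequality, first form -/
lemma good_lam {r A : ℝ} (hr : 1 < r) (H : Hyp r A) (hA : 0 < A) {W : ℝ → ℝ} (h : A1W r W)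
    {f : ℝ → ℝ} {K : NNReal} (hK : LipschitzWith K f) {R : ℝ} (hR : ∀ y, R < |y| → f y = 0)
    {lam γ : ℝ} (hl : 0 < lam) (hγ : 0 < γ) (hγ1 : 8 * A * γ ≤ 1) (hγ2 : 10 * γ ≤ 1) :
    ∃ Ω : Set ℝ, MeasurableSet Ω ∧ wm W Ω ≤ 88 * wm W {x | lam < |HL f x|} ∧
    wm W ({x | 4 * lam < |HL f x|} ∩
        {x | MM volume (fun y => ENNReal.ofReal |f y|) x ≤ ENNReal.ofReal (γ * lam)}) ≤
      4 * ∫⁻ y in Ω,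
        (ENNReal.ofReal (11 * A / lam) * ENNReal.ofReal |f y| + ENNReal.ofReal (880 * A * γ)) ∂wm W := by
  have hfi : Integrable f := integrable_of_lip hK.continuous hR
  have hcont := HL_continuous hK hR
  set E := {x | lam < |HL f x|} with hEdef
  have hEo : IsOpen E := isOpen_lt continuous_const hcont.abs
  have hEm := hEo.measurableSet
  set Ω := {x | (1/4 : ℝ≥0∞) < MM volume (E.indicator fun _ => 1) x} with hΩ
  have hΩo : IsOpen Ω := isOpen_lt_MM _ _ _
  have hEΩ : E ⊆ Ω := by
    intro x hx
    obtain ⟨ε, hε, hb⟩ := Metric.isOpen_iff.1 hEo x hx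
    rw [Real.ball_eq_Ioo] at hb
    show _ < MM volume _ x
    refine lt_of_lt_of_le ?_ (le_MM volume _ (show x ∈ Ioo (x - ε) (x + ε) from ⟨by linarith, by linarith⟩))
    rw [lintegral_indicator_const hEm, Measure.restrict_apply hEm, inter_eq_self_of_subset_right hb,
      one_mul, ENNReal.inv_mul_cancel]
    · rw [one_div]; exact ENNReal.inv_lt_one.2 (by norm_num)
    · rw [Real.volume_Ioo]; simp; linarith
    · rw [Real.volume_Ioo]; exact ENNReal.ofReal_ne_top
  have hEfin : volume E ≠ ⊤ := by
    have h1 := Hyp.weak_one hr H hfi hl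
    have h2 : {x | lam < |Hil f x|} = E := by
      ext x; show lam < |Hil f x| ↔ lam < |HL f x|; rw [Hil_eq_HL hK hR]
    rw [h2] at h1
    intro ht
    rw [ht, ENNReal.mul_top (by simpa using hl)] at h1
    have h3 : ∫⁻ x, ENNReal.ofReal |f x| < ⊤ := by
      have := hfi.abs.lintegral_lt_top
      simpa using this
    exact absurd h1 (not_le.2 (ENNReal.mul_lt_top ENNReal.ofReal_lt_top h3))
  have hΩne : Ωᶜ.Nonempty := by
    by_contra hcon
    rw [not_nonempty_iff_eq_empty, compl_empty_iff] at hcon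
    have h1 := weak_type volume (h := E.indicator fun _ => (1:ℝ≥0∞)) (by
      exact (measurable_const.indicator hEm).aemeasurable) (1/4)
    rw [← hΩ, hcon, lintegral_indicator_const hEm, Real.volume_univ, ENNReal.mul_top (by norm_num), one_mul] at h1
    exact absurd h1 (not_le.2 (ENNReal.mul_lt_top (by norm_num) hEfin.lt_top))
  refine ⟨Ω, hΩo.measurableSet, h.weak_set hEm, ?_⟩
  have hFm : MeasurableSet ({x | 4 * lam < |HL f x|} ∩
        {x | MM volume (fun y => ENNReal.ofReal |f y|) x ≤ ENNReal.ofReal (γ * lam)}) := by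
    refine MeasurableSet.inter (isOpen_lt continuous_const hcont.abs).measurableSet ?_
    exact measurableSet_le (measurable_MM _ _) measurable_const
  refine whitney hΩne hΩo (wm W) hFm ?_ ?_ ?_
  · intro x hx
    apply hEΩ
    have : 4 * lam < |HL f x| := hx.1
    show lam < |HL f x|
    linarith
  · have := hK.continuous.measurable
    fun_prop
  · intro z hz
    have hd : 0 < Metric.infDist z Ωᶜ := (hΩo.isClosed_compl.notMem_iff_infDist_pos hΩne).1 (by simpa using hz)
    obtain ⟨x0, hx0, hx0d⟩ := hΩo.isClosed_compl.exists_infDist_eq_dist hΩne z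
    refine good_local hr H hA h hK hR hl hγ hγ1 hγ2 hd (x0 := x0) ?_ ?_
    · rw [hx0d, Real.dist_eq, abs_sub_comm]
    · set d := Metric.infDist z Ωᶜ
      have h1 : MM volume (E.indicator fun _ => (1:ℝ≥0∞)) x0 ≤ 1/4 := by
        have : ¬ (1/4 : ℝ≥0∞) < MM volume (E.indicator fun _ => 1) x0 := hx0
        exact not_lt.1 this
      have h2 := MM_ne_zero_interval (μ := volume) (g := E.indicator fun _ => (1:ℝ≥0∞))
        (show x0 ∈ Ioo (x0 - d) (x0 + d) from ⟨by linarith, by linarith⟩) (by rw [Real.volume_Ioo]; exact ENNReal.ofReal_ne_top)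
      rw [lintegral_indicator_const hEm, Measure.restrict_apply hEm, one_mul] at h2
      refine h2.trans ((mul_le_mul' h1 le_rfl).trans (le_of_eq ?_))
      rw [Real.volume_Ioo, show (1/4 : ℝ≥0∞) = ENNReal.ofReal (1/4) by
        rw [ENNReal.ofReal_div_of_pos (by norm_num)]; simp, ← ENNReal.ofReal_mul (by norm_num)]
      congr 1; ring

lemma good_step {r A : ℝ} (hr : 1 < r) (H : Hyp r A) (hA : 0 < A) {W : ℝ → ℝ} (h : A1W r W)
    {f : ℝ → ℝ} {K : NNReal} (hK : LipschitzWith K f) {R : ℝ} (hR : ∀ y, R < |y| → f y = 0)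
    {lam : ℝ} (hl : 0 < lam) :
    ENNReal.ofReal ((4 * lam) ^ 2) * wm W {x | 4 * lam < |HL f x|} ≤
      ENNReal.ofReal (13000000000000000000 * A ^ 2) * ∫⁻ x, ENNReal.ofReal |f x| ^ (2:ℝ) ∂wm W +
      ENNReal.ofReal (1 / 2) * (ENNReal.ofReal (lam ^ 2) * wm W {x | lam < |HL f x|}) := by
  have hA34 := Hyp.lower hr H hA
  set γ : ℝ := 1 / (20000000 * A) with hγdef
  set τ : ℝ := 1 / (250000 * A) with hτdef
  have hγ : 0 < γ := by positivity
  have hτ : 0 < τ := by positivity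
  have hAγ : A * γ = 1 / 20000000 := by rw [hγdef]; field_simp
  have hAτ : A * τ = 1 / 250000 := by rw [hτdef]; field_simp
  have hγ1 : 8 * A * γ ≤ 1 := by rw [mul_assoc, hAγ]; norm_num
  have hγ2 : 10 * γ ≤ 1 := by nlinarith
  obtain ⟨Ω, hΩm, hΩ, hF⟩ := good_lam hr H hA h hK hR hl hγ hγ1 hγ2
  set F := {x | 4 * lam < |HL f x|} ∩
        {x | MM volume (fun y => ENNReal.ofReal |f y|) x ≤ ENNReal.ofReal (γ * lam)} with hFdef
  set m := wm W with hm
  set E := {x | lam < |HL f x|} with hE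
  set X := ∫⁻ x, ENNReal.ofReal |f x| ^ (2:ℝ) ∂m with hX
  set G := {x | ENNReal.ofReal (γ * lam) < MM volume (fun y => ENNReal.ofReal |f y|) x} with hG
  have hfm : Measurable f := hK.continuous.measurable
  have hsub : {x | 4 * lam < |HL f x|} ⊆ F ∪ G := by
    intro x hx
    rcases le_or_gt (MM volume (fun y => ENNReal.ofReal |f y|) x) (ENNReal.ofReal (γ * lam)) with h1 | h1
    · exact Or.inl ⟨hx, h1⟩
    · exact Or.inr h1
  have h1 : ENNReal.ofReal (lam ^ 2) * m G ≤ ENNReal.ofReal (1936 / γ ^ 2) * X := by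
    have := h.weak_two (g := fun y => ENNReal.ofReal |f y|) (by fun_prop) (ENNReal.ofReal (γ * lam))
    rw [ENNReal.ofReal_rpow_of_pos (by positivity)] at this
    calc ENNReal.ofReal (lam ^ 2) * m G
        = ENNReal.ofReal (1 / γ ^ 2) * (ENNReal.ofReal ((γ * lam) ^ (2:ℝ)) * m G) := by
          rw [← mul_assoc, ← ENNReal.ofReal_mul (by positivity)]
          congr 2
          rw [Real.rpow_two]; field_simp
      _ ≤ ENNReal.ofReal (1 / γ ^ 2) * (1936 * X) := mul_le_mul' le_rfl this
      _ = _ := by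
          rw [← mul_assoc, show (1936 : ℝ≥0∞) = ENNReal.ofReal 1936 by simp,
            ← ENNReal.ofReal_mul (by positivity)]
          congr 2; ring
  have h2 : ∫⁻ y in Ω, ENNReal.ofReal |f y| ∂m ≤
      ENNReal.ofReal (τ * lam) * m Ω + ENNReal.ofReal (1 / (τ * lam)) * X := by
    calc ∫⁻ y in Ω, ENNReal.ofReal |f y| ∂m
        ≤ ∫⁻ y in Ω, (ENNReal.ofReal (τ * lam) +
            ENNReal.ofReal (1 / (τ * lam)) * ENNReal.ofReal |f y| ^ (2:ℝ)) ∂m := by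
          refine lintegral_mono fun y => ?_
          rw [ENNReal.ofReal_rpow_of_nonneg (abs_nonneg _) (by norm_num),
            ← ENNReal.ofReal_mul (by positivity), ← ENNReal.ofReal_add (by positivity) (by positivity)]
          apply ENNReal.ofReal_le_ofReal
          rw [Real.rpow_two]
          have hp : 0 < τ * lam := by positivity
          rw [one_div, inv_mul_eq_div, ← sub_le_iff_le_add', le_div_iff₀ hp]
          nlinarith [sq_nonneg (|f y| - τ * lam), abs_nonneg (f y), mul_nonneg (abs_nonneg (f y)) hp.le]
      _ = ENNReal.ofReal (τ * lam) * m Ω + ENNReal.ofReal (1 / (τ * lam)) *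
            ∫⁻ y in Ω, ENNReal.ofReal |f y| ^ (2:ℝ) ∂m := by
          rw [lintegral_add_left measurable_const, setLIntegral_const,
            lintegral_const_mul' _ _ ENNReal.ofReal_ne_top]
      _ ≤ _ := add_le_add le_rfl (mul_le_mul' le_rfl (setLIntegral_le_lintegral _ _))
  rw [lintegral_add_right _ measurable_const, lintegral_const_mul' _ _ ENNReal.ofReal_ne_top,
    setLIntegral_const] at hF
  have h3 : ENNReal.ofReal (lam ^ 2) * m F ≤ ENNReal.ofReal (44 * A / τ) * X +
      ENNReal.ofReal ((44 * A * τ + 3520 * A * γ) * lam ^ 2) * m Ω := by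
    calc ENNReal.ofReal (lam ^ 2) * m F
        ≤ ENNReal.ofReal (lam ^ 2) * (4 * (ENNReal.ofReal (11 * A / lam) *
          (ENNReal.ofReal (τ * lam) * m Ω + ENNReal.ofReal (1 / (τ * lam)) * X) +
          ENNReal.ofReal (880 * A * γ) * m Ω)) :=
          mul_le_mul' le_rfl (hF.trans (mul_le_mul' le_rfl (add_le_add (mul_le_mul' le_rfl h2) le_rfl)))
      _ = ENNReal.ofReal (lam ^ 2 * 4 * (11 * A / lam) * (1 / (τ * lam))) * X +
          (ENNReal.ofReal (lam ^ 2 * 4 * (11 * A / lam) * (τ * lam)) +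
            ENNReal.ofReal (lam ^ 2 * 4 * (880 * A * γ))) * m Ω := by
          rw [ENNReal.ofReal_mul (q := 1 / (τ * lam)) (by positivity),
            ENNReal.ofReal_mul (q := τ * lam) (by positivity),
            ENNReal.ofReal_mul (q := 11 * A / lam) (by positivity),
            ENNReal.ofReal_mul (q := 880 * A * γ) (by positivity),
            ENNReal.ofReal_mul (q := 4) (by positivity),
            show ENNReal.ofReal 4 = (4:ℝ≥0∞) by simp]
          ring
      _ = _ := by
          rw [← ENNReal.ofReal_add (by positivity) (by positivity)]
          congr 3
          · field_simp; try ring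
          · field_simp; try ring
  have h4 : ENNReal.ofReal (lam ^ 2) * m {x | 4 * lam < |HL f x|} ≤
      ENNReal.ofReal (1936 / γ ^ 2 + 44 * A / τ) * X +
      ENNReal.ofReal ((44 * A * τ + 3520 * A * γ) * lam ^ 2) * (88 * m E) := by
    calc _ ≤ ENNReal.ofReal (lam ^ 2) * (m F + m G) :=
          mul_le_mul' le_rfl ((measure_mono hsub).trans (measure_union_le _ _))
      _ ≤ (ENNReal.ofReal (44 * A / τ) * X +
          ENNReal.ofReal ((44 * A * τ + 3520 * A * γ) * lam ^ 2) * (88 * m E)) +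
          ENNReal.ofReal (1936 / γ ^ 2) * X := by
          rw [mul_add]
          exact add_le_add (h3.trans (add_le_add le_rfl (mul_le_mul' le_rfl hΩ))) h1
      _ = _ := by
          rw [ENNReal.ofReal_add (by positivity) (by positivity)]; ring
  calc ENNReal.ofReal ((4 * lam) ^ 2) * m {x | 4 * lam < |HL f x|}
      = ENNReal.ofReal 16 * (ENNReal.ofReal (lam ^ 2) * m {x | 4 * lam < |HL f x|}) := by
        rw [← mul_assoc, ← ENNReal.ofReal_mul (by norm_num)]; congr 2; ring
    _ ≤ ENNReal.ofReal 16 * (ENNReal.ofReal (1936 / γ ^ 2 + 44 * A / τ) * X +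
      ENNReal.ofReal ((44 * A * τ + 3520 * A * γ) * lam ^ 2) * (88 * m E)) := mul_le_mul' le_rfl h4
    _ = ENNReal.ofReal (16 * (1936 / γ ^ 2 + 44 * A / τ)) * X +
        ENNReal.ofReal (16 * 88 * (44 * A * τ + 3520 * A * γ)) * (ENNReal.ofReal (lam ^ 2) * m E) := by
        rw [ENNReal.ofReal_mul (p := 16 * 88) (by norm_num), ENNReal.ofReal_mul (p := 16) (by norm_num),
          ENNReal.ofReal_mul (p := 16) (by norm_num), ENNReal.ofReal_mul (q := lam ^ 2) (by positivity),
          show ENNReal.ofReal 88 = (88:ℝ≥0∞) by simp]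
        ring
    _ ≤ _ := by
        refine add_le_add (mul_le_mul' (ENNReal.ofReal_le_ofReal ?_) le_rfl)
          (mul_le_mul' (ENNReal.ofReal_le_ofReal ?_) le_rfl)
        · rw [hγdef, hτdef]
          have : 16 * (1936 / (1 / (20000000 * A)) ^ 2 + 44 * A / (1 / (250000 * A))) =
            16 * (1936 * 400000000000000 + 44 * 250000) * A ^ 2 := by field_simp; ring
          rw [this]
          have := sq_nonneg A
          nlinarith
        · rw [mul_assoc 44, mul_assoc 3520, hAγ, hAτ]; norm_num

lemma weak_two_lip {r A : ℝ} (hr : 1 < r) (H : Hyp r A) (hA : 0 < A) {W : ℝ → ℝ} (h : A1W r W)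
    {f : ℝ → ℝ} {K : NNReal} (hK : LipschitzWith K f) {R : ℝ} (hR : ∀ y, R < |y| → f y = 0)
    {lam : ℝ} (hl : 0 < lam) :
    ENNReal.ofReal (lam ^ 2) * wm W {x | lam < |HL f x|} ≤
      ENNReal.ofReal (26000000000000000000 * A ^ 2) * ∫⁻ x, ENNReal.ofReal |f x| ^ (2:ℝ) ∂wm W := by
  have hfi : Integrable f := integrable_of_lip hK.continuous hR
  set C := ENNReal.ofReal (13000000000000000000 * A ^ 2) * ∫⁻ x, ENNReal.ofReal |f x| ^ (2:ℝ) ∂wm W with hC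
  set Y : ℝ≥0∞ := ⨆ (t : ℝ) (_ : 0 < t) (_ : t ≤ lam),
    ENNReal.ofReal (t ^ 2) * wm W {x | t < |HL f x|} with hY
  have hQ : ∀ t, 0 < t → t ≤ lam → ENNReal.ofReal (t ^ 2) * wm W {x | t < |HL f x|} ≤ Y := by
    intro t h0 h1
    exact le_iSup_of_le t (le_iSup_of_le h0 (le_iSup_of_le h1 le_rfl))
  have hYle : Y ≤ C + ENNReal.ofReal (1/2) * Y := by
    refine iSup_le fun t => iSup_le fun h0 => iSup_le fun h1 => ?_
    have h2 := good_step hr H hA h hK hR (lam := t / 4) (by positivity)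
    rw [show 4 * (t / 4) = t by ring] at h2
    exact h2.trans (add_le_add le_rfl (mul_le_mul' le_rfl (hQ _ (by positivity) (by linarith))))
  have hYfin : Y ≠ ⊤ := by
    have hb : Y ≤ ENNReal.ofReal lam * (ENNReal.ofReal A * (11 * ∫⁻ x, ENNReal.ofReal |f x| ∂wm W)) := by
      refine iSup_le fun t => iSup_le fun h0 => iSup_le fun h1 => ?_
      have h2 := Hyp.weak_A1 hr H h hfi h0
      have h3 : {x | t < |Hil f x|} = {x | t < |HL f x|} := by
        ext x; show t < |Hil f x| ↔ t < |HL f x|; rw [Hil_eq_HL hK hR]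
      rw [h3] at h2
      rw [pow_two, ENNReal.ofReal_mul h0.le, mul_assoc]
      exact mul_le_mul' (ENNReal.ofReal_le_ofReal h1) h2
    refine ne_top_of_le_ne_top ?_ hb
    have := (h.lint_lt_top hfi).ne
    finiteness
  have hfin : Y ≤ 2 * C := by
    have e : Y = ENNReal.ofReal (1/2) * Y + ENNReal.ofReal (1/2) * Y := by
      rw [← add_mul, ← ENNReal.ofReal_add (by norm_num) (by norm_num)]; norm_num
    have h5 : ENNReal.ofReal (1/2) * Y ≤ C := by
      have h6 : ENNReal.ofReal (1/2) * Y + ENNReal.ofReal (1/2) * Y ≤ C + ENNReal.ofReal (1/2) * Y := by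
        rw [← e]; exact hYle
      exact (ENNReal.add_le_add_iff_right (by finiteness)).1 h6
    rw [e, two_mul]
    exact add_le_add h5 h5
  refine (hQ lam hl le_rfl).trans (hfin.trans (le_of_eq ?_))
  rw [hC, ← mul_assoc, show (2 : ℝ≥0∞) = ENNReal.ofReal 2 by simp, ← ENNReal.ofReal_mul (by norm_num)]
  congr 2; ring

lemma le_MM_ae {h : ℝ → ℝ≥0∞} (hm : AEMeasurable h volume) (hfin : ∫⁻ y, h y ≠ ⊤) :
    ∀ᵐ x, h x ≤ MM volume h x := by
  filter_upwards [(Besicovitch.vitaliFamily (volume : Measure ℝ)).ae_tendsto_lintegral_div hm hfin] with x hx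
  have h1 := hx.comp (Besicovitch.tendsto_filterAt (volume : Measure ℝ) x)
  refine le_of_tendsto h1 ?_
  filter_upwards [self_mem_nhdsWithin] with ε hε
  have hε' : 0 < ε := hε
  show (∫⁻ y in Metric.closedBall x ε, h y) / volume (Metric.closedBall x ε) ≤ _
  rw [Real.closedBall_eq_Icc, ENNReal.div_eq_inv_mul, ← setLIntegral_congr Ioo_ae_eq_Icc,
    ← measure_congr Ioo_ae_eq_Icc]
  exact le_MM volume h ⟨by linarith, by linarith⟩

lemma lip_approx {g : ℝ → ℝ} (hg : Measurable g) {M R0 : ℝ} (hM : ∀ x, |g x| ≤ M)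
    (hR : ∀ x, R0 < |x| → g x = 0) {ε : ℝ} (hε : 0 < ε) :
    ∃ (φ : ℝ → ℝ) (K : NNReal) (R : ℝ), LipschitzWith K φ ∧ (∀ y, R < |y| → φ y = 0) ∧
      (∀ x, |φ x| ≤ M) ∧ ∫⁻ x, ENNReal.ofReal |g x - φ x| ≤ ENNReal.ofReal ε := by
  have hM0 : 0 ≤ M := (abs_nonneg _).trans (hM 0)
  have hgi : Integrable g := by
    have h1 : IntegrableOn g (Icc (-R0) R0) := by
      refine Measure.integrableOn_of_bounded (M := M) (by simp) hg.aestronglyMeasurable ?_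
      exact Eventually.of_forall fun x => by rw [Real.norm_eq_abs]; exact hM x
    refine (integrableOn_iff_integrable_of_support_subset ?_).1 h1
    intro x hx
    by_contra hc
    apply hx
    apply hR
    by_contra h2
    exact hc (abs_le.1 (not_lt.1 h2))
  obtain ⟨ψ, hψc, hψs, hψ⟩ := (memLp_one_iff_integrable.2 hgi).exist_eLpNorm_sub_le (by simp) le_rfl hε
  obtain ⟨K, hK⟩ := ContDiff.lipschitzWith_of_hasCompactSupport (𝕂 := ℝ) hψc hψs (by simp)
  obtain ⟨R, hRb⟩ := hψc.isBounded.exists_norm_le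
  refine ⟨fun x => max (-M) (min M (ψ x)), K, R, (hK.const_min M).const_max (-M), ?_, ?_, ?_⟩
  · intro y hy
    have : ψ y = 0 := by
      by_contra hc
      have := hRb y (subset_tsupport _ hc)
      rw [Real.norm_eq_abs] at this
      linarith
    show max (-M) (min M (ψ y)) = 0
    rw [this, min_eq_right hM0, max_eq_right (by linarith)]
  · intro x
    rw [abs_le]
    exact ⟨le_max_left _ _, max_le (by linarith) (min_le_left _ _)⟩
  · refine le_trans ?_ hψ
    rw [eLpNorm_one_eq_lintegral_enorm]
    refine lintegral_mono fun x => ?_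
    rw [← ofReal_norm, Real.norm_eq_abs]
    apply ENNReal.ofReal_le_ofReal
    obtain ⟨h1, h2⟩ := abs_le.1 (hM x)
    show |g x - max (-M) (min M (ψ x))| ≤ |g x - ψ x|
    rcases le_total M (ψ x) with h3 | h3
    · rw [min_eq_left h3, max_eq_right (by linarith), abs_of_nonpos (by linarith), abs_of_nonpos (by linarith)]
      linarith
    · rw [min_eq_right h3]
      rcases le_total (-M) (ψ x) with h4 | h4
      · rw [max_eq_right h4]
      · rw [max_eq_left h4, abs_of_nonneg (by linarith), abs_of_nonneg (by linarith)]
        linarith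

lemma trunc_approx {f : ℝ → ℝ} (hf : AEMeasurable f volume) {N : ℝ → ℝ≥0∞} (hN : Measurable N)
    (hfin : ∫⁻ x, ENNReal.ofReal |f x| * N x ≠ ⊤) {ε : ℝ≥0∞} (hε : 0 < ε) :
    ∃ (g : ℝ → ℝ) (M : ℝ), Measurable g ∧ (∀ x, |g x| ≤ M) ∧ (∀ x, M < |x| → g x = 0) ∧
      (∀ᵐ x, |g x| ≤ |f x|) ∧ ∫⁻ x, ENNReal.ofReal |f x - g x| * N x ≤ ε := by
  set f' := hf.mk f with hf'
  have hf'm : Measurable f' := hf.measurable_mk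
  set B : ℕ → Set ℝ := fun m => {x | |x| ≤ m ∧ |f' x| ≤ m} with hB
  have hBm : ∀ m, MeasurableSet (B m) := fun m => by
    have h1 : MeasurableSet {x : ℝ | |x| ≤ m} := measurableSet_le (by fun_prop) measurable_const
    have h2 : MeasurableSet {x : ℝ | |f' x| ≤ m} := measurableSet_le (by fun_prop) measurable_const
    exact h1.inter h2
  have hlim : Tendsto (fun m : ℕ => ∫⁻ x, ENNReal.ofReal |f x - (B m).indicator f' x| * N x) atTop
      (𝓝 (∫⁻ x : ℝ, 0)) := by
    refine tendsto_lintegral_of_dominated_convergence' (fun x => ENNReal.ofReal |f x| * N x) ?_ ?_ hfin ?_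
    · intro m
      have : AEMeasurable ((B m).indicator f') volume := (hf'm.indicator (hBm m)).aemeasurable
      have h2 : AEMeasurable (fun x => |f x - (B m).indicator f' x|) volume :=
        (continuous_abs.measurable.comp_aemeasurable (hf.sub this))
      exact h2.ennreal_ofReal.mul hN.aemeasurable
    · intro m
      filter_upwards [hf.ae_eq_mk] with x hx
      refine mul_le_mul' (ENNReal.ofReal_le_ofReal ?_) le_rfl
      by_cases hxB : x ∈ B m
      · rw [indicator_of_mem hxB, hx]; simp [hf']
      · rw [indicator_of_notMem hxB, sub_zero]
    · filter_upwards [hf.ae_eq_mk] with x hx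
      refine tendsto_const_nhds.congr' ?_
      obtain ⟨k, hk⟩ := exists_nat_ge (max |x| |f' x|)
      filter_upwards [eventually_ge_atTop k] with m hm
      have hkm : (k : ℝ) ≤ m := by exact_mod_cast hm
      have hxB : x ∈ B m := ⟨(le_max_left _ _).trans (hk.trans hkm), (le_max_right _ _).trans (hk.trans hkm)⟩
      rw [indicator_of_mem hxB, hx]; simp [hf']
  rw [lintegral_zero] at hlim
  obtain ⟨m, hm⟩ := (hlim.eventually (eventually_le_nhds hε)).exists
  refine ⟨(B m).indicator f', m, hf'm.indicator (hBm m), ?_, ?_, ?_, hm⟩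
  · intro x
    by_cases hxB : x ∈ B m
    · rw [indicator_of_mem hxB]; exact hxB.2
    · rw [indicator_of_notMem hxB]; simp
  · intro x hx
    rw [indicator_of_notMem]
    intro hxB
    exact absurd hxB.1 (not_le.2 hx)
  · filter_upwards [hf.ae_eq_mk] with x hx
    by_cases hxB : x ∈ B m
    · rw [indicator_of_mem hxB, hx]
    · rw [indicator_of_notMem hxB]; simp

lemma full_approx {f : ℝ → ℝ} (hf : AEMeasurable f volume) {N W' : ℝ → ℝ≥0∞} (hN : Measurable N)
    {b : ℝ} (hb : 0 ≤ b) (hNb : ∀ x, N x ≤ ENNReal.ofReal b)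
    (hWb : ∀ x, W' x ≤ ENNReal.ofReal b)
    (hfin : ∫⁻ x, ENNReal.ofReal |f x| * N x ≠ ⊤) {ε : ℝ} (hε : 0 < ε) :
    ∃ (φ : ℝ → ℝ) (K : NNReal) (R : ℝ), LipschitzWith K φ ∧ (∀ y, R < |y| → φ y = 0) ∧
      ∫⁻ x, ENNReal.ofReal |f x - φ x| * N x ≤ ENNReal.ofReal (2 * ε) ∧
      ∫⁻ x, W' x * ENNReal.ofReal |φ x| ^ (2:ℝ) ≤
        (∫⁻ x, W' x * ENNReal.ofReal |f x| ^ (2:ℝ)) + ENNReal.ofReal ε := by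
  obtain ⟨g, M, hgm, hgM, hgs, hgf, hga⟩ := trunc_approx hf hN hfin (ε := ENNReal.ofReal ε) (by simpa using hε)
  have hM0 : 0 ≤ M := (abs_nonneg _).trans (hgM 0)
  set δ := ε / (b * (2 * M + 1) + 1) with hδ
  have hden : 0 < b * (2 * M + 1) + 1 := by positivity
  have hδ0 : 0 < δ := by positivity
  have hδb : b * δ ≤ ε := by
    rw [hδ, mul_div_assoc', div_le_iff₀ hden]; nlinarith [mul_nonneg hb hM0]
  have hδM : b * (2 * M) * δ ≤ ε := by
    rw [hδ, mul_div_assoc', div_le_iff₀ hden]; nlinarith [mul_nonneg hb hM0]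
  obtain ⟨φ, K, R, hK, hR, hφM, hφ⟩ := lip_approx hgm hgM hgs hδ0
  have hφm : Measurable φ := hK.continuous.measurable
  refine ⟨φ, K, R, hK, hR, ?_, ?_⟩
  · calc ∫⁻ x, ENNReal.ofReal |f x - φ x| * N x
        ≤ ∫⁻ x, (ENNReal.ofReal |f x - g x| * N x + ENNReal.ofReal b * ENNReal.ofReal |g x - φ x|) := by
          refine lintegral_mono fun x => ?_
          calc _ ≤ (ENNReal.ofReal |f x - g x| + ENNReal.ofReal |g x - φ x|) * N x := by
                refine mul_le_mul' ?_ le_rfl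
                rw [← ENNReal.ofReal_add (abs_nonneg _) (abs_nonneg _)]
                exact ENNReal.ofReal_le_ofReal (abs_sub_le _ _ _)
            _ ≤ _ := by
                rw [add_mul, mul_comm (ENNReal.ofReal |g x - φ x|)]
                exact add_le_add le_rfl (mul_le_mul' (hNb x) le_rfl)
      _ = (∫⁻ x, ENNReal.ofReal |f x - g x| * N x) + ENNReal.ofReal b * ∫⁻ x, ENNReal.ofReal |g x - φ x| := by
          rw [lintegral_add_right _ (by fun_prop), lintegral_const_mul' _ _ ENNReal.ofReal_ne_top]
      _ ≤ ENNReal.ofReal ε + ENNReal.ofReal b * ENNReal.ofReal δ := add_le_add hga (mul_le_mul' le_rfl hφ)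
      _ ≤ _ := by
          rw [← ENNReal.ofReal_mul hb, ← ENNReal.ofReal_add hε.le (by positivity)]
          apply ENNReal.ofReal_le_ofReal; linarith
  · calc ∫⁻ x, W' x * ENNReal.ofReal |φ x| ^ (2:ℝ)
        ≤ ∫⁻ x, (W' x * ENNReal.ofReal |f x| ^ (2:ℝ) + ENNReal.ofReal (b * (2 * M)) * ENNReal.ofReal |g x - φ x|) := by
          refine lintegral_mono_ae ?_
          filter_upwards [hgf] with x hx
          calc W' x * ENNReal.ofReal |φ x| ^ (2:ℝ)
              ≤ W' x * (ENNReal.ofReal |f x| ^ (2:ℝ) + ENNReal.ofReal (2 * M * |g x - φ x|)) := by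
                refine mul_le_mul' le_rfl ?_
                rw [ENNReal.ofReal_rpow_of_nonneg (abs_nonneg _) (by norm_num),
                  ENNReal.ofReal_rpow_of_nonneg (abs_nonneg _) (by norm_num),
                  ← ENNReal.ofReal_add (by positivity) (by positivity)]
                apply ENNReal.ofReal_le_ofReal
                rw [Real.rpow_two, Real.rpow_two]
                have h1 := hφM x
                have h2 := hgM x
                have h3 : |φ x| ≤ |g x| + |g x - φ x| := by
                  have := abs_sub_abs_le_abs_sub (φ x) (g x)
                  rw [abs_sub_comm (φ x)] at this; linarith
                have h0 := abs_nonneg (φ x)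
                have h0' := abs_nonneg (g x)
                have h0'' := abs_nonneg (g x - φ x)
                have h4 : |g x| ^ 2 ≤ |f x| ^ 2 := by gcongr
                have h5 : |φ x| ^ 2 - |g x| ^ 2 ≤ 2 * M * |g x - φ x| := by
                  have : |φ x| ^ 2 - |g x| ^ 2 = (|φ x| + |g x|) * (|φ x| - |g x|) := by ring
                  rw [this]
                  calc _ ≤ (|φ x| + |g x|) * |g x - φ x| := by gcongr; linarith
                    _ ≤ _ := by gcongr; linarith
                linarith
            _ ≤ _ := by
                rw [mul_add, ENNReal.ofReal_mul (q := |g x - φ x|) (by positivity), ENNReal.ofReal_mul hb, mul_assoc]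
                exact add_le_add le_rfl (mul_le_mul' (hWb x) le_rfl)
      _ = (∫⁻ x, W' x * ENNReal.ofReal |f x| ^ (2:ℝ)) + ENNReal.ofReal (b * (2 * M)) * ∫⁻ x, ENNReal.ofReal |g x - φ x| := by
          rw [lintegral_add_right _ (by fun_prop), lintegral_const_mul' _ _ ENNReal.ofReal_ne_top]
      _ ≤ _ := by
          refine add_le_add le_rfl ((mul_le_mul' le_rfl hφ).trans ?_)
          rw [← ENNReal.ofReal_mul (by positivity)]
          exact ENNReal.ofReal_le_ofReal hδM

lemma V_ge {r : ℝ} (hr : 1 < r) (hr2 : r < 2) {m v : ℝ≥0∞} (hv : v ≠ ⊤) (hvm : v ≤ m) :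
    m ≤ m ^ (2 * (r / (2 - r)) / r) * v ^ (-(r / (2 - r))) := by
  set α := r / (2 - r) with hα
  have h2r : 0 < 2 - r := by linarith
  have hα0 : 0 < α := by positivity
  have e : 2 * α / r = α + 1 := by rw [hα]; field_simp; ring
  rw [e]
  by_cases h0 : m = 0
  · rw [h0]; exact zero_le
  by_cases ht : m = ⊤
  · rw [ht, ENNReal.top_rpow_of_pos (by positivity), ENNReal.top_mul]
    rw [ENNReal.rpow_neg]
    exact ENNReal.inv_ne_zero.2 (ENNReal.rpow_ne_top_of_nonneg hα0.le hv)
  · calc m = m ^ (α + 1) * m ^ (-α) := by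
          rw [← ENNReal.rpow_add _ _ h0 ht]; simp
      _ ≤ _ := by
          refine mul_le_mul' le_rfl ?_
          rw [ENNReal.rpow_neg, ENNReal.rpow_neg]
          exact ENNReal.inv_le_inv.2 (ENNReal.rpow_le_rpow hvm hα0.le)

/-- the main step with truncated weight -/
lemma case2_core {r A : ℝ} (hr : 1 < r) (hr2 : r < 2) (h32 : 3 / 2 ≤ r) (H : Hyp r A) (hA : 0 < A)
    {w f : ℝ → ℝ} (hw : IsWeight w) (hf : AEMeasurable f volume)
    (hJ : ∫⁻ x, ENNReal.ofReal (f x ^ 2) * Mr (r / (2 - r)) w x ^ (2 * (r / (2 - r)) / r) *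
                  ENNReal.ofReal (w x) ^ (-(r / (2 - r))) ≠ ⊤)
    {D : Set ℝ} (hD : MeasurableSet D) {n : ℝ} (hn : 0 < n) (hDn : D ⊆ Icc (-n) n)
    (hDw : ∀ᵐ x, D.indicator w x ≤ n) (hwM : ∀ᵐ x, ENNReal.ofReal (w x) ≤ Mr (r / (2 - r)) w x)
    {lam : ℝ} (hl : 0 < lam) :
    ENNReal.ofReal (lam ^ 2) * ∫⁻ x in {x : ℝ | lam < |Hil f x|}, ENNReal.ofReal (D.indicator w x) ≤
      ENNReal.ofReal (4 * 26000000000000000000 * A ^ 2) *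
      ∫⁻ x, ENNReal.ofReal (f x ^ 2) * Mr (r / (2 - r)) w x ^ (2 * (r / (2 - r)) / r) *
                  ENNReal.ofReal (w x) ^ (-(r / (2 - r))) := by
  set J := ∫⁻ x, ENNReal.ofReal (f x ^ 2) * Mr (r / (2 - r)) w x ^ (2 * (r / (2 - r)) / r) *
                  ENNReal.ofReal (w x) ^ (-(r / (2 - r))) with hJdef
  set u := D.indicator w with hu
  have hwm : AEMeasurable w volume := hw.2.aestronglyMeasurable.aemeasurable
  have hum : AEMeasurable u volume := hwm.indicator hD
  have hu0 : ∀ x, 0 ≤ u x := fun x => indicator_nonneg (fun y _ => hw.1 y) x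
  have huw : IsWeight u := ⟨hu0, hw.2.indicator hD⟩
  have hL1 := L1 hr hr2 hwm hw.1 hf hD hJ
  rw [← hJdef, ← hu] at hL1
  set α := r / (2 - r) with hα
  have h2r : 0 < 2 - r := by linarith
  have hα3 : 3 ≤ α := by rw [hα, le_div_iff₀ h2r]; linarith
  have hα0 : 0 < α := by linarith
  have hr0 : 0 < r := by linarith
  have hub : ∀ᵐ x, ENNReal.ofReal |u x| ≤ ENNReal.ofReal n := by
    filter_upwards [hDw] with x hx
    rw [abs_of_nonneg (hu0 x)]
    exact ENNReal.ofReal_le_ofReal hx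
  set g : ℝ → ℝ≥0∞ := fun y => ENNReal.ofReal |u y| ^ α with hg
  have hgm : AEMeasurable g volume :=
    ((continuous_abs.measurable.comp_aemeasurable hum).ennreal_ofReal).pow_const α
  set G := MM volume g with hG
  have hgz : ∀ x, x ∉ D → g x = 0 := by
    intro x hx
    simp [hg, hu, hx, hα0]
  by_cases hz : ∫⁻ y, g y = 0
  · have h1 : ∫⁻ x in {x : ℝ | lam < |Hil f x|}, ENNReal.ofReal (u x) = 0 := by
      rw [lintegral_eq_zero_iff' hgm] at hz
      rw [← nonpos_iff_eq_zero]
      refine (setLIntegral_le_lintegral _ _).trans (le_of_eq ?_)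
      rw [lintegral_eq_zero_iff' hum.ennreal_ofReal]
      filter_upwards [hz] with x hx
      have : ENNReal.ofReal |u x| ^ α = 0 := hx
      rw [ENNReal.rpow_eq_zero_iff_of_pos hα0, abs_of_nonneg (hu0 x)] at this
      exact this
    rw [h1, mul_zero]; exact zero_le
  have hGpos : ∀ x, 0 < G x := by
    intro x
    have hxI : x ∈ Ioo (-(n + |x| + 1)) (n + |x| + 1) :=
      ⟨by linarith [neg_abs_le x], by linarith [le_abs_self x]⟩
    refine lt_of_lt_of_le ?_ (le_MM volume g hxI)
    have h2 : ∫⁻ y in Ioo (-(n + |x| + 1)) (n + |x| + 1), g y = ∫⁻ y, g y := by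
      rw [← lintegral_indicator measurableSet_Ioo]
      refine lintegral_congr fun y => ?_
      by_cases hy : y ∈ D
      · rw [indicator_of_mem]
        have := hDn hy
        exact ⟨by linarith [this.1, abs_nonneg x], by linarith [this.2, abs_nonneg x]⟩
      · by_cases hy2 : y ∈ Ioo (-(n + |x| + 1)) (n + |x| + 1)
        · rw [indicator_of_mem hy2]
        · rw [indicator_of_notMem hy2, hgz y hy]
    rw [h2, Real.volume_Ioo]
    exact ENNReal.mul_pos (ENNReal.inv_ne_zero.2 ENNReal.ofReal_ne_top) hz
  have hGle : ∀ x, G x ≤ ENNReal.ofReal n ^ α := by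
    intro x
    refine (MM_mono (g := fun _ => ENNReal.ofReal n ^ α) ?_ x).trans (MM_const_le _ _ _)
    filter_upwards [hub] with y hy
    exact ENNReal.rpow_le_rpow hy hα0.le
  have hGm : Measurable G := measurable_MM _ _
  have hGr : ∀ x, G x ^ (1 / α) ≤ ENNReal.ofReal n := by
    intro x
    calc _ ≤ (ENNReal.ofReal n ^ α) ^ (1 / α) := ENNReal.rpow_le_rpow (hGle x) (by positivity)
      _ = _ := by rw [← ENNReal.rpow_mul, mul_one_div_cancel hα0.ne', ENNReal.rpow_one]
  set W : ℝ → ℝ := fun x => (G x ^ (1 / α)).toReal with hW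
  have hWof : ∀ x, ENNReal.ofReal (W x) = G x ^ (1 / α) := fun x =>
    ENNReal.ofReal_toReal (ne_top_of_le_ne_top ENNReal.ofReal_ne_top (hGr x))
  have hWpos : ∀ x, 0 < W x := by
    intro x
    rw [← ENNReal.ofReal_pos, hWof]
    exact ENNReal.rpow_pos (hGpos x) (ne_top_of_le_ne_top (by finiteness) (hGle x))
  have hWn : ∀ x, W x ≤ n := fun x => ENNReal.toReal_le_of_le_ofReal hn.le (hGr x)
  have h : A1W r W := by
    refine ⟨(hGm.pow_const _).ennreal_toReal, hWpos, ⟨n, hWn⟩, ?_, ?_⟩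
    · intro x
      simp_rw [hWof]
      refine coifman_rochberg hgm (by positivity) ?_ (hGpos x)
      rw [div_le_div_iff₀ hα0 (by norm_num)]; linarith
    · intro x
      simp_rw [hWof, ← ENNReal.rpow_mul]
      refine coifman_rochberg hgm (by positivity) ?_ (hGpos x)
      rw [hα]
      have : 1 / (r / (2 - r)) * r = 2 - r := by field_simp
      rw [this]; linarith
  -- comparison of the weights
  have hgfin : ∫⁻ y, g y ≠ ⊤ := by
    have : ∫⁻ y, g y ≤ ∫⁻ y, (Icc (-n) n).indicator (fun _ => ENNReal.ofReal n ^ α) y := by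
      refine lintegral_mono_ae ?_
      filter_upwards [hub] with y hy
      by_cases hyD : y ∈ D
      · rw [indicator_of_mem (hDn hyD)]
        exact ENNReal.rpow_le_rpow hy hα0.le
      · rw [hgz y hyD]; exact zero_le
    refine ne_top_of_le_ne_top ?_ this
    rw [lintegral_indicator_const measurableSet_Icc, Real.volume_Icc]
    finiteness
  have huW : ∀ᵐ x, ENNReal.ofReal (u x) ≤ ENNReal.ofReal (W x) := by
    filter_upwards [le_MM_ae hgm hgfin] with x hx
    rw [hWof]
    calc ENNReal.ofReal (u x) = (ENNReal.ofReal |u x| ^ α) ^ (1 / α) := by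
          rw [← ENNReal.rpow_mul, mul_one_div_cancel hα0.ne', ENNReal.rpow_one, abs_of_nonneg (hu0 x)]
      _ ≤ _ := ENNReal.rpow_le_rpow hx (by positivity)
  have hWV : ∀ᵐ x, ENNReal.ofReal (W x) ≤ Mr α w x ^ (2 * α / r) * ENNReal.ofReal (w x) ^ (-α) := by
    filter_upwards [hwM] with x hx
    refine le_trans ?_ (V_ge hr hr2 ENNReal.ofReal_ne_top hx)
    rw [hWof, Mr_eq hα0]
    refine ENNReal.rpow_le_rpow ?_ (by positivity)
    refine MM_mono (Eventually.of_forall fun y => ?_) x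
    refine ENNReal.rpow_le_rpow (ENNReal.ofReal_le_ofReal ?_) hα0.le
    by_cases hy : y ∈ D <;> simp [hu, hy]
  have hWJ : ∫⁻ x, ENNReal.ofReal (W x) * ENNReal.ofReal |f x| ^ (2:ℝ) ≤ J := by
    refine lintegral_mono_ae ?_
    filter_upwards [hWV] with x hx
    rw [ENNReal.ofReal_rpow_of_nonneg (abs_nonneg _) (by norm_num), Real.rpow_two, sq_abs, mul_comm, mul_assoc]
    exact mul_le_mul' le_rfl hx
  have hMrm : Measurable (Mr r u) := by
    have : Mr r u = fun x => MM volume (fun y => ENNReal.ofReal |u y| ^ r) x ^ (1 / r) :=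
      funext fun x => Mr_eq hr0 u x
    rw [this]
    exact (measurable_MM _ _).pow_const _
  have hMrn : ∀ x, Mr r u x ≤ ENNReal.ofReal n := by
    intro x
    rw [Mr_eq hr0]
    calc _ ≤ (ENNReal.ofReal n ^ r) ^ (1 / r) := by
          refine ENNReal.rpow_le_rpow ?_ (by positivity)
          refine (MM_mono (g := fun _ => ENNReal.ofReal n ^ r) ?_ x).trans (MM_const_le _ _ _)
          filter_upwards [hub] with y hy
          exact ENNReal.rpow_le_rpow hy hr0.le
      _ = _ := by rw [← ENNReal.rpow_mul, mul_one_div_cancel hr0.ne', ENNReal.rpow_one]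
  have hDfin : ∫⁻ x in D, ENNReal.ofReal (w x) ≠ ⊤ :=
    ((hw.2.integrableOn_isCompact isCompact_Icc).mono_set hDn).lintegral_lt_top.ne
  have hPfin : ∫⁻ x, ENNReal.ofReal |f x| * Mr r u x ≠ ⊤ := by
    refine ne_top_of_le_ne_top ?_ hL1
    refine ENNReal.mul_ne_top ?_ ?_
    · exact ENNReal.rpow_ne_top_of_nonneg (by norm_num) hJ
    · exact ENNReal.rpow_ne_top_of_nonneg (by norm_num) (ENNReal.mul_ne_top ENNReal.ofReal_ne_top hDfin)
  -- epsilon argument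
  have key : ∀ ε : ℝ, 0 < ε → ENNReal.ofReal (lam ^ 2) *
      ∫⁻ x in {x : ℝ | lam < |Hil f x|}, ENNReal.ofReal (u x) ≤
      ENNReal.ofReal (4 * 26000000000000000000 * A ^ 2) * J +
      ENNReal.ofReal ((4 * 26000000000000000000 * A ^ 2 + 4 * lam * A) * ε) := by
    intro ε hε
    obtain ⟨φ, K, R, hK, hR, hφ1, hφ2⟩ := full_approx hf hMrm (W' := fun x => ENNReal.ofReal (W x)) hn.le hMrn
      (fun x => ENNReal.ofReal_le_ofReal (hWn x)) hPfin hε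
    have hφi : Integrable φ := integrable_of_lip hK.continuous hR
    set S1 := {x : ℝ | lam / 2 < |HL φ x|} with hS1
    set S2 := {x : ℝ | lam / 2 < |Hil (fun y => f y - φ y) x|} with hS2
    have hsub : {x : ℝ | lam < |Hil f x|} ⊆ S1 ∪ S2 := by
      intro x hx
      have hx' : lam < |Hil f x| := hx
      have h1 := abs_Hil_le (f := f) (fun ε hε => integrableOn_far hφi x hε) (TT_tendsto hK hR x)
      by_contra hc
      have hc1 : ¬ lam / 2 < |HL φ x| := fun h => hc (Or.inl h)
      have hc2 : ¬ lam / 2 < |Hil (fun y => f y - φ y) x| := fun h => hc (Or.inr h)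
      linarith
    have hs1 : ∫⁻ x in S1, ENNReal.ofReal (u x) ≤ wm W S1 := by
      unfold wm
      rw [withDensity_apply']
      exact lintegral_mono_ae (ae_restrict_of_ae huW)
    have hw2 := weak_two_lip hr H hA h hK hR (lam := lam / 2) (by positivity)
    rw [wm_lintegral h (by have := hK.continuous.measurable; fun_prop)] at hw2
    have hw3 := H u (fun y => f y - φ y) huw (hφ1.trans_lt ENNReal.ofReal_lt_top) (lam / 2) (by positivity)
    calc ENNReal.ofReal (lam ^ 2) * ∫⁻ x in {x : ℝ | lam < |Hil f x|}, ENNReal.ofReal (u x)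
        ≤ ENNReal.ofReal (lam ^ 2) * (wm W S1 + ∫⁻ x in S2, ENNReal.ofReal (u x)) := by
          refine mul_le_mul' le_rfl ?_
          refine (lintegral_mono_set hsub).trans ((lintegral_union_le _ _ _).trans ?_)
          exact add_le_add hs1 le_rfl
      _ = ENNReal.ofReal 4 * (ENNReal.ofReal ((lam / 2) ^ 2) * wm W S1) +
          ENNReal.ofReal (2 * lam) * (ENNReal.ofReal (lam / 2) * ∫⁻ x in S2, ENNReal.ofReal (u x)) := by
          rw [mul_add, ← mul_assoc, ← mul_assoc, ← ENNReal.ofReal_mul (by positivity),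
            ← ENNReal.ofReal_mul (by positivity)]
          congr 3 <;> ring_nf
      _ ≤ ENNReal.ofReal 4 * (ENNReal.ofReal (26000000000000000000 * A ^ 2) * (J + ENNReal.ofReal ε)) +
          ENNReal.ofReal (2 * lam) * (ENNReal.ofReal A * ENNReal.ofReal (2 * ε)) := by
          refine add_le_add (mul_le_mul' le_rfl (hw2.trans (mul_le_mul' le_rfl
            (hφ2.trans (add_le_add hWJ le_rfl))))) ?_
          exact mul_le_mul' le_rfl (hw3.trans (mul_le_mul' le_rfl hφ1))
      _ = _ := by
          rw [mul_add, mul_add, ← mul_assoc, ← mul_assoc, ← mul_assoc, ← ENNReal.ofReal_mul (by positivity),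
            ← ENNReal.ofReal_mul (by positivity), ← ENNReal.ofReal_mul (by positivity),
            ← ENNReal.ofReal_mul (by positivity), add_assoc, ← ENNReal.ofReal_add (by positivity) (by positivity)]
          congr 2
          · congr 1; ring
          · ring
  refine ENNReal.le_of_forall_pos_le_add fun ε hε _ => ?_
  have hc : 0 < 4 * 26000000000000000000 * A ^ 2 + 4 * lam * A := by positivity
  have hε' : (0:ℝ) < ε := hε
  refine (key (ε / (4 * 26000000000000000000 * A ^ 2 + 4 * lam * A)) (by positivity)).trans ?_
  rw [mul_div_cancel₀ _ hc.ne', ENNReal.ofReal_coe_nnreal]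

lemma half_mul_half (a : ℝ≥0∞) : a ^ ((1:ℝ)/2) * a ^ ((1:ℝ)/2) = a := by
  rw [← ENNReal.rpow_add_of_nonneg _ _ (by norm_num) (by norm_num)]; norm_num

lemma const_le {r : ℝ} (hr : 1 < r) (h32 : r < 3 / 2) :
    2 / r * 2 ^ (2 / r + 1) / (2 / r - 1) ≤ (48 : ℝ) := by
  have h1 : 4 / 3 ≤ 2 / r := by rw [div_le_div_iff₀ (by norm_num) (by linarith)]; linarith
  have h2 : 2 / r ≤ 2 := by rw [div_le_iff₀ (by linarith)]; linarith
  have h3 : (2:ℝ) ^ (2 / r + 1) ≤ 8 := by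
    calc (2:ℝ) ^ (2 / r + 1) ≤ 2 ^ (3:ℝ) := Real.rpow_le_rpow_of_exponent_le (by norm_num) (by linarith)
      _ = 8 := by norm_num
  rw [div_le_iff₀ (by linarith)]
  have h4 : 2 / r * 2 ^ (2 / r + 1) ≤ 2 * 8 := by gcongr
  linarith

lemma case1_core {r A : ℝ} (hr : 1 < r) (hr2 : r < 2) (h32 : r < 3 / 2) (H : Hyp r A) (hA : 0 < A)
    {w f : ℝ → ℝ} (hw : IsWeight w) (hf : AEMeasurable f volume)
    (hJ : ∫⁻ x, ENNReal.ofReal (f x ^ 2) * Mr (r / (2 - r)) w x ^ (2 * (r / (2 - r)) / r) *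
                  ENNReal.ofReal (w x) ^ (-(r / (2 - r))) ≠ ⊤)
    {D : Set ℝ} (hD : MeasurableSet D) {n : ℝ} (hDn : D ⊆ Icc (-n) n)
    {lam : ℝ} (hl : 0 < lam) :
    ENNReal.ofReal (lam ^ 2) * ∫⁻ x in {x : ℝ | lam < |Hil f x|}, ENNReal.ofReal (D.indicator w x) ≤
      ENNReal.ofReal (48 * A ^ 2) *
      ∫⁻ x, ENNReal.ofReal (f x ^ 2) * Mr (r / (2 - r)) w x ^ (2 * (r / (2 - r)) / r) *
                  ENNReal.ofReal (w x) ^ (-(r / (2 - r))) := by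
  set J := ∫⁻ x, ENNReal.ofReal (f x ^ 2) * Mr (r / (2 - r)) w x ^ (2 * (r / (2 - r)) / r) *
                  ENNReal.ofReal (w x) ^ (-(r / (2 - r))) with hJdef
  have hwm : AEMeasurable w volume := hw.2.aestronglyMeasurable.aemeasurable
  set S := {x : ℝ | lam < |Hil f x|} with hS
  set T := toMeasurable volume S with hT
  have hTm : MeasurableSet T := measurableSet_toMeasurable _ _
  have hF : MeasurableSet (T ∩ D) := hTm.inter hD
  set a := ∫⁻ x in T ∩ D, ENNReal.ofReal (w x) with ha
  have hST : ∀ E : Set ℝ, MeasurableSet E → ∫⁻ x in S, ENNReal.ofReal (E.indicator w x) =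
      ∫⁻ x in E ∩ T, ENNReal.ofReal (w x) := by
    intro E hE
    rw [← Measure.restrict_toMeasurable_of_sFinite, ← hT, ← setLIntegral_indicator hE]
    refine lintegral_congr fun x => ?_
    by_cases hx : x ∈ E <;> simp [hx]
  have e1 : ∫⁻ x in S, ENNReal.ofReal (D.indicator w x) = a := by
    rw [hST D hD, inter_comm]
  have e2 : ∫⁻ x in S, ENNReal.ofReal ((T ∩ D).indicator w x) = a := by
    rw [hST _ hF, inter_eq_self_of_subset_left inter_subset_left]
  have hafin : a ≠ ⊤ :=
    ((hw.2.integrableOn_isCompact isCompact_Icc).mono_set (inter_subset_right.trans hDn)).lintegral_lt_top.ne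
  have hL1 := L1 hr hr2 hwm hw.1 hf hF hJ
  rw [← hJdef, ← ha] at hL1
  have hC : ENNReal.ofReal (2 / r * 2 ^ (2 / r + 1) / (2 / r - 1)) ≤ 48 := by
    refine (ENNReal.ofReal_le_ofReal (const_le hr h32)).trans (le_of_eq (by simp))
  have hL2 : ∫⁻ x, ENNReal.ofReal |f x| * Mr r ((T ∩ D).indicator w) x ≤
      J ^ ((1:ℝ)/2) * ((48:ℝ≥0∞) ^ ((1:ℝ)/2) * a ^ ((1:ℝ)/2)) := by
    refine hL1.trans (mul_le_mul' le_rfl ?_)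
    rw [ENNReal.mul_rpow_of_nonneg _ _ (by norm_num)]
    exact mul_le_mul' (ENNReal.rpow_le_rpow hC (by norm_num)) le_rfl
  have hs : a ^ ((1:ℝ)/2) ≠ ⊤ := ENNReal.rpow_ne_top_of_nonneg (by norm_num) hafin
  have hwt : IsWeight ((T ∩ D).indicator w) :=
    ⟨fun x => indicator_nonneg (fun y _ => hw.1 y) x, hw.2.indicator hF⟩
  have hfin : ∫⁻ x, ENNReal.ofReal |f x| * Mr r ((T ∩ D).indicator w) x < ⊤ := by
    refine hL2.trans_lt (lt_top_iff_ne_top.2 ?_)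
    exact ENNReal.mul_ne_top (ENNReal.rpow_ne_top_of_nonneg (by norm_num) hJ)
      (ENNReal.mul_ne_top (ENNReal.rpow_ne_top_of_nonneg (by norm_num) (by norm_num)) hs)
  have h1 := H _ f hwt hfin lam hl
  rw [e2] at h1
  rw [e1]
  by_cases ha0 : a = 0
  · rw [ha0, mul_zero]; exact zero_le
  set s := a ^ ((1:ℝ)/2) with hsdef
  have hs0 : s ≠ 0 := by
    rw [hsdef, Ne, ENNReal.rpow_eq_zero_iff_of_pos (by norm_num)]; exact ha0
  have has : a = s * s := (half_mul_half a).symm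
  have h2 : ENNReal.ofReal lam * s ≤ ENNReal.ofReal A * (J ^ ((1:ℝ)/2) * (48:ℝ≥0∞) ^ ((1:ℝ)/2)) := by
    rw [← ENNReal.mul_le_mul_iff_right hs0 hs]
    calc s * (ENNReal.ofReal lam * s) = ENNReal.ofReal lam * a := by rw [has]; ring
      _ ≤ ENNReal.ofReal A * (J ^ ((1:ℝ)/2) * ((48:ℝ≥0∞) ^ ((1:ℝ)/2) * s)) :=
          h1.trans (mul_le_mul' le_rfl hL2)
      _ = _ := by ring
  calc ENNReal.ofReal (lam ^ 2) * a = (ENNReal.ofReal lam * s) * (ENNReal.ofReal lam * s) := by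
        rw [has, pow_two, ENNReal.ofReal_mul hl.le]; ring
    _ ≤ _ := mul_le_mul' h2 h2
    _ = (ENNReal.ofReal A * ENNReal.ofReal A) * ((J ^ ((1:ℝ)/2) * J ^ ((1:ℝ)/2)) *
        ((48:ℝ≥0∞) ^ ((1:ℝ)/2) * (48:ℝ≥0∞) ^ ((1:ℝ)/2))) := by ring
    _ = _ := by
        rw [half_mul_half, half_mul_half, ENNReal.ofReal_mul (by norm_num), pow_two, ENNReal.ofReal_mul hA.le,
          show ENNReal.ofReal 48 = (48:ℝ≥0∞) by simp]
        ring

lemma main_sq {r A : ℝ} (hr : 1 < r) (hr2 : r < 2) (H : Hyp r A) (hA : 0 < A)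
    {w f : ℝ → ℝ} (hw : IsWeight w) (hf : AEMeasurable f volume)
    (hJ : ∫⁻ x, ENNReal.ofReal (f x ^ 2) * Mr (r / (2 - r)) w x ^ (2 * (r / (2 - r)) / r) *
                  ENNReal.ofReal (w x) ^ (-(r / (2 - r))) ≠ ⊤)
    {lam : ℝ} (hl : 0 < lam) :
    ENNReal.ofReal (lam ^ 2) * ∫⁻ x in {x : ℝ | lam < |Hil f x|}, ENNReal.ofReal (w x) ≤
      ENNReal.ofReal (4 * 26000000000000000000 * A ^ 2) *
      ∫⁻ x, ENNReal.ofReal (f x ^ 2) * Mr (r / (2 - r)) w x ^ (2 * (r / (2 - r)) / r) *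
                  ENNReal.ofReal (w x) ^ (-(r / (2 - r))) := by
  have hwm : AEMeasurable w volume := hw.2.aestronglyMeasurable.aemeasurable
  set w' := hwm.mk w with hw'
  have hw'm : Measurable w' := hwm.measurable_mk
  set D : ℕ → Set ℝ := fun n => Icc (-((n:ℝ) + 1)) (n + 1) ∩ {x | w' x ≤ n + 1} with hDdef
  have hDm : ∀ n, MeasurableSet (D n) := fun n =>
    measurableSet_Icc.inter (measurableSet_le hw'm measurable_const)
  have hDmono : Monotone D := by
    intro i j hij x hx
    have hij' : (i:ℝ) ≤ j := by exact_mod_cast hij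
    have h3 : w' x ≤ i + 1 := hx.2
    refine ⟨⟨by linarith [hx.1.1], by linarith [hx.1.2]⟩, ?_⟩
    show w' x ≤ j + 1
    linarith
  have hDex : ∀ x, ∃ n, x ∈ D n := by
    intro x
    obtain ⟨n, hn⟩ := exists_nat_ge (max |x| (w' x))
    have h1 := (le_max_left _ _).trans hn
    have h2 := (le_max_right _ _).trans hn
    rw [abs_le] at h1
    refine ⟨n, ⟨by linarith [h1.1], by linarith [h1.2]⟩, ?_⟩
    show w' x ≤ n + 1
    linarith
  have hDw : ∀ n, ∀ᵐ x, (D n).indicator w x ≤ (n:ℝ) + 1 := by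
    intro n
    filter_upwards [hwm.ae_eq_mk] with x hx
    by_cases hxD : x ∈ D n
    · rw [indicator_of_mem hxD, hx]; exact hxD.2
    · rw [indicator_of_notMem hxD]; positivity
  have hsup : ∫⁻ x in {x : ℝ | lam < |Hil f x|}, ENNReal.ofReal (w x) =
      ⨆ n, ∫⁻ x in {x : ℝ | lam < |Hil f x|}, ENNReal.ofReal ((D n).indicator w x) := by
    rw [← lintegral_iSup']
    · refine lintegral_congr fun x => ?_
      apply le_antisymm
      · obtain ⟨n, hn⟩ := hDex x
        refine le_iSup_of_le n ?_
        rw [indicator_of_mem hn]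
      · refine iSup_le fun n => ENNReal.ofReal_le_ofReal ?_
        exact indicator_le_self' (fun y _ => hw.1 y) x
    · intro n
      exact ((hwm.indicator (hDm n)).ennreal_ofReal).restrict
    · refine Eventually.of_forall fun x i j hij => ENNReal.ofReal_le_ofReal ?_
      exact indicator_le_indicator_of_subset (hDmono hij) (fun y => hw.1 y) x
  rw [hsup, ENNReal.mul_iSup]
  refine iSup_le fun n => ?_
  have hn : (0:ℝ) < (n:ℝ) + 1 := by positivity
  rcases lt_or_ge r (3/2) with h32 | h32
  · refine (case1_core hr hr2 h32 H hA hw hf hJ (hDm n) (n := n + 1) inter_subset_left hl).trans ?_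
    refine mul_le_mul' (ENNReal.ofReal_le_ofReal ?_) le_rfl
    nlinarith [sq_nonneg A]
  · refine case2_core hr hr2 h32 H hA hw hf hJ (hDm n) hn inter_subset_left (hDw n) ?_ hl
    set α := r / (2 - r) with hα
    have h2r : 0 < 2 - r := by linarith
    have hα0 : 0 < α := by positivity
    have hall : ∀ k : ℕ, ∀ᵐ x, ENNReal.ofReal |(D k).indicator w x| ^ α ≤
        MM volume (fun y => ENNReal.ofReal |(D k).indicator w y| ^ α) x := by
      intro k
      refine le_MM_ae ?_ ?_
      · exact ((continuous_abs.measurable.comp_aemeasurable (hwm.indicator (hDm k))).ennreal_ofReal).pow_const α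
      · have : ∫⁻ y, ENNReal.ofReal |(D k).indicator w y| ^ α ≤
            ∫⁻ y, (Icc (-((k:ℝ) + 1)) (k + 1)).indicator (fun _ => ENNReal.ofReal ((k:ℝ) + 1) ^ α) y := by
          refine lintegral_mono_ae ?_
          filter_upwards [hDw k] with y hy
          by_cases hyD : y ∈ D k
          · rw [indicator_of_mem hyD.1]
            refine ENNReal.rpow_le_rpow (ENNReal.ofReal_le_ofReal ?_) hα0.le
            rwa [abs_of_nonneg (indicator_nonneg (fun y _ => hw.1 y) y)]
          · rw [indicator_of_notMem hyD]; simp [hα0]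
        refine ne_top_of_le_ne_top ?_ this
        rw [lintegral_indicator_const measurableSet_Icc, Real.volume_Icc]
        finiteness
    filter_upwards [ae_all_iff.2 hall] with x hx
    obtain ⟨k, hk⟩ := hDex x
    have h1 := hx k
    rw [indicator_of_mem hk] at h1
    rw [Mr_eq hα0]
    calc ENNReal.ofReal (w x) = (ENNReal.ofReal |w x| ^ α) ^ (1 / α) := by
          rw [← ENNReal.rpow_mul, mul_one_div_cancel hα0.ne', ENNReal.rpow_one, abs_of_nonneg (hw.1 x)]
      _ ≤ _ := by
          refine ENNReal.rpow_le_rpow (h1.trans ?_) (by positivity)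
          refine MM_mono (Eventually.of_forall fun y => ?_) x
          refine ENNReal.rpow_le_rpow (ENNReal.ofReal_le_ofReal ?_) hα0.le
          by_cases hy : y ∈ D k <;> simp [hy]

theorem final_aux :
    ∃ c : ℝ, 0 < c ∧ ∀ r A : ℝ, 1 < r → r < 2 → 0 < A → Hyp r A →
      ∀ w f : ℝ → ℝ, IsWeight w → ∀ lam : ℝ, 0 < lam →
        ENNReal.ofReal lam *
            (∫⁻ x in {x : ℝ | lam < |Hil f x|}, ENNReal.ofReal (w x)) ^ ((1:ℝ)/2)
          ≤ ENNReal.ofReal (c * A) *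
              (∫⁻ x, ENNReal.ofReal (f x ^ 2) *
                  Mr (r / (2 - r)) w x ^ (2 * (r / (2 - r)) / r) *
                  ENNReal.ofReal (w x) ^ (-(r / (2 - r)))) ^ ((1:ℝ)/2) := by
  refine ⟨20000000000, by norm_num, fun r A hr hr2 hA H w f hw lam hl => ?_⟩
  by_cases hf : AEMeasurable f volume
  swap
  · have : {x : ℝ | lam < |Hil f x|} = ∅ := by
      rw [eq_empty_iff_forall_notMem]
      intro x hx
      have hx' : lam < |Hil f x| := hx
      by_cases h0 : Hil f x = 0
      · rw [h0, abs_zero] at hx'; linarith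
      · exact hf (aemeasurable_of_Hil_ne h0)
    rw [this]; simp
  by_cases hJ : ∫⁻ x, ENNReal.ofReal (f x ^ 2) *
                  Mr (r / (2 - r)) w x ^ (2 * (r / (2 - r)) / r) *
                  ENNReal.ofReal (w x) ^ (-(r / (2 - r))) = ⊤
  · rw [hJ, ENNReal.top_rpow_of_pos (by norm_num), ENNReal.mul_top]
    · exact le_top
    · simpa using hA
  have h1 := ENNReal.rpow_le_rpow (main_sq hr hr2 H hA hw hf hJ hl) (show (0:ℝ) ≤ 1 / 2 by norm_num)
  rw [ENNReal.mul_rpow_of_nonneg _ _ (by norm_num), ENNReal.mul_rpow_of_nonneg _ _ (by norm_num),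
    ENNReal.ofReal_rpow_of_nonneg (by positivity) (by norm_num),
    ENNReal.ofReal_rpow_of_nonneg (by positivity) (by norm_num), ← Real.sqrt_eq_rpow, ← Real.sqrt_eq_rpow,
    Real.sqrt_sq hl.le] at h1
  refine h1.trans (mul_le_mul' (ENNReal.ofReal_le_ofReal ?_) le_rfl)
  apply Real.sqrt_le_iff.2
  refine ⟨by positivity, ?_⟩
  nlinarith [sq_nonneg A]

/-- Under the same weak `(1,1)`-type assumption as in the
extrapolation lemma, there is an absolute constant `c > 0` such that
`‖Hf‖_{L^{2,∞}(w)} ≤ c A_r ‖f‖_{L^2((M_{α_r} w)^{2α_r/r}/w^{α_r})}` for every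
weight `w` and every `f`, where `α_r = r/(2−r)`. -/
theorem statement9 :
    ∃ c : ℝ, 0 < c ∧ ∀ r A : ℝ, 1 < r → r < 2 → 0 < A →
      (∀ w f : ℝ → ℝ, IsWeight w →
          (∫⁻ x, ENNReal.ofReal |f x| * Mr r w x) < ⊤ →
          ∀ lam : ℝ, 0 < lam →
            ENNReal.ofReal lam *
                (∫⁻ x in {x : ℝ | lam < |Hil f x|}, ENNReal.ofReal (w x))
              ≤ ENNReal.ofReal A * ∫⁻ x, ENNReal.ofReal |f x| * Mr r w x) →
      ∀ w f : ℝ → ℝ, IsWeight w → ∀ lam : ℝ, 0 < lam →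
        ENNReal.ofReal lam *
            (∫⁻ x in {x : ℝ | lam < |Hil f x|}, ENNReal.ofReal (w x)) ^ ((1:ℝ)/2)
          ≤ ENNReal.ofReal (c * A) *
              (∫⁻ x, ENNReal.ofReal (f x ^ 2) *
                  Mr (r / (2 - r)) w x ^ (2 * (r / (2 - r)) / r) *
                  ENNReal.ofReal (w x) ^ (-(r / (2 - r)))) ^ ((1:ℝ)/2) := by
  exact final_aux

end RT

end
end

section
/- Let Φ be a Young function and r > 1. Then for every locally integrable f and every x ∈ ℝ: M_Φ f(x) ≤ ( 2·sup_{t ≥ Φ^{−1}(1/2)} Φ(t)/t^r )^{1/r} · M_r f(x), where Φ^{−1}(1/2) = inf{t > 0 : Φ(t) ≥ 1/2}. -/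
open MeasureTheory Set Filter Topology
open scoped ENNReal

noncomputable section

namespace RT

/-- **Lemma 4.1.** For a Young function `Φ` and `r > 1`,
`M_Φ f(x) ≤ (2 sup_{t ≥ Φ^{-1}(1/2)} Φ(t)/t^r)^{1/r} M_r f(x)`, where
`Φ^{-1}(1/2) = inf {t > 0 : Φ(t) ≥ 1/2}`. -/
theorem statement11 (Φ : ℝ → ℝ) (hΦ : IsYoung Φ) (r : ℝ) (hr : 1 < r)
    (f : ℝ → ℝ) (hf : LocallyIntegrable f volume) (x : ℝ) :
    MOrlicz Φ f x
      ≤ (2 * ⨆ (t : ℝ) (_ : sInf {s : ℝ | 0 < s ∧ 1/2 ≤ Φ s} ≤ t),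
            ENNReal.ofReal (Φ t / t ^ r)) ^ (1 / r) * Mr r f x := by
  set S : ℝ≥0∞ := ⨆ (t : ℝ) (_ : sInf {s : ℝ | 0 < s ∧ 1/2 ≤ Φ s} ≤ t),
            ENNReal.ofReal (Φ t / t ^ r) with hS
  have hr0 : 0 < r := by linarith
  have hr1 : 0 ≤ 1 / r := by positivity
  -- the pointwise estimate
  have key : ∀ t : ℝ, 0 ≤ t → ENNReal.ofReal (Φ t) ≤ 2⁻¹ + S * ENNReal.ofReal (t ^ r) := by
    intro t ht
    rcases ht.eq_or_lt with h0 | h0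
    · rw [← h0, hΦ.map_zero]; simp
    by_cases hT : sInf {s : ℝ | 0 < s ∧ 1/2 ≤ Φ s} ≤ t
    · have h1 : ENNReal.ofReal (Φ t / t ^ r) ≤ S := by
        rw [hS]
        exact le_iSup₂ (f := fun (t : ℝ) (_ : sInf {s : ℝ | 0 < s ∧ 1/2 ≤ Φ s} ≤ t) =>
          ENNReal.ofReal (Φ t / t ^ r)) t hT
      have hp : 0 < t ^ r := Real.rpow_pos_of_pos h0 r
      have h2 : ENNReal.ofReal (Φ t) = ENNReal.ofReal (Φ t / t ^ r) * ENNReal.ofReal (t ^ r) := by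
        rw [← ENNReal.ofReal_mul' hp.le, div_mul_cancel₀ _ hp.ne']
      rw [h2]
      exact le_add_left (mul_le_mul_left h1 _)
    · have h1 : Φ t ≤ 1 / 2 := by
        by_contra hc
        exact hT (csInf_le ⟨0, fun s hs => hs.1.le⟩ ⟨h0, (not_le.mp hc).le⟩)
      refine le_add_right ((ENNReal.ofReal_le_ofReal h1).trans (le_of_eq ?_))
      rw [one_div, ENNReal.ofReal_inv_of_pos (by norm_num)]
      simp
  unfold MOrlicz Mr
  refine iSup_le fun a => iSup_le fun b => iSup_le fun hab => iSup_le fun hx => ?_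
  set A : ℝ≥0∞ := (ENNReal.ofReal (b - a))⁻¹ *
    ∫⁻ y in Ioo a b, ENNReal.ofReal |(|f y| ^ r)| with hA
  have hAM : A ≤ HLMax (fun y => |f y| ^ r) x := by
    unfold HLMax
    exact le_iSup_of_le a (le_iSup_of_le b (le_iSup_of_le hab (le_iSup_of_le hx le_rfl)))
  have hL0 : ENNReal.ofReal (b - a) ≠ 0 := by simpa using hab
  have hLt : ENNReal.ofReal (b - a) ≠ ∞ := ENNReal.ofReal_ne_top
  have hmono : (2 * S * A) ^ (1 / r) ≤ (2 * S) ^ (1 / r) * HLMax (fun y => |f y| ^ r) x ^ (1 / r) := by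
    rw [ENNReal.mul_rpow_of_nonneg _ _ hr1]
    gcongr
  refine le_trans ?_ hmono
  refine le_of_forall_gt_imp_ge_of_dense fun c hc => ?_
  rcases eq_or_ne c ∞ with hct | hct
  · rw [hct]; exact le_top
  have hc0 : 0 < c.toReal := ENNReal.toReal_pos (ne_bot_of_gt hc) hct
  refine sInf_le ⟨c.toReal, hc0, (ENNReal.ofReal_toReal hct).symm, ?_⟩
  set l := c.toReal with hl
  have hlr : 0 < l ^ r := Real.rpow_pos_of_pos hc0 r
  have hSA : 2 * S * A ≤ ENNReal.ofReal (l ^ r) := by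
    rw [← ENNReal.ofReal_rpow_of_pos hc0, hl, ENNReal.ofReal_toReal hct]
    have := ENNReal.rpow_le_rpow hc.le hr0.le
    rwa [← ENNReal.rpow_mul, one_div_mul_cancel hr0.ne', ENNReal.rpow_one] at this
  have hmeas : AEMeasurable (fun y => ENNReal.ofReal |(|f y| ^ r)|) (volume.restrict (Ioo a b)) := by
    have h1 : AEMeasurable f (volume.restrict (Ioo a b)) :=
      hf.aestronglyMeasurable.aemeasurable.restrict
    have h2 : AEMeasurable (fun y => |f y|) (volume.restrict (Ioo a b)) := by
      simpa [Real.norm_eq_abs] using h1.norm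
    have h3 : AEMeasurable (fun y => |f y| ^ r) (volume.restrict (Ioo a b)) := h2.pow_const r
    have h4 : AEMeasurable (fun y => |(|f y| ^ r)|) (volume.restrict (Ioo a b)) := by
      simpa [Real.norm_eq_abs] using h3.norm
    exact h4.ennreal_ofReal
  set B := ENNReal.ofReal (l ^ r) with hB
  have hB0 : B ≠ 0 := by simpa [hB] using hlr
  have hBt : B ≠ ∞ := ENNReal.ofReal_ne_top
  have hpt : ∀ y, ENNReal.ofReal (Φ (|f y| / l)) ≤
      2⁻¹ + (S * B⁻¹) * ENNReal.ofReal |(|f y| ^ r)| := by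
    intro y
    refine (key _ (by positivity)).trans (le_of_eq ?_)
    have h0 : 0 ≤ |f y| ^ r := by positivity
    rw [Real.div_rpow (abs_nonneg _) hc0.le, ENNReal.ofReal_div_of_pos hlr, abs_of_nonneg h0,
      ENNReal.div_eq_inv_mul, mul_assoc]
  have hint : ∫⁻ y in Ioo a b, ENNReal.ofReal |(|f y| ^ r)| = ENNReal.ofReal (b - a) * A := by
    rw [hA, ← mul_assoc, ENNReal.mul_inv_cancel hL0 hLt, one_mul]
  have hhalf : S * B⁻¹ * A ≤ 2⁻¹ := by
    have h1 : S * A ≤ 2⁻¹ * B := by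
      calc S * A = 2⁻¹ * (2 * S * A) := by
            rw [mul_assoc 2 S A, ← mul_assoc 2⁻¹ 2 (S * A), ENNReal.inv_mul_cancel (by norm_num) (by norm_num), one_mul]
        _ ≤ _ := by gcongr
    calc S * B⁻¹ * A = S * A * B⁻¹ := by ring
      _ ≤ 2⁻¹ * B * B⁻¹ := by gcongr
      _ = 2⁻¹ := by rw [mul_assoc, ENNReal.mul_inv_cancel hB0 hBt, mul_one]
  calc (∫⁻ y in Ioo a b, ENNReal.ofReal (Φ (|f y| / l)))
      ≤ ∫⁻ y in Ioo a b, (2⁻¹ + (S * B⁻¹) * ENNReal.ofReal |(|f y| ^ r)|) :=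
        lintegral_mono fun y => hpt y
    _ = 2⁻¹ * ENNReal.ofReal (b - a) + (S * B⁻¹) * (ENNReal.ofReal (b - a) * A) := by
        rw [lintegral_add_left measurable_const, lintegral_const_mul'' _ hmeas, hint]
        simp
    _ = 2⁻¹ * ENNReal.ofReal (b - a) + (S * B⁻¹ * A) * ENNReal.ofReal (b - a) := by ring
    _ ≤ 2⁻¹ * ENNReal.ofReal (b - a) + 2⁻¹ * ENNReal.ofReal (b - a) := by gcongr
    _ = ENNReal.ofReal (b - a) := by
        rw [← add_mul, ENNReal.inv_two_add_inv_two, one_mul]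

end RT

end
end
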